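/- arXiv:2007.05195 — 2 statements merged into one kernel-verified Lean document; each statement's English description precedes it below -/
import Mathlib

section
/- If G is a bridgeless finite multigraph with |W(G)| ≤ 2, where W(G) denotes the set of vertices of G of degree larger than 3, then F(G,q) ≠ 0 for all real q with 1 < q < 2. -/
/-- A finite multigraph on vertex type `V` with edge type `E`: each edge `e` has two
(possibly equal) endpoints `fst e` and `snd e`. -/
structure Multigraph (V E : Type) where
  fst : E → V
  snd : E → V

namespace Multigraph

variable {V E : Type}

/-- `a` and `b` are joined by some edge belonging to the edge set `F`. -/
def edgeRelOn (G : Multigraph V E) (F : Set E) (a b : V) : Prop :=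
  ∃ e ∈ F, (G.fst e = a ∧ G.snd e = b) ∨ (G.fst e = b ∧ G.snd e = a)

/-- Reachability in the spanning subgraph `(V, F)`. -/
def Reach (G : Multigraph V E) (F : Set E) : V → V → Prop :=
  Relation.EqvGen (G.edgeRelOn F)

/-- The setoid on `V` whose classes are the connected components of the
spanning subgraph `(V, F)`. -/
def reachSetoid (G : Multigraph V E) (F : Set E) : Setoid V :=
  Relation.EqvGen.setoid (G.edgeRelOn F)

/-- The number of connected components of the spanning subgraph `(V, F)`. -/
noncomputable def ncomp (G : Multigraph V E) (F : Set E) : ℕ :=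
  Nat.card (Quotient (G.reachSetoid F))

/-- The number of connected components of `G`. -/
noncomputable def numComponents (G : Multigraph V E) : ℕ :=
  G.ncomp Set.univ

/-- `G` is connected. -/
def Connected (G : Multigraph V E) : Prop :=
  G.numComponents = 1

/-- An edge is a bridge if deleting it increases the number of connected components. -/
def IsBridge (G : Multigraph V E) (e : E) : Prop :=
  G.numComponents < G.ncomp {e' | e' ≠ e}

/-- `G` has no bridge. -/
def Bridgeless (G : Multigraph V E) : Prop :=
  ∀ e, ¬ G.IsBridge e

/-- `G` has no loops. -/
def Loopless (G : Multigraph V E) : Prop :=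
  ∀ e, G.fst e ≠ G.snd e

/-- Deleting a set `S` of vertices (and all edges meeting `S`). -/
def deleteVerts (G : Multigraph V E) (S : Set V) :
    Multigraph {v // v ∉ S} {e // G.fst e ∉ S ∧ G.snd e ∉ S} where
  fst := fun e => ⟨G.fst e.1, e.2.1⟩
  snd := fun e => ⟨G.snd e.1, e.2.2⟩

/-- A cut-vertex: a vertex whose deletion increases the number of components. -/
def IsCutVertex (G : Multigraph V E) (x : V) : Prop :=
  G.numComponents < (G.deleteVerts {x}).numComponents

/-- A graph is non-separable if it has at most one vertex and at most one edge, or it is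
connected, loopless and has no cut-vertex. -/
def NonSeparable (G : Multigraph V E) : Prop :=
  (Nat.card V ≤ 1 ∧ Nat.card E ≤ 1) ∨
    (G.Connected ∧ G.Loopless ∧ ∀ x, ¬ G.IsCutVertex x)

/-- The degree of a vertex, counted with edge multiplicity; a loop contributes `2`. -/
noncomputable def degree (G : Multigraph V E) (v : V) : ℕ :=
  Nat.card {e | G.fst e = v} + Nat.card {e | G.snd e = v}

/-- The flow polynomial `F(G,q) = ∑_{E'⊆E} (−1)^{|E|−|E'|} q^{|E'|+c(E')−|V|}`,
where `c(E')` is the number of connected components of the spanning subgraph `(V,E')`. -/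
noncomputable def flowPoly (G : Multigraph V E) [Finite V] [Finite E] : Polynomial ℝ :=
  letI : Fintype E := Fintype.ofFinite E
  ∑ E' : Finset E, (-1 : Polynomial ℝ) ^ (Nat.card E - E'.card) *
    Polynomial.X ^ (E'.card + G.ncomp ↑E' - Nat.card V)

/-- A subgraph of a multigraph: a set of vertices and a set of edges with both
endpoints among those vertices. -/
structure Subgraph (G : Multigraph V E) where
  verts : Set V
  edges : Set E
  fst_mem : ∀ ⦃e⦄, e ∈ edges → G.fst e ∈ verts
  snd_mem : ∀ ⦃e⦄, e ∈ edges → G.snd e ∈ verts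

/-- A subgraph, viewed as a multigraph in its own right. -/
def Subgraph.toMultigraph {G : Multigraph V E} (H : G.Subgraph) :
    Multigraph H.verts H.edges where
  fst := fun e => ⟨G.fst e.1, H.fst_mem e.2⟩
  snd := fun e => ⟨G.snd e.1, H.snd_mem e.2⟩

/-- `H` is a connected component of `G`: its vertex set is the set of vertices reachable
from some vertex, and its edges are all the edges of `G` joining its vertices. -/
def IsComponent {G : Multigraph V E} (H : G.Subgraph) : Prop :=
  (∃ v ∈ H.verts, ∀ u, u ∈ H.verts ↔ G.Reach Set.univ v u) ∧
    ∀ e, e ∈ H.edges ↔ (G.fst e ∈ H.verts ∧ G.snd e ∈ H.verts)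

/-- `H` is a block of `G`: a maximal non-separable subgraph. -/
def IsBlock {G : Multigraph V E} (H : G.Subgraph) : Prop :=
  H.toMultigraph.NonSeparable ∧
    ∀ H' : G.Subgraph, H'.toMultigraph.NonSeparable →
      H.verts ⊆ H'.verts → H.edges ⊆ H'.edges → H' = H

/-- A trivial block: a single vertex and no edges. -/
def Subgraph.IsTrivial {G : Multigraph V E} (H : G.Subgraph) : Prop :=
  (∃ v, H.verts = {v}) ∧ H.edges = ∅

/-- An orientation of a multigraph: each edge is given a tail and a head,
consistent with its two endpoints. -/
structure Orientation (G : Multigraph V E) where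
  tail : E → V
  head : E → V
  consistent : ∀ e, (tail e = G.fst e ∧ head e = G.snd e) ∨
    (tail e = G.snd e ∧ head e = G.fst e)

open Classical in
/-- A `Γ`-flow on an orientation `D`: at every vertex, the sum of the values on
the arcs with that tail equals the sum of the values on the arcs with that head. -/
noncomputable def Orientation.IsFlow {G : Multigraph V E} [Fintype E]
    (D : G.Orientation) {Γ : Type} [AddCommGroup Γ] (φ : E → Γ) : Prop :=
  ∀ v : V, ∑ e ∈ Finset.univ.filter (fun e => D.tail e = v), φ e =
    ∑ e ∈ Finset.univ.filter (fun e => D.head e = v), φ e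

/-- Deleting an edge. -/
def deleteEdge (G : Multigraph V E) (e₀ : E) : Multigraph V {e // e ≠ e₀} where
  fst := fun e => G.fst e.1
  snd := fun e => G.snd e.1

/-- Adding a new edge joining `x` and `y`. -/
def addEdge (G : Multigraph V E) (x y : V) : Multigraph V (E ⊕ Unit) where
  fst := Sum.elim G.fst fun _ => x
  snd := Sum.elim G.snd fun _ => y

/-- Contracting a set `F` of edges: vertices joined through `F` are identified,
and the edges of `F` are removed. -/
def contract (G : Multigraph V E) (F : Set E) :
    Multigraph (Quotient (G.reachSetoid F)) {e // e ∉ F} where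
  fst := fun e => Quotient.mk _ (G.fst e.1)
  snd := fun e => Quotient.mk _ (G.snd e.1)

/-- The number of proper colourings of the vertices of `G` with `n` colours. -/
noncomputable def properColorings (G : Multigraph V E) (n : ℕ) : ℕ :=
  Nat.card {f : V → Fin n // ∀ e, f (G.fst e) ≠ f (G.snd e)}

/-- An isomorphism of multigraphs. -/
structure Iso {V' E' : Type} (G : Multigraph V E) (G' : Multigraph V' E') where
  vmap : V ≃ V'
  emap : E ≃ E'
  ends : ∀ e, (G'.fst (emap e) = vmap (G.fst e) ∧ G'.snd (emap e) = vmap (G.snd e)) ∨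
    (G'.fst (emap e) = vmap (G.snd e) ∧ G'.snd (emap e) = vmap (G.fst e))

open Classical in
/-- Subdividing the edge `e₀`: it is replaced by a path of length two through a new vertex. -/
noncomputable def subdivide (G : Multigraph V E) (e₀ : E) :
    Multigraph (V ⊕ Unit) (E ⊕ Unit) where
  fst := Sum.elim (fun e => Sum.inl (G.fst e)) fun _ => Sum.inr ()
  snd := Sum.elim (fun e => if e = e₀ then Sum.inr () else Sum.inl (G.snd e))
    fun _ => Sum.inl (G.snd e₀)

/-- `G` is a subdivision of `H`. -/
inductive IsSubdivisionOf :
    {V E V' E' : Type} → Multigraph V E → Multigraph V' E' → Prop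
  | of_iso {V E V' E'} {G : Multigraph V E} {H : Multigraph V' E'} :
      Iso G H → IsSubdivisionOf G H
  | step {V E V' E'} {G : Multigraph V E} {H : Multigraph V' E'} (e : E) :
      IsSubdivisionOf G H → IsSubdivisionOf (G.subdivide e) H
  | iso_left {V₁ E₁ V₂ E₂ V' E'} {G₁ : Multigraph V₁ E₁} {G₂ : Multigraph V₂ E₂}
      {H : Multigraph V' E'} :
      Iso G₁ G₂ → IsSubdivisionOf G₂ H → IsSubdivisionOf G₁ H

/-- A multigraph is 3-connected if it has at least 4 vertices and remains connected
after deleting any set of fewer than 3 vertices. -/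
def ThreeConnected (G : Multigraph V E) : Prop :=
  4 ≤ Nat.card V ∧ ∀ S : Set V, S.ncard < 3 → (G.deleteVerts S).Connected

/-- `G` is (isomorphic to) the multigraph `Z_k` with two vertices joined by `k`
parallel edges. -/
def IsZk (G : Multigraph V E) (k : ℕ) : Prop :=
  Nat.card V = 2 ∧ Nat.card E = k ∧ G.Loopless

/-- `G` is essentially 3-connected: a subdivision of a 3-connected graph,
or `Z_k` for some `k ≥ 3`. -/
def EssentiallyThreeConnected (G : Multigraph V E) : Prop :=
  (∃ (V' E' : Type) (H : Multigraph V' E'), H.ThreeConnected ∧ G.IsSubdivisionOf H) ∨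
    ∃ k, 3 ≤ k ∧ G.IsZk k

end Multigraph


namespace Multigraph
open Classical Finset

section aux
variable {V E : Type}

/-- `e` joins `x` and `y` -/
def Ends (G : Multigraph V E) (e : E) (x y : V) : Prop :=
  (G.fst e = x ∧ G.snd e = y) ∨ (G.fst e = y ∧ G.snd e = x)

/-- identify `y` with `x` -/
noncomputable def mergeV (G : Multigraph V E) (y x : V) : Multigraph V E where
  fst := fun e => if G.fst e = y then x else G.fst e
  snd := fun e => if G.snd e = y then x else G.snd e

/-- replace the ends of `e` -/
noncomputable def updE (G : Multigraph V E) (e : E) (x y : V) : Multigraph V E where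
  fst := fun e' => if e' = e then x else G.fst e'
  snd := fun e' => if e' = e then y else G.snd e'

/-- vertices incident with an edge of `S` -/
noncomputable def Vs (G : Multigraph V E) (S : Finset E) : Finset V :=
  S.image G.fst ∪ S.image G.snd

noncomputable def dg (G : Multigraph V E) (S : Finset E) (p : V) : ℕ :=
  #(S.filter fun e => G.fst e = p) + #(S.filter fun e => G.snd e = p)

/-- flow polynomial of the spanning subgraph `S`, evaluated -/
noncomputable def Fl (q : ℝ) (G : Multigraph V E) (S : Finset E) : ℝ :=
  ∑ T ∈ S.powerset, (-1 : ℝ) ^ (#S - #T) * q ^ (#T + G.ncomp (T : Set E) - Nat.card V)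

def Conn (G : Multigraph V E) (S : Finset E) : Prop :=
  ∀ A B : Finset E, A.Nonempty → B.Nonempty → Disjoint A B → A ∪ B = S →
    ∃ p p', p ≠ p' ∧ (p ∈ G.Vs A ∧ p ∈ G.Vs B) ∧ (p' ∈ G.Vs A ∧ p' ∈ G.Vs B)

lemma mem_Vs {G : Multigraph V E} {S : Finset E} {p : V} :
    p ∈ G.Vs S ↔ ∃ e ∈ S, G.fst e = p ∨ G.snd e = p := by
  simp only [Vs, mem_union, mem_image]
  constructor
  · rintro (⟨e, h, h'⟩ | ⟨e, h, h'⟩)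
    · exact ⟨e, h, Or.inl h'⟩
    · exact ⟨e, h, Or.inr h'⟩
  · rintro ⟨e, h, h' | h'⟩
    · exact Or.inl ⟨e, h, h'⟩
    · exact Or.inr ⟨e, h, h'⟩

lemma Ends.symm {G : Multigraph V E} {e : E} {x y : V} (h : G.Ends e x y) : G.Ends e y x := by
  unfold Ends at *; tauto

lemma ends_self (G : Multigraph V E) (e : E) : G.Ends e (G.fst e) (G.snd e) := Or.inl ⟨rfl, rfl⟩

lemma Vs_insert {G : Multigraph V E} {S : Finset E} {e : E} {x y : V} (h : G.Ends e x y) :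
    G.Vs (insert e S) = insert x (insert y (G.Vs S)) := by
  ext p
  rcases h with ⟨h1, h2⟩ | ⟨h1, h2⟩ <;> simp only [mem_Vs, mem_insert] <;> grind

lemma Vs_union {G : Multigraph V E} {A B : Finset E} : G.Vs (A ∪ B) = G.Vs A ∪ G.Vs B := by
  ext p
  simp only [mem_Vs, mem_union]; grind

lemma Vs_mono {G : Multigraph V E} {A B : Finset E} (h : A ⊆ B) : G.Vs A ⊆ G.Vs B := by
  intro p
  simp only [mem_Vs]; grind

lemma Vs_empty {G : Multigraph V E} : G.Vs ∅ = ∅ := by simp [Vs]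

lemma Vs_updE {G : Multigraph V E} {S : Finset E} {e : E} {x y : V} (h : e ∉ S) :
    (G.updE e x y).Vs S = G.Vs S := by
  ext p
  simp only [mem_Vs, updE]; grind

lemma ends_updE (G : Multigraph V E) (e : E) (x y : V) : (G.updE e x y).Ends e x y := by
  simp [Ends, updE]

lemma Vs_mergeV {G : Multigraph V E} {S : Finset E} {x y : V} {p : V}
    (h : p ∈ (G.mergeV y x).Vs S) : (p ∈ G.Vs S ∧ p ≠ y) ∨ (p = x ∧ y ∈ G.Vs S) := by
  simp only [mem_Vs, mergeV] at *; grind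

lemma Vs_mergeV' {G : Multigraph V E} {S : Finset E} {x y : V} {p : V}
    (h : p ∈ G.Vs S) : (if p = y then x else p) ∈ (G.mergeV y x).Vs S := by
  simp only [mem_Vs, mergeV] at *
  obtain ⟨e, he, h | h⟩ := h <;> exact ⟨e, he, by simp [h]⟩

lemma edgeRelOn_congr {G G' : Multigraph V E} {T : Set E}
    (h : ∀ e ∈ T, G'.Ends e (G.fst e) (G.snd e)) : G'.edgeRelOn T = G.edgeRelOn T := by
  ext a b
  unfold edgeRelOn
  constructor
  · rintro ⟨e, he, h'⟩
    refine ⟨e, he, ?_⟩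
    have := h e he
    unfold Ends at this; grind
  · rintro ⟨e, he, h'⟩
    refine ⟨e, he, ?_⟩
    have := h e he
    unfold Ends at this; grind

lemma ncomp_congr {G G' : Multigraph V E} {T : Set E}
    (h : ∀ e ∈ T, G'.Ends e (G.fst e) (G.snd e)) : G'.ncomp T = G.ncomp T := by
  unfold ncomp reachSetoid
  rw [edgeRelOn_congr h]

lemma Fl_congr {q : ℝ} {G G' : Multigraph V E} {S : Finset E}
    (h : ∀ e ∈ S, G'.Ends e (G.fst e) (G.snd e)) : Fl q G' S = Fl q G S := by
  unfold Fl
  refine sum_congr rfl fun T hT => ?_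
  rw [mem_powerset] at hT
  rw [ncomp_congr fun e he => h e (hT (by simpa using he))]

lemma Fl_congr_fun {q : ℝ} {G G' : Multigraph V E} {S : Finset E}
    (h : ∀ e ∈ S, G'.fst e = G.fst e ∧ G'.snd e = G.snd e) : Fl q G' S = Fl q G S :=
  Fl_congr fun e he => Or.inl (h e he)

lemma Fl_updE {q : ℝ} {G : Multigraph V E} {S : Finset E} {e : E} {x y : V} (h : e ∉ S) :
    Fl q (G.updE e x y) S = Fl q G S := by
  apply Fl_congr_fun
  intro e' he'
  have : e' ≠ e := by rintro rfl; exact h he'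
  simp [updE, this]

lemma Fl_mergeV {q : ℝ} {G : Multigraph V E} {S : Finset E} {x y : V} (h : y ∉ G.Vs S) :
    Fl q (G.mergeV y x) S = Fl q G S := by
  apply Fl_congr_fun
  intro e' he'
  simp only [mem_Vs] at h
  simp only [mergeV]; grind

lemma ncomp_merge [Finite V] {G : Multigraph V E} {T : Set E} {e : E} {x y : V}
    (h : G.Ends e x y) (hxy : x ≠ y) :
    (G.mergeV y x).ncomp T = G.ncomp (insert e T) + 1 := by
  let Q := Quotient (G.reachSetoid (insert e T))
  let Q' := Quotient ((G.mergeV y x).reachSetoid T)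
  let mk : V → Q := Quotient.mk _
  have hxy' : mk x = mk y := Quotient.sound (Relation.EqvGen.rel _ _ ⟨e, Or.inl rfl, h⟩)
  have hrho : ∀ p, mk (if p = y then x else p) = mk p := by
    intro p; split_ifs with hp
    · rw [hp, hxy']
    · rfl
  let φ : V → Option Q := fun p => if p = y then none else some (mk p)
  have hφ : ∀ a b, (G.mergeV y x).Reach T a b → φ a = φ b := by
    intro a b hab
    induction hab with
    | rel a b hab =>
      obtain ⟨e', he', hab⟩ := hab
      have key : mk (G.fst e') = mk (G.snd e') :=
        Quotient.sound (Relation.EqvGen.rel _ _ ⟨e', Or.inr he', ends_self G e'⟩)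
      have h1 : φ ((G.mergeV y x).fst e') = some (mk (G.fst e')) := by
        have : (G.mergeV y x).fst e' ≠ y := by simp only [mergeV]; grind
        simp only [φ, if_neg this]
        simp only [mergeV, hrho]
      have h2 : φ ((G.mergeV y x).snd e') = some (mk (G.snd e')) := by
        have : (G.mergeV y x).snd e' ≠ y := by simp only [mergeV]; grind
        simp only [φ, if_neg this]
        simp only [mergeV, hrho]
      rcases hab with ⟨ha, hb⟩ | ⟨ha, hb⟩
      · rw [← ha, ← hb, h1, h2, key]
      · rw [← ha, ← hb, h1, h2, key]
    | refl => rfl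
    | symm _ _ _ ih => exact ih.symm
    | trans _ _ _ _ _ ih1 ih2 => exact ih1.trans ih2
  have hback : ∀ a b, G.Reach (insert e T) a b →
      (G.mergeV y x).Reach T (if a = y then x else a) (if b = y then x else b) := by
    intro a b hab
    induction hab with
    | rel a b hab =>
      obtain ⟨e', he', hab⟩ := hab
      rcases he' with rfl | he'
      · have : (if a = y then x else a) = (if b = y then x else b) := by
          unfold Ends at h; grind
        rw [this]; exact Relation.EqvGen.refl _
      · refine Relation.EqvGen.rel _ _ ⟨e', he', ?_⟩
        rcases hab with ⟨ha, hb⟩ | ⟨ha, hb⟩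
        · left; simp [mergeV, ha, hb]
        · right; simp [mergeV, ha, hb]
    | refl => exact Relation.EqvGen.refl _
    | symm _ _ _ ih => exact ih.symm
    | trans _ _ _ _ _ ih1 ih2 => exact Relation.EqvGen.trans _ _ _ ih1 ih2
  let Φ : Q' → Option Q := Quotient.lift φ hφ
  have hb : Function.Bijective Φ := by
    constructor
    · intro a b
      refine Quotient.inductionOn₂ a b ?_
      intro a b hab
      change φ a = φ b at hab
      simp only [φ] at hab
      by_cases ha : a = y <;> by_cases hb : b = y
      · rw [ha, hb]
      · simp [ha, hb] at hab
      · simp [ha, hb] at hab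
      · simp only [ha, hb, if_false, Option.some.injEq] at hab
        have := hback a b (Quotient.exact hab)
        simp only [ha, hb, if_false] at this
        exact Quotient.sound this
    · rintro (_ | b)
      · exact ⟨Quotient.mk _ y, show φ y = none by simp [φ]⟩
      · refine Quotient.inductionOn b ?_
        intro p
        refine ⟨Quotient.mk _ (if p = y then x else p), ?_⟩
        change φ _ = some (mk p)
        have : (if p = y then x else p) ≠ y := by grind
        simp only [φ, if_neg this, hrho]
  have := Nat.card_congr (Equiv.ofBijective Φ hb)
  unfold ncomp
  change Nat.card Q' = Nat.card Q + 1
  rw [this, Finite.card_option]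

lemma ncomp_loop {G : Multigraph V E} {T : Set E} {e : E} 
    (h : G.fst e = G.snd e) : G.ncomp (insert e T) = G.ncomp T := by
  unfold ncomp reachSetoid
  have : (Relation.EqvGen.setoid (G.edgeRelOn (insert e T)))
    = Relation.EqvGen.setoid (G.edgeRelOn T) := by
    ext a b
    change Relation.EqvGen _ a b ↔ Relation.EqvGen _ a b
    constructor
    · intro hab
      induction hab with
      | rel a b hab =>
        obtain ⟨e', he', hab⟩ := hab
        rcases he' with rfl | he'
        · have : a = b := by grind
          rw [this]; exact Relation.EqvGen.refl _
        · exact Relation.EqvGen.rel _ _ ⟨e', he', hab⟩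
      | refl => exact Relation.EqvGen.refl _
      | symm _ _ _ ih => exact ih.symm
      | trans _ _ _ _ _ ih1 ih2 => exact Relation.EqvGen.trans _ _ _ ih1 ih2
    · have hle : G.edgeRelOn T ≤ G.edgeRelOn (insert e T) :=
        fun a b ⟨e', he', hab⟩ => ⟨e', Or.inr he', hab⟩
      exact Relation.EqvGen.mono hle a b
  rw [this]

lemma ncomp_empty {G : Multigraph V E} : G.ncomp ∅ = Nat.card V := by
  unfold ncomp
  refine (Nat.card_congr (Equiv.ofBijective (Quotient.mk (G.reachSetoid ∅)) ⟨?_, ?_⟩)).symm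
  · intro a b hab
    have : Relation.EqvGen (G.edgeRelOn ∅) a b := Quotient.exact hab
    induction this with
    | rel a b h => obtain ⟨e, he, _⟩ := h; exact he.elim
    | refl => rfl
    | symm a b h ih => exact (ih (Quotient.sound h)).symm
    | trans a b c h1 h2 ih1 ih2 => exact (ih1 (Quotient.sound h1)).trans (ih2 (Quotient.sound h2))
  · exact Quotient.mk_surjective

lemma card_le_ncomp [Finite V] (T : Finset E) : ∀ G : Multigraph V E,
    Nat.card V ≤ #T + G.ncomp (T : Set E) := by
  induction T using Finset.induction_on with
  | empty => intro G; simp [ncomp_empty]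
  | insert e T he ih =>
    intro G
    rw [card_insert_of_notMem he, coe_insert]
    by_cases h : G.fst e = G.snd e
    · rw [ncomp_loop h]; have := ih G; omega
    · have := ncomp_merge (T := (T : Set E)) (ends_self G e) h
      have := ih (G.mergeV (G.snd e) (G.fst e)); omega

lemma Fl_insert_aux {q : ℝ} {G : Multigraph V E} {S : Finset E} {e : E} (he : e ∉ S) :
    Fl q G (insert e S) = - Fl q G S + ∑ T ∈ S.powerset, (-1 : ℝ) ^ (#S - #T) *
      q ^ (#T + 1 + G.ncomp (insert e (T : Set E)) - Nat.card V) := by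
  unfold Fl
  rw [sum_powerset_insert he, ← sum_neg_distrib]
  congr 1
  · refine sum_congr rfl fun T hT => ?_
    have := card_le_card (mem_powerset.1 hT)
    rw [card_insert_of_notMem he, show #S + 1 - #T = (#S - #T) + 1 by omega, pow_succ]
    ring
  · refine sum_congr rfl fun T hT => ?_
    have hT := (mem_powerset.1 hT)
    rw [card_insert_of_notMem he, card_insert_of_notMem (fun h => he (hT h)), coe_insert]
    congr 2
    omega

lemma Fl_loop [Finite V] {q : ℝ} {G : Multigraph V E} {S : Finset E} {e : E} (he : e ∉ S)
    (h : G.fst e = G.snd e) : Fl q G (insert e S) = (q - 1) * Fl q G S := by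
  rw [Fl_insert_aux he]
  have : ∑ T ∈ S.powerset, (-1 : ℝ) ^ (#S - #T) *
      q ^ (#T + 1 + G.ncomp (insert e (T : Set E)) - Nat.card V) = q * Fl q G S := by
    unfold Fl
    rw [mul_sum]
    refine sum_congr rfl fun T hT => ?_
    rw [ncomp_loop h]
    have := card_le_ncomp T G
    rw [show #T + 1 + G.ncomp (T : Set E) - Nat.card V
      = #T + G.ncomp (T : Set E) - Nat.card V + 1 by omega, pow_succ]
    ring
  rw [this]; ring

lemma Fl_dc [Finite V] {q : ℝ} {G : Multigraph V E} {S : Finset E} {e : E} (he : e ∉ S)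
    {x y : V} (h : G.Ends e x y) (hxy : x ≠ y) :
    Fl q G (insert e S) = Fl q (G.mergeV y x) S - Fl q G S := by
  rw [Fl_insert_aux he]
  have : ∑ T ∈ S.powerset, (-1 : ℝ) ^ (#S - #T) *
      q ^ (#T + 1 + G.ncomp (insert e (T : Set E)) - Nat.card V) = Fl q (G.mergeV y x) S := by
    unfold Fl
    refine sum_congr rfl fun T hT => ?_
    rw [ncomp_merge h hxy]
    congr 3
    omega
  rw [this]; ring

lemma Fl_empty {q : ℝ} {G : Multigraph V E} : Fl q G ∅ = 1 := by
  simp [Fl, ncomp_empty]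

lemma Fl_leaf [Finite V] {q : ℝ} {G : Multigraph V E} {S : Finset E} {e : E} (he : e ∉ S)
    {x y : V} (h : G.Ends e x y) (hxy : x ≠ y) (hy : y ∉ G.Vs S) :
    Fl q G (insert e S) = 0 := by
  rw [Fl_dc he h hxy, Fl_mergeV hy, sub_self]

lemma ends_mem {G : Multigraph V E} {S : Finset E} {e : E} {x y : V} (h : G.Ends e x y)
    (he : e ∈ S) : x ∈ G.Vs S ∧ y ∈ G.Vs S := by
  simp only [mem_Vs]
  rcases h with ⟨h1, h2⟩ | ⟨h1, h2⟩
  · exact ⟨⟨e, he, Or.inl h1⟩, ⟨e, he, Or.inr h2⟩⟩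
  · exact ⟨⟨e, he, Or.inr h2⟩, ⟨e, he, Or.inl h1⟩⟩

lemma exists_ends {G : Multigraph V E} {e : E} (w : V) (h : G.fst e ≠ G.snd e) :
    ∃ x y, G.Ends e x y ∧ x ≠ y ∧ y ≠ w := by
  by_cases hw : G.snd e = w
  · exact ⟨G.snd e, G.fst e, (ends_self G e).symm, h.symm, fun h' => h (h'.trans hw.symm)⟩
  · exact ⟨G.fst e, G.snd e, ends_self G e, h, hw⟩

lemma Fl_prod [Finite V] {q : ℝ} (A B : Finset E) (w : V) : ∀ G : Multigraph V E,
    Disjoint A B → (∀ p, p ∈ G.Vs A → p ∈ G.Vs B → p = w) →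
    Fl q G (A ∪ B) = Fl q G A * Fl q G B := by
  induction B using Finset.induction_on with
  | empty => intro G _ _; simp [Fl_empty]
  | insert f B hf ih =>
    intro G hd hw
    rw [disjoint_insert_right] at hd
    have hfu : f ∉ A ∪ B := by simp [hd.1, hf]
    have hsub := Vs_mono (G := G) (subset_insert f B)
    rw [union_insert]
    have ihG := ih G hd.2 fun p h1 h2 => hw p h1 (hsub h2)
    by_cases h : G.fst f = G.snd f
    · rw [Fl_loop hfu h, Fl_loop hf h, ihG]; ring
    · obtain ⟨x, z, hx, hxz, hz⟩ := exists_ends w h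
      obtain ⟨hxB, hzB⟩ := ends_mem hx (mem_insert_self f B)
      have hzA : z ∉ G.Vs A := fun h => hz (hw z h hzB)
      rw [Fl_dc hfu hx hxz, Fl_dc hf hx hxz, ihG, ih _ hd.2, Fl_mergeV hzA]
      · ring
      · intro p h1 h2
        refine hw p ?_ ?_
        · rcases Vs_mergeV h1 with h1 | h1
          · exact h1.1
          · exact absurd h1.2 hzA
        · rcases Vs_mergeV h2 with h1 | h1
          · exact hsub h1.1
          · exact h1.1 ▸ hxB

lemma updE_merge {G : Multigraph V E} {e : E} {x y z p : V} :
    (G.updE e x y).mergeV z p =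
      (G.mergeV z p).updE e (if x = z then p else x) (if y = z then p else y) := by
  unfold updE mergeV
  congr 1 <;> funext e' <;> by_cases h : e' = e <;> simp [h]

lemma Fl_cut [Finite V] {q : ℝ} (A B : Finset E) (w x : V) (e : E) (heA : e ∉ A) :
    ∀ (G : Multigraph V E) (y : V), e ∉ B →
    Disjoint A B → (∀ p, p ∈ G.Vs A → p ∈ G.Vs B → p = w) →
    G.Ends e x y → (x ∈ G.Vs B → x = w) → (y ∈ G.Vs A → y = w) → (x = y → y = w) →
    (q - 1) * Fl q G (insert e (A ∪ B)) =
      Fl q (G.updE e x w) (insert e A) * Fl q (G.updE e w y) (insert e B) := by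
  induction B using Finset.induction_on with
  | empty =>
    intro G y _ _ _ he _ hyA hxy
    rw [union_empty]
    by_cases hyw : y = w
    · have h1 : Fl q (G.updE e w y) (insert e ∅) = q - 1 := by
        rw [Fl_loop (by simp) (by simp [updE, hyw]), Fl_empty, mul_one]
      have h2 : Fl q (G.updE e x w) (insert e A) = Fl q G (insert e A) := by
        apply Fl_congr
        intro e' he'
        by_cases h : e' = e
        · subst h; subst hyw; unfold Ends updE at *; simp; grind
        · left; simp [updE, h]
      rw [h1, h2]; ring
    · have h1 : Fl q (G.updE e w y) (insert e ∅) = 0 :=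
        Fl_leaf (by simp) (ends_updE G e w y) (Ne.symm hyw) (by simp [Vs_empty])
      have h2 : Fl q G (insert e A) = 0 :=
        Fl_leaf heA he (fun h => hyw (hxy h)) (fun h => hyw (hyA h))
      rw [h1, h2]; ring
  | insert f B hf ih =>
    intro G y heB hd hw he hxB hyA hxy
    rw [disjoint_insert_right] at hd
    have hef : f ≠ e := by rintro rfl; simp at heB
    have heB' : e ∉ B := fun h => heB (mem_insert_of_mem h)
    have hfu : f ∉ insert e (A ∪ B) := by simp [hd.1, hf, hef]
    have hfB : f ∉ insert e B := by simp [hf, hef]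
    have hsub := Vs_mono (G := G) (subset_insert f B)
    rw [union_insert, Finset.insert_comm e f, Finset.insert_comm e f]
    have ihG := ih G y heB' hd.2 (fun p h1 h2 => hw p h1 (hsub h2)) he
      (fun h => hxB (hsub h)) hyA hxy
    have hupd : ∀ a b, (G.updE e a b).Ends f (G.fst f) (G.snd f) := by
      intro a b; left; simp [updE, hef]
    by_cases h : G.fst f = G.snd f
    · rw [Fl_loop hfu h, Fl_loop hfB (by simp [updE, hef, h])]
      linear_combination (q - 1) * ihG
    · obtain ⟨p, z, hp, hpz, hz⟩ := exists_ends w h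
      obtain ⟨hpB, hzB⟩ := ends_mem hp (mem_insert_self f B)
      have hzA : z ∉ G.Vs A := fun h => hz (hw z h hzB)
      have hxz : x ≠ z := by rintro rfl; exact hz (hxB hzB)
      have hp' : (G.updE e w y).Ends f p z := by
        unfold Ends at hp ⊢; simpa [updE, hef] using hp
      have hA' : ∀ r, r ∈ (G.mergeV z p).Vs A → r ∈ G.Vs A := by
        intro r h1
        rcases Vs_mergeV h1 with h1 | h1
        · exact h1.1
        · exact absurd h1.2 hzA
      have hB' : ∀ r, r ∈ (G.mergeV z p).Vs B → r ∈ G.Vs (insert f B) := by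
        intro r h1
        rcases Vs_mergeV h1 with h1 | h1
        · exact hsub h1.1
        · exact h1.1 ▸ hpB
      have ihm := ih (G.mergeV z p) (if y = z then p else y) heB' hd.2
        (fun r h1 h2 => hw r (hA' r h1) (hB' r h2))
        (by
          unfold Ends at he ⊢
          rcases he with ⟨h1, h2⟩ | ⟨h1, h2⟩
          · left; simp [mergeV, h1, h2, hxz]
          · right; simp [mergeV, h1, h2, hxz])
        (fun h => hxB (hB' x h))
        (by
          intro h
          split_ifs at h ⊢ with hyz
          · exact hw p (hA' p h) hpB
          · exact hyA (hA' y h))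
        (by
          intro h
          split_ifs at h ⊢ with hyz
          · rw [← h]; exact hxB (h ▸ hpB)
          · exact hxy h)
      rw [Fl_dc hfu hp hpz, Fl_dc hfB hp' hpz, updE_merge, if_neg hz.symm]
      have hc : Fl q ((G.mergeV z p).updE e x w) (insert e A)
          = Fl q (G.updE e x w) (insert e A) := by
        have := @Fl_mergeV V E q (G.updE e x w) (insert e A) p z ?_
        · rw [updE_merge, if_neg hxz, if_neg hz.symm] at this
          exact this
        · rw [Vs_insert (ends_updE G e x w), Vs_updE heA]
          simp [hzA, hz, hxz.symm]
      rw [hc] at ihm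
      linear_combination ihm - ihG

lemma dg_insert {G : Multigraph V E} {S : Finset E} {e : E} (he : e ∉ S) {x y : V}
    (h : G.Ends e x y) (p : V) : dg G (insert e S) p =
      dg G S p + (if x = p then 1 else 0) + (if y = p then 1 else 0) := by
  unfold dg
  rw [filter_insert, filter_insert]
  rcases h with ⟨h1, h2⟩ | ⟨h1, h2⟩ <;> rw [h1, h2] <;>
    by_cases hx : x = p <;> by_cases hy : y = p <;> simp [hx, hy, he] <;> omega

lemma dg_union {G : Multigraph V E} {A B : Finset E} (h : Disjoint A B) (p : V) :
    dg G (A ∪ B) p = dg G A p + dg G B p := by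
  unfold dg
  rw [filter_union, filter_union, card_union_of_disjoint (disjoint_filter_filter h),
    card_union_of_disjoint (disjoint_filter_filter h)]
  omega

lemma dg_mono {G : Multigraph V E} {A B : Finset E} (h : A ⊆ B) (p : V) :
    dg G A p ≤ dg G B p := by
  unfold dg
  gcongr

lemma dg_pos {G : Multigraph V E} {S : Finset E} {p : V} : p ∈ G.Vs S ↔ 0 < dg G S p := by
  unfold dg
  rw [add_pos_iff, card_pos, card_pos, Vs, mem_union]
  simp only [Finset.Nonempty, mem_filter, mem_image]

lemma dg_updE {G : Multigraph V E} {S : Finset E} {e : E} {x y : V} (h : e ∉ S) (p : V) :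
    dg (G.updE e x y) S p = dg G S p := by
  unfold dg
  congr 2 <;> apply filter_congr <;> intro e' he' <;> simp only [updE] <;> grind

lemma dg_mergeV {G : Multigraph V E} {S : Finset E} {x y p : V} (h : p ≠ x) :
    dg (G.mergeV y x) S p ≤ dg G S p := by
  unfold dg
  apply Nat.add_le_add <;> apply card_le_card <;> intro e' <;>
    simp only [mem_filter, mergeV] <;> grind

lemma Conn.loopless {G : Multigraph V E} {S : Finset E} (hC : G.Conn S) (hS : 2 ≤ #S) {e : E}
    (he : e ∈ S) : G.fst e ≠ G.snd e := by
  intro h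
  have h1 : (S.erase e).Nonempty := by
    rw [← card_pos, card_erase_of_mem he]; omega
  obtain ⟨p, p', hp, ⟨h2, -⟩, ⟨h3, -⟩⟩ := hC {e} (S.erase e) (by simp) h1 (by simp)
    (by rw [← insert_eq, insert_erase he])
  simp only [mem_Vs, mem_singleton] at h2 h3
  grind

lemma conn_piece {G G' : Multigraph V E} {A B : Finset E} {e : E} {x y w : V}
    (hC : G.Conn (insert e (A ∪ B))) (heA : e ∉ A) (heB : e ∉ B) (hd : Disjoint A B)
    (he : G.Ends e x y) (hw : ∀ p, p ∈ G.Vs A → p ∈ G.Vs B → p = w) (hy : y ∉ G.Vs A)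
    (he' : G'.Ends e x w) (hV : ∀ T, e ∉ T → G'.Vs T = G.Vs T) : G'.Conn (insert e A) := by
  have key : ∀ X Y : Finset E, X.Nonempty → Disjoint X Y → X ∪ Y = insert e A → e ∈ Y →
      ∃ p p', p ≠ p' ∧ (p ∈ G'.Vs X ∧ p ∈ G'.Vs Y) ∧ (p' ∈ G'.Vs X ∧ p' ∈ G'.Vs Y) := by
    intro X Y hX hXY hu heY
    have heX : e ∉ X := fun h => disjoint_left.1 hXY h heY
    have hXA : X ⊆ A := by
      intro f hf
      have : f ∈ insert e A := hu ▸ mem_union_left _ hf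
      rcases mem_insert.1 this with rfl | h
      · exact absurd hf heX
      · exact h
    have hXV := Vs_mono (G := G) hXA
    obtain ⟨p, p', hpp, ⟨h1, h2⟩, ⟨h3, h4⟩⟩ := hC X (insert e (Y.erase e ∪ B)) hX (by simp) (by
        rw [disjoint_left] at *
        intro f hf hf'
        simp only [mem_insert, mem_union, mem_erase] at hf'
        rcases hf' with h | h | h
        · exact heX (h ▸ hf)
        · exact hXY hf h.2
        · exact hd (hXA hf) h) (by
        rw [union_insert, ← union_assoc, ← insert_union, ← union_insert, insert_erase heY, hu,
          insert_union])
    rw [Vs_insert he, Vs_union] at h2 h4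
    have hY : G'.Vs Y = insert x (insert w (G.Vs (Y.erase e))) := by
      rw [← hV _ (by simp), ← Vs_insert he', insert_erase heY]
    rw [hY, hV _ heX]
    simp only [mem_insert, mem_union] at h2 h4 ⊢
    refine ⟨p, p', hpp, ⟨h1, ?_⟩, ⟨h3, ?_⟩⟩
    · have := hw p (hXV h1)
      have := hXV h1
      grind
    · have := hw p' (hXV h3)
      have := hXV h3
      grind
  intro X Y hX hY hXY hu
  have : e ∈ X ∪ Y := hu ▸ mem_insert_self e A
  rcases mem_union.1 this with h | h
  · obtain ⟨p, p', hp, h1, h2⟩ := key Y X hY hXY.symm (by rw [union_comm, hu]) h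
    exact ⟨p, p', hp, h1.symm, h2.symm⟩
  · exact key X Y hX hXY hu h

lemma Fl_loops [Finite V] {q : ℝ} {G : Multigraph V E} (S : Finset E)
    (h : ∀ e ∈ S, G.fst e = G.snd e) : Fl q G S = (q - 1) ^ #S := by
  induction S using Finset.induction_on with
  | empty => simp [Fl_empty]
  | insert e S he ih =>
    rw [Fl_loop he (h e (mem_insert_self _ _)), ih fun e' h' => h e' (mem_insert_of_mem h'),
      card_insert_of_notMem he, pow_succ, mul_comm]

lemma Fl_Zk [Finite V] {q : ℝ} {G : Multigraph V E} {u v : V} (huv : u ≠ v) (S : Finset E)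
    (h : ∀ e ∈ S, G.Ends e u v) : q * Fl q G S = (q - 1) ^ #S + (-1) ^ #S * (q - 1) := by
  induction S using Finset.induction_on with
  | empty => simp [Fl_empty]
  | insert e S he ih =>
    have hS : ∀ e' ∈ S, G.Ends e' u v := fun e' h' => h e' (mem_insert_of_mem h')
    rw [Fl_dc he (h e (mem_insert_self _ _)) huv, mul_sub, ih hS, Fl_loops,
      card_insert_of_notMem he]
    · ring
    · intro e' h'
      have := hS e' h'
      unfold Ends at this
      simp only [mergeV]; grind

lemma case_b {G : Multigraph V E} {A B : Finset E} {e : E} {a b : V}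
    (hC : G.Conn (insert e (A ∪ B))) (heA : e ∉ A) (heB : e ∉ B) (hd : Disjoint A B)
    (hA : A.Nonempty) (hB : B.Nonempty)
    (he : G.Ends e a b)
    (hs : ∀ p p', p ∈ G.Vs A → p ∈ G.Vs B → p' ∈ G.Vs A → p' ∈ G.Vs B → p = p') :
    ∃ x y w, G.Ends e x y ∧ x ∈ G.Vs A ∧ x ∉ G.Vs B ∧ y ∈ G.Vs B ∧ y ∉ G.Vs A ∧
      w ∈ G.Vs A ∧ w ∈ G.Vs B := by
  obtain ⟨p, p', hp, ⟨h1, h2⟩, ⟨h3, h4⟩⟩ := hC (insert e A) B (by simp) hB (by simp [heB, hd])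
    (by rw [insert_union])
  obtain ⟨r, r', hr, ⟨k1, k2⟩, ⟨k3, k4⟩⟩ := hC A (insert e B) hA (by simp) (by simp [heA, hd])
    (by rw [union_insert])
  rw [Vs_insert he] at h1 h3 k2 k4
  simp only [mem_insert] at h1 h3 k2 k4
  have or3 : ∀ {P Q R : Prop}, P ∨ Q ∨ R → ¬ R → P ∨ Q := by
    intro P Q R h h'
    rcases h with h | h | h
    exacts [Or.inl h, Or.inr h, absurd h h']
  have c1 : ∃ y, (y = a ∨ y = b) ∧ y ∈ G.Vs B ∧ y ∉ G.Vs A := by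
    by_cases g : p ∈ G.Vs A
    · by_cases g' : p' ∈ G.Vs A
      · exact absurd (hs p p' g h2 g' h4) hp
      · exact ⟨p', or3 h3 g', h4, g'⟩
    · exact ⟨p, or3 h1 g, h2, g⟩
  have c2 : ∃ y, (y = a ∨ y = b) ∧ y ∈ G.Vs A ∧ y ∉ G.Vs B := by
    by_cases g : r ∈ G.Vs B
    · by_cases g' : r' ∈ G.Vs B
      · exact absurd (hs r r' k1 g k3 g') hr
      · exact ⟨r', or3 k4 g', k3, g'⟩
    · exact ⟨r, or3 k2 g, k1, g⟩
  obtain ⟨y, hy, hy1, hy2⟩ := c1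
  obtain ⟨x, hx, hx1, hx2⟩ := c2
  have hxy : x ≠ y := by rintro rfl; exact hx2 hy1
  have c3 : ∃ w, w ∈ G.Vs A ∧ w ∈ G.Vs B := by
    by_cases g : r ∈ G.Vs B
    · exact ⟨r, k1, g⟩
    · by_cases g' : r' ∈ G.Vs B
      · exact ⟨r', k3, g'⟩
      · exfalso
        have m1 := or3 k2 g
        have m2 := or3 k4 g'
        have n1 : r ≠ y := fun h => hy2 (h ▸ k1)
        have n2 : r' ≠ y := fun h => hy2 (h ▸ k3)
        clear hs h1 h2 h3 h4 k1 k2 k3 k4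
        rcases hy with rfl | rfl
        · exact hr ((m1.resolve_left n1).trans (m2.resolve_left n2).symm)
        · exact hr ((m1.resolve_right n1).trans (m2.resolve_right n2).symm)
  obtain ⟨w, hw1, hw2⟩ := c3
  refine ⟨x, y, w, ?_, hx1, hx2, hy1, hy2, hw1, hw2⟩
  rcases hx with rfl | rfl <;> rcases hy with rfl | rfl
  · exact absurd rfl hxy
  · exact he
  · exact he.symm
  · exact absurd rfl hxy

/-- degree-two vertex separating two pieces -/
lemma Fl_series [Finite V] {q : ℝ} {G : Multigraph V E} {A B : Finset E} {u y : V}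
    (hd : Disjoint A B) (huy : u ≠ y)
    (hw : ∀ p, p ∈ G.Vs A → p ∈ G.Vs B → p = u ∨ p = y)
    (hlA : ∀ e ∈ A, G.fst e ≠ G.snd e) (hlB : ∀ e ∈ B, G.fst e ≠ G.snd e)
    (hA : dg G A y = 1) (hB : dg G B y = 1) :
    (q - 1) * Fl q G (A ∪ B) = Fl q (G.mergeV y u) (A ∪ B) := by
  have pick : ∀ S : Finset E, (∀ e ∈ S, G.fst e ≠ G.snd e) → dg G S y = 1 →
      ∃ g z S', g ∉ S' ∧ S = insert g S' ∧ G.Ends g z y ∧ z ≠ y ∧ y ∉ G.Vs S' := by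
    intro S hl hS
    obtain ⟨g, hg, h⟩ := mem_Vs.1 (dg_pos.2 (hS ▸ one_pos))
    obtain ⟨z, hz⟩ : ∃ z, G.Ends g z y := by
      rcases h with h | h
      · exact ⟨G.snd g, Or.inr ⟨h, rfl⟩⟩
      · exact ⟨G.fst g, Or.inl ⟨rfl, h⟩⟩
    have hzy : z ≠ y := by
      rintro rfl
      apply hl g hg
      unfold Ends at hz; grind
    refine ⟨g, z, S.erase g, by simp, (insert_erase hg).symm, hz, hzy, ?_⟩
    have := dg_insert (S := S.erase g) (by simp) hz y
    rw [insert_erase hg, hS, if_neg hzy, if_pos rfl] at this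
    rw [dg_pos]; omega
  have hB0 : Fl q G B = 0 := by
    obtain ⟨h, z, B', hB', rfl, hz, hzy, hyB⟩ := pick B hlB hB
    exact Fl_leaf hB' hz hzy hyB
  have hyB : y ∈ G.Vs B := dg_pos.2 (hB ▸ one_pos)
  have hprod : Fl q (G.mergeV y u) (A ∪ B) = Fl q (G.mergeV y u) A * Fl q (G.mergeV y u) B := by
    apply Fl_prod A B u _ hd
    intro p h1 h2
    rcases Vs_mergeV h1 with h1 | h1
    · rcases Vs_mergeV h2 with h2 | h2
      · have := hw p h1.1 h2.1; tauto
      · exact h2.1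
    · exact h1.1
  rw [hprod]
  obtain ⟨g, z, A', hA', rfl, hz, hzy, hyA⟩ := pick A hlA hA
  rw [disjoint_insert_left] at hd
  have hsub := Vs_mono (G := G) (subset_insert g A')
  obtain ⟨hzA, -⟩ := ends_mem hz (mem_insert_self g A')
  rw [insert_union, Fl_cut A' B u z g hA' G y hd.1 hd.2 ?_ hz ?_ ?_ ?_]
  · congr 1
    · apply Fl_congr
      intro f hf
      by_cases hfg : f = g
      · subst hfg
        unfold Ends updE mergeV at *
        simp only
        grind
      · left
        have hf' : f ∈ A' := by simpa [hfg] using hf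
        simp only [updE, mergeV, if_neg hfg]
        simp only [mem_Vs] at hyA
        grind
    · rw [Fl_dc hd.1 (ends_updE G g u y) huy, Fl_updE hd.1, hB0, sub_zero, updE_merge, Fl_updE hd.1]
  · intro p h1 h2
    rcases hw p (hsub h1) h2 with h | h
    · exact h
    · exact absurd (h ▸ h1) hyA
  · intro h
    rcases hw z hzA h with h | h
    · exact h
    · exact absurd h hzy
  · intro h; exact absurd h hyA
  · intro h; exact absurd h hzy

lemma neg_one_pow_succ_flip (n : ℕ) (x : ℝ) : (-1 : ℝ) ^ (n + 1) * x = (-1) ^ n * (-x) := by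
  rw [pow_succ]; ring

theorem Fl_sign [Finite V] {q : ℝ} (hq1 : 1 < q) (hq2 : q < 2) (n : ℕ) :
    ∀ (S : Finset E) (G : Multigraph V E) (u v : V), #S = n → G.Conn S → S.Nonempty →
    (∀ e, S = {e} → G.fst e = G.snd e) → (∀ p, p ≠ u → p ≠ v → dg G S p ≤ 3) →
    0 < (-1 : ℝ) ^ (#S + #(G.Vs S)) * Fl q G S := by
  induction n using Nat.strong_induction_on with
  | _ n ih =>
  intro S G u₀ v hn hC hne hsingle hdeg₀
  -- a single loop
  by_cases hS1 : #S = 1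
  · obtain ⟨e, rfl⟩ := card_eq_one.1 hS1
    have hl := hsingle e rfl
    have h1 : Fl q G {e} = q - 1 := by rw [Fl_loops _ (by simpa using hl)]; simp
    have h2 : G.Vs {e} = {G.fst e} := by ext p; simp [Vs, hl]
    rw [h1, h2]
    simp
    linarith
  have hS2 : 2 ≤ #S := by have := card_pos.2 hne; omega
  -- choose `u` incident with `S`
  obtain ⟨u, huS, hdeg⟩ : ∃ u, u ∈ G.Vs S ∧ ∀ p, p ≠ u → p ≠ v → dg G S p ≤ 3 := by
    by_cases h : u₀ ∈ G.Vs S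
    · exact ⟨u₀, h, hdeg₀⟩
    · obtain ⟨e, he⟩ := hne
      refine ⟨G.fst e, mem_Vs.2 ⟨e, he, Or.inl rfl⟩, ?_⟩
      intro p _ hpv
      by_cases hp : p = u₀
      · rw [dg_pos, not_lt] at h
        rw [hp]; omega
      · exact hdeg₀ p hp hpv
  clear hdeg₀
  have hinc : ∀ e ∈ S, G.fst e = u ∨ G.snd e = u → ∃ y, G.Ends e u y ∧ u ≠ y := by
    intro e he h
    have := hC.loopless hS2 he
    rcases h with h | h
    · exact ⟨G.snd e, Or.inl ⟨h, rfl⟩, h ▸ this⟩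
    · exact ⟨G.fst e, Or.inr ⟨rfl, h⟩, h ▸ this.symm⟩
  by_cases hZ : ∀ e ∈ S, G.fst e = u ∨ G.snd e = u → G.Ends e u v
  · -- `S` is a bundle of parallel edges
    have hall : ∀ e ∈ S, G.Ends e u v := by
      by_contra hcon
      push Not at hcon
      obtain ⟨f, hfS, hf⟩ := hcon
      obtain ⟨e, he, heu⟩ := mem_Vs.1 huS
      obtain ⟨p, p', hpp, ⟨h1, h2⟩, ⟨h3, h4⟩⟩ := hC (S.filter fun e => G.Ends e u v)
        (S.filter fun e => ¬ G.Ends e u v) ⟨e, by simp [he, hZ e he heu]⟩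
        ⟨f, by simp [hfS, hf]⟩ (disjoint_filter_filter_not _ _ _) (filter_union_filter_not_eq _ _)
      have hA : ∀ r, r ∈ G.Vs (S.filter fun e => G.Ends e u v) → r = u ∨ r = v := by
        intro r hr
        simp only [mem_Vs, Ends] at hr; grind
      have hB : u ∉ G.Vs (S.filter fun e => ¬ G.Ends e u v) := by
        intro hr
        obtain ⟨g, hg, hg'⟩ := mem_Vs.1 hr
        rw [mem_filter] at hg
        exact hg.2 (hZ g hg.1 hg')
      grind
    obtain ⟨e, he, heu⟩ := mem_Vs.1 huS
    have huv : u ≠ v := by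
      intro h
      have h1 := hC.loopless hS2 he
      have h2 := hall e he
      unfold Ends at h2; grind
    have hV : G.Vs S = {u, v} := by
      ext r
      simp only [mem_insert, mem_singleton]
      constructor
      · intro hr
        obtain ⟨g, hg, hg'⟩ := mem_Vs.1 hr
        have := hall g hg
        unfold Ends at this; grind
      · have := ends_mem (hall e he) he
        rintro (rfl | rfl)
        · exact this.1
        · exact this.2
    rw [hV, card_pair huv, pow_add]
    have hF := Fl_Zk (q := q) huv S hall
    have ht : |(-1 : ℝ) ^ #S * (q - 1) ^ #S| < q - 1 := by
      rw [abs_mul, abs_pow, abs_neg, abs_one, one_pow, one_mul, abs_pow,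
        abs_of_pos (by linarith : (0 : ℝ) < q - 1)]
      exact pow_lt_self_of_lt_one₀ (by linarith) (by linarith) (by omega)
    have hsq : (-1 : ℝ) ^ #S * (-1) ^ #S = 1 := by rw [← mul_pow]; norm_num
    have : 0 < q * ((-1 : ℝ) ^ #S * Fl q G S) := by
      have : q * ((-1 : ℝ) ^ #S * Fl q G S) = (-1) ^ #S * (q - 1) ^ #S + (q - 1) := by
        linear_combination (-1 : ℝ) ^ #S * hF + (q - 1) * hsq
      rw [this]
      have := neg_lt_of_abs_lt ht
      linarith
    have := (pos_iff_pos_of_mul_pos this).1 (by linarith)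
    simpa using this
  push Not at hZ
  obtain ⟨e, heS, heu, hev⟩ := hZ
  obtain ⟨y, he, huy⟩ := hinc e heS heu
  have hyv : y ≠ v := fun h => hev (h ▸ he)
  clear hinc
  obtain ⟨D, heD, rfl⟩ : ∃ D, e ∉ D ∧ S = insert e D :=
    ⟨S.erase e, by simp, (insert_erase heS).symm⟩
  rw [card_insert_of_notMem heD] at hS2 hn
  have hDne : D.Nonempty := by rw [← card_pos]; omega
  have hloopless : ∀ f ∈ insert e D, G.fst f ≠ G.snd f := fun f hf =>
    hC.loopless (by rw [card_insert_of_notMem heD]; omega) hf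
  -- ends of `e` are in `D`
  obtain ⟨huD, hyD⟩ : u ∈ G.Vs D ∧ y ∈ G.Vs D := by
    obtain ⟨p, p', hpp, ⟨h1, h2⟩, ⟨h3, h4⟩⟩ := hC {e} D (by simp) hDne (by simp [heD])
      (by rw [← insert_eq])
    rw [← insert_empty_eq, Vs_insert he, Vs_empty] at h1 h3
    simp only [mem_insert, notMem_empty, or_false] at h1 h3
    grind
  have hVS : G.Vs (insert e D) = G.Vs D := by
    rw [Vs_insert he, insert_eq_of_mem hyD, insert_eq_of_mem huD]
  by_cases hDC : G.Conn D
  swap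
  · -- `D` is separable
    unfold Conn at hDC
    push Not at hDC
    obtain ⟨A, B, hA, hB, hd, rfl, hs⟩ := hDC
    have heA : e ∉ A := fun h => heD (mem_union_left _ h)
    have heB : e ∉ B := fun h => heD (mem_union_right _ h)
    have hs' : ∀ p p', p ∈ G.Vs A → p ∈ G.Vs B → p' ∈ G.Vs A → p' ∈ G.Vs B → p = p' := by
      intro p p' h1 h2 h3 h4
      by_contra h
      exact hs p p' h ⟨h1, h2⟩ h3 h4
    obtain ⟨x, y', w, hxy, hxA, hxB, hyB, hyA, hwA, hwB⟩ := case_b hC heA heB hd hA hB he hs'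
    have hsh : ∀ p, p ∈ G.Vs A → p ∈ G.Vs B → p = w := fun p h1 h2 => hs' p w h1 h2 hwA hwB
    have hcut := Fl_cut (q := q) A B w x e heA G y' heB hd hsh hxy (fun h => absurd h hxB)
      (fun h => absurd h hyA) (fun h => absurd (h ▸ hxA) hyA)
    have hcA := card_pos.2 hA
    have hcB := card_pos.2 hB
    rw [card_union_of_disjoint hd] at hn
    have hVA : (G.updE e x w).Vs (insert e A) = G.Vs A := by
      rw [Vs_insert (ends_updE _ _ _ _), Vs_updE heA, insert_eq_of_mem hwA, insert_eq_of_mem hxA]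
    have hVB : (G.updE e w y').Vs (insert e B) = G.Vs B := by
      rw [Vs_insert (ends_updE _ _ _ _), Vs_updE heB, insert_eq_of_mem hyB, insert_eq_of_mem hwB]
    have hdegS : ∀ p, dg G (insert e (A ∪ B)) p = dg G A p + dg G B p +
        (if x = p then 1 else 0) + (if y' = p then 1 else 0) := by
      intro p; rw [dg_insert heD hxy, dg_union hd]
    have pA := ih (#A + 1) (by omega) (insert e A) (G.updE e x w) u v
      (card_insert_of_notMem heA)
      (conn_piece hC heA heB hd hxy hsh hyA (ends_updE _ _ _ _) (fun T hT => Vs_updE hT))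
      (by simp)
      (by
        intro f hf
        have := congrArg card hf
        rw [card_insert_of_notMem heA, card_singleton] at this
        omega)
      (by
        intro p h1 h2
        have h3 := hdeg p h1 h2
        rw [hdegS] at h3
        rw [dg_insert heA (ends_updE _ _ _ _), dg_updE heA]
        have h4 := dg_pos.1 hwB
        by_cases hwp : w = p
        · subst hwp; rw [if_pos rfl]; split_ifs at * <;> omega
        · rw [if_neg hwp]; split_ifs at * <;> omega)
    have pB := ih (#B + 1) (by omega) (insert e B) (G.updE e w y') u v
      (card_insert_of_notMem heB)
      (conn_piece (by rwa [union_comm]) heB heA hd.symm hxy.symm (fun p h1 h2 => hsh p h2 h1) hxB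
        (ends_updE _ _ _ _).symm (fun T hT => Vs_updE hT))
      (by simp)
      (by
        intro f hf
        have := congrArg card hf
        rw [card_insert_of_notMem heB, card_singleton] at this
        omega)
      (by
        intro p h1 h2
        have h3 := hdeg p h1 h2
        rw [hdegS] at h3
        rw [dg_insert heB (ends_updE _ _ _ _), dg_updE heB]
        have h4 := dg_pos.1 hwA
        by_cases hwp : w = p
        · subst hwp; rw [if_pos rfl]; split_ifs at * <;> omega
        · rw [if_neg hwp]; split_ifs at * <;> omega)
    rw [hVA, card_insert_of_notMem heA] at pA
    rw [hVB, card_insert_of_notMem heB] at pB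
    have hcard : #(G.Vs A) + #(G.Vs B) = #(G.Vs (insert e (A ∪ B))) + 1 := by
      rw [hVS, Vs_union, ← card_union_add_card_inter]
      congr 1
      rw [card_eq_one]
      refine ⟨w, ?_⟩
      ext p
      simp only [mem_inter, mem_singleton]
      exact ⟨fun h => hsh p h.1 h.2, fun h => h ▸ ⟨hwA, hwB⟩⟩
    have hprod := mul_pos pA pB
    have : 0 < (q - 1) * ((-1 : ℝ) ^ (#(insert e (A ∪ B)) + #(G.Vs (insert e (A ∪ B)))) *
        Fl q G (insert e (A ∪ B))) := by
      have h2 : (-1 : ℝ) ^ (#(insert e (A ∪ B)) + #(G.Vs (insert e (A ∪ B)))) =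
          (-1) ^ (#A + 1 + #(G.Vs A)) * (-1) ^ (#B + 1 + #(G.Vs B)) := by
        rw [← pow_add, card_insert_of_notMem heD, card_union_of_disjoint hd,
          show #A + 1 + #(G.Vs A) + (#B + 1 + #(G.Vs B)) =
            #A + #B + 1 + #(G.Vs (insert e (A ∪ B))) + 2 by omega, pow_add _ _ 2]
        norm_num
      rw [h2]
      refine lt_of_lt_of_eq hprod ?_
      linear_combination -((-1 : ℝ) ^ (#A + 1 + #(G.Vs A)) * (-1) ^ (#B + 1 + #(G.Vs B))) * hcut
    exact (pos_iff_pos_of_mul_pos this).1 (by linarith)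
  -- `D` is non-separable
  have hdegD : ∀ p, p ≠ u → p ≠ v → dg G D p ≤ 3 := fun p h1 h2 =>
    (dg_mono (subset_insert e D) p).trans (hdeg p h1 h2)
  have hD : 0 ≤ (-1 : ℝ) ^ (#D + #(G.Vs D)) * Fl q G D := by
    by_cases hs : ∃ f, D = {f}
    · obtain ⟨f, rfl⟩ := hs
      have hf := hloopless f (by simp)
      have : Fl q G {f} = 0 := Fl_leaf (S := ∅) (by simp) (ends_self G f) hf (by simp [Vs_empty])
      rw [this, mul_zero]
    · push Not at hs
      exact (ih #D (by omega) D G u v rfl hDC hDne (fun f hf => absurd hf (hs f)) hdegD).le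
  have hDpos : (∀ f, D ≠ {f}) → 0 < (-1 : ℝ) ^ (#D + #(G.Vs D)) * Fl q G D := fun hs =>
      ih #D (by omega) D G u v rfl hDC hDne (fun f hf => absurd hf (hs f)) hdegD
  have hdc := Fl_dc (q := q) heD he huy
  rw [hVS, card_insert_of_notMem heD, hdc]
  by_cases hMC : (G.mergeV y u).Conn D
  · -- both minors are non-separable
    have hVM : (G.mergeV y u).Vs D = (G.Vs D).erase y := by
      ext p
      rw [mem_erase]
      constructor
      · intro h
        rcases Vs_mergeV h with h | h
        · exact h.symm
        · rw [h.1]; exact ⟨huy, huD⟩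
      · rintro ⟨h1, h2⟩
        have := Vs_mergeV' (x := u) (y := y) h2
        rwa [if_neg h1] at this
    have pM := ih #D (by omega) D (G.mergeV y u) u v rfl hMC hDne
      (by
        rintro f rfl
        rw [← insert_empty_eq, Vs_insert (ends_self G f), Vs_empty] at huD hyD
        simp only [mem_insert, notMem_empty, or_false] at huD hyD
        simp only [mergeV]; grind)
      (fun p h1 h2 => (dg_mergeV h1).trans (hdegD p h1 h2))
    have hc : #((G.mergeV y u).Vs D) + 1 = #(G.Vs D) := by
      rw [hVM, card_erase_add_one hyD]
    rw [← hc] at hD ⊢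
    rw [show #D + 1 + (#((G.mergeV y u).Vs D) + 1) = #D + #((G.mergeV y u).Vs D) + 2 by omega,
      pow_add _ _ 2]
    rw [← add_assoc, pow_succ] at hD
    linarith
  · unfold Conn at hMC
    push Not at hMC
    obtain ⟨A, B, hA, hB, hd, rfl, hs⟩ := hMC
    have hs' : ∀ p p', p ∈ (G.mergeV y u).Vs A → p ∈ (G.mergeV y u).Vs B →
        p' ∈ (G.mergeV y u).Vs A → p' ∈ (G.mergeV y u).Vs B → p = p' := by
      intro p p' h1 h2 h3 h4
      by_contra h
      exact hs p p' h ⟨h1, h2⟩ h3 h4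
    have hsG : ∀ p p', p ∈ G.Vs A → p ∈ G.Vs B → p' ∈ G.Vs A → p' ∈ G.Vs B →
        (if p = y then u else p) = (if p' = y then u else p') := fun p p' h1 h2 h3 h4 =>
      hs' _ _ (Vs_mergeV' h1) (Vs_mergeV' h2) (Vs_mergeV' h3) (Vs_mergeV' h4)
    obtain ⟨p, p', hpp, ⟨h1, h2⟩, ⟨h3, h4⟩⟩ := hDC A B hA hB hd rfl
    have hpp' := hsG p p' h1 h2 h3 h4
    obtain ⟨huA, huB, hyA, hyB⟩ : u ∈ G.Vs A ∧ u ∈ G.Vs B ∧ y ∈ G.Vs A ∧ y ∈ G.Vs B := by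
      split_ifs at hpp' with g1 g2 g2
      · exact absurd (g1.trans g2.symm) hpp
      · subst g1; subst hpp'; exact ⟨h3, h4, h1, h2⟩
      · subst g2; subst hpp'; exact ⟨h1, h2, h3, h4⟩
      · exact absurd hpp' hpp
    have hsh : ∀ r, r ∈ G.Vs A → r ∈ G.Vs B → r = u ∨ r = y := by
      intro r h1 h2
      have := hsG r u h1 h2 huA huB
      rw [if_neg huy] at this
      split_ifs at this with g
      · exact Or.inr g
      · exact Or.inl this
    have hdy := hdeg y huy.symm hyv
    rw [dg_insert heD he, dg_union hd, if_neg huy, if_pos rfl] at hdy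
    have e1 := dg_pos.1 hyA
    have e2 := dg_pos.1 hyB
    have hser := Fl_series (q := q) hd huy hsh
      (fun f hf => hloopless f (mem_insert_of_mem (mem_union_left _ hf)))
      (fun f hf => hloopless f (mem_insert_of_mem (mem_union_right _ hf))) (by omega) (by omega)
    have pD := hDpos (by
      intro f hf
      have := congrArg card hf
      rw [card_union_of_disjoint hd, card_singleton] at this
      have := card_pos.2 hA
      have := card_pos.2 hB
      omega)
    rw [← hser, show #(A ∪ B) + 1 + #(G.Vs (A ∪ B)) = #(A ∪ B) + #(G.Vs (A ∪ B)) + 1 by omega,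
      pow_succ]
    nlinarith

/-- `e` is a bridge in `S`, witnessed by a cut -/
def CutEdge (G : Multigraph V E) (S : Finset E) (e : E) : Prop :=
  ∃ c : V → Prop, ¬ (c (G.fst e) ↔ c (G.snd e)) ∧
    ∀ f ∈ S, f ≠ e → (c (G.fst f) ↔ c (G.snd f))

lemma CutEdge.union {G : Multigraph V E} {A B : Finset E} {e : E} {w : V} (heA : e ∈ A)
    (hw : ∀ p, p ∈ G.Vs A → p ∈ G.Vs B → p = w) (h : G.CutEdge A e) : G.CutEdge (A ∪ B) e := by
  obtain ⟨c, h1, h2⟩ := h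
  have hA : ∀ f ∈ A, G.fst f ∈ G.Vs A ∧ G.snd f ∈ G.Vs A := fun f hf => ends_mem (ends_self G f) hf
  have hB : ∀ f ∈ B, G.fst f ∈ G.Vs B ∧ G.snd f ∈ G.Vs B := fun f hf => ends_mem (ends_self G f) hf
  refine ⟨fun p => if p ∈ G.Vs A then c p else c w, ?_, ?_⟩
  · simp only [hA e heA, if_true]; exact h1
  · intro f hf hfe
    rcases mem_union.1 hf with hf | hf
    · simp only [hA f hf, if_true]; exact h2 f hf hfe
    · have : ∀ p ∈ G.Vs B, (if p ∈ G.Vs A then c p else c w) = c w := by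
        intro p hp
        split_ifs with h
        · rw [hw p h hp]
        · rfl
      simp only [this _ (hB f hf).1, this _ (hB f hf).2]

theorem Fl_ne_zero [Finite V] {q : ℝ} (hq1 : 1 < q) (hq2 : q < 2) {G : Multigraph V E} {u v : V}
    (S : Finset E) : (∀ e ∈ S, ¬ G.CutEdge S e) → (∀ p, p ≠ u → p ≠ v → dg G S p ≤ 3) →
    Fl q G S ≠ 0 := by
  induction S using Finset.strongInduction with
  | _ S ih =>
  intro hb hdeg
  by_cases hne : S.Nonempty
  swap
  · rw [not_nonempty_iff_eq_empty] at hne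
    rw [hne, Fl_empty]; exact one_ne_zero
  by_cases hC : G.Conn S
  · have := Fl_sign hq1 hq2 #S S G u v rfl hC hne (by
      rintro e rfl
      by_contra h
      refine hb e (by simp) ⟨fun p => p = G.fst e, ?_, ?_⟩
      · simp [Ne.symm h]
      · intro f hf hfe
        exact absurd (mem_singleton.1 hf) hfe) hdeg
    intro h
    rw [h, mul_zero] at this
    exact lt_irrefl _ this
  · unfold Conn at hC
    push Not at hC
    obtain ⟨A, B, hA, hB, hd, rfl, hs⟩ := hC
    obtain ⟨w, hw⟩ : ∃ w, ∀ p, p ∈ G.Vs A → p ∈ G.Vs B → p = w := by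
      by_cases h : ∃ w, w ∈ G.Vs A ∧ w ∈ G.Vs B
      · obtain ⟨w, h1, h2⟩ := h
        refine ⟨w, fun p h3 h4 => ?_⟩
        by_contra hpw
        exact hs p w hpw ⟨h3, h4⟩ h1 h2
      · exact ⟨u, fun p h1 h2 => absurd ⟨p, h1, h2⟩ h⟩
    rw [Fl_prod A B w G hd hw]
    refine mul_ne_zero (ih A ?_ ?_ ?_) (ih B ?_ ?_ ?_)
    · refine ssubset_of_subset_of_ne subset_union_left ?_
      intro h
      obtain ⟨b, hb⟩ := hB
      exact disjoint_right.1 hd hb (by rw [h]; exact mem_union_right _ hb)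
    · intro e he hc
      exact hb e (mem_union_left _ he) (hc.union he hw)
    · exact fun p h1 h2 => (dg_mono subset_union_left p).trans (hdeg p h1 h2)
    · refine ssubset_of_subset_of_ne subset_union_right ?_
      intro h
      obtain ⟨a, ha⟩ := hA
      exact disjoint_left.1 hd ha (by rw [h]; exact mem_union_left _ ha)
    · intro e he hc
      refine hb e (mem_union_right _ he) ?_
      rw [union_comm]
      exact hc.union he (fun p h1 h2 => hw p h2 h1)
    · exact fun p h1 h2 => (dg_mono subset_union_right p).trans (hdeg p h1 h2)

lemma isBridge_of_cutEdge [Fintype V] [Fintype E] {G : Multigraph V E} {e : E}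
    (h : G.CutEdge univ e) : G.IsBridge e := by
  obtain ⟨c, h1, h2⟩ := h
  have hc : ∀ a b, Relation.EqvGen (G.edgeRelOn {e' | e' ≠ e}) a b → (c a ↔ c b) := by
    intro a b hab
    induction hab with
    | rel a b hab =>
      obtain ⟨f, hf, hab⟩ := hab
      have := h2 f (mem_univ _) hf
      rcases hab with ⟨rfl, rfl⟩ | ⟨rfl, rfl⟩
      · exact this
      · exact this.symm
    | refl => exact Iff.rfl
    | symm _ _ _ ih => exact ih.symm
    | trans _ _ _ _ _ ih1 ih2 => exact ih1.trans ih2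
  have hle : G.edgeRelOn {e' | e' ≠ e} ≤ G.edgeRelOn Set.univ :=
    fun a b ⟨e', _, hab⟩ => ⟨e', trivial, hab⟩
  let Φ : Quotient (G.reachSetoid {e' | e' ≠ e}) → Quotient (G.reachSetoid Set.univ) :=
    Quotient.lift (Quotient.mk _) fun a b hab =>
      Quotient.sound (Relation.EqvGen.mono hle a b hab)
  have hsurj : Function.Surjective Φ := by
    intro b
    refine Quotient.inductionOn b fun p => ⟨Quotient.mk _ p, rfl⟩
  unfold IsBridge numComponents ncomp
  refine lt_of_le_of_ne (Nat.card_le_card_of_surjective Φ hsurj) ?_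
  intro hcard
  have hbij := (Nat.bijective_iff_surjective_and_card Φ).2 ⟨hsurj, hcard.symm⟩
  have hPhi : Φ (Quotient.mk _ (G.fst e)) = Φ (Quotient.mk _ (G.snd e)) :=
    Quotient.sound (s := G.reachSetoid Set.univ)
      (Relation.EqvGen.rel _ _ ⟨e, trivial, Or.inl ⟨rfl, rfl⟩⟩)
  have := hbij.1 hPhi
  exact h1 (hc _ _ (Quotient.exact this))

lemma eval_flowPoly [Fintype V] [Fintype E] (G : Multigraph V E) (q : ℝ) :
    G.flowPoly.eval q = Fl q G univ := by
  unfold flowPoly Fl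
  rw [Polynomial.eval_finsetSum, powerset_univ]
  have : (Fintype.ofFinite E) = (inferInstance : Fintype E) := Subsingleton.elim _ _
  rw [this]
  refine sum_congr rfl fun T _ => ?_
  simp [Nat.card_eq_fintype_card]

lemma degree_eq_dg [Fintype E] (G : Multigraph V E) (p : V) : G.degree p = dg G univ p := by
  unfold degree dg
  simp [Nat.card_eq_fintype_card, Fintype.card_subtype]

end aux
end Multigraph

open Multigraph in
/-- Dong. If `G` is a bridgeless finite multigraph with
`|W(G)| ≤ 2`, where `W(G)` is the set of vertices of degree larger than `3`, then
`G` has no flow root in `(1,2)`. -/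
theorem flowPoly_ne_zero_of_at_most_two_big_degree {V E : Type} [Fintype V] [Fintype E]
    (G : Multigraph V E) (hbl : G.Bridgeless)
    (hW : {v | 3 < G.degree v}.ncard ≤ 2) :
    ∀ q : ℝ, 1 < q → q < 2 → G.flowPoly.eval q ≠ 0 := by
  intro q hq1 hq2
  rw [eval_flowPoly]
  rcases isEmpty_or_nonempty V with hV | ⟨⟨p₀⟩⟩
  · have hE : IsEmpty E := ⟨fun e => hV.elim (G.fst e)⟩
    rw [Finset.univ_eq_empty, Fl_empty]; exact one_ne_zero
  obtain ⟨u, v, huv⟩ : ∃ u v, {v | 3 < G.degree v} ⊆ {u, v} := by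
    have hfin : {v | 3 < G.degree v}.Finite := Set.toFinite _
    interval_cases h : {v | 3 < G.degree v}.ncard
    · rw [Set.ncard_eq_zero hfin] at h
      exact ⟨p₀, p₀, by rw [h]; exact Set.empty_subset _⟩
    · obtain ⟨a, ha⟩ := Set.ncard_eq_one.1 h
      exact ⟨a, a, by rw [ha]; simp⟩
    · obtain ⟨a, b, _, hab⟩ := Set.ncard_eq_two.1 h
      exact ⟨a, b, hab.subset⟩
  refine Fl_ne_zero hq1 hq2 (u := u) (v := v) Finset.univ
    (fun e _ h => hbl e (isBridge_of_cutEdge h)) ?_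
  intro p h1 h2
  rw [← degree_eq_dg]
  by_contra h3
  rcases huv (not_le.1 h3) with h | h
  · exact h1 h
  · exact h2 h
end

section
/- Let G be a bridgeless finite multigraph and let W(G) be the set of vertices of G of degree larger than 3. If G − W(G) has a connected component G₀ such that every vertex of W(G) has a neighbour in V(G₀), then F(G,q) ≠ 0 for all real q with 1 < q < 2. -/
namespace FlowAux

section Alg

variable {E M : Type} [DecidableEq E] [AddCommGroup M] [Module ℚ M] [FiniteDimensional ℚ M]

/-- Span of the vectors indexed by `B`. -/
noncomputable def sp (u : E → M) (B : Finset E) : Submodule ℚ M :=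
  Submodule.span ℚ (Set.image u (B : Set E))

/-- Rank of an edge set. -/
noncomputable def rk (u : E → M) (B : Finset E) : ℕ := Module.finrank ℚ (sp u B)

/-- Weight of an edge set in the subset expansion. -/
noncomputable def wt (q : ℝ) (u : E → M) (B : Finset E) : ℝ :=
  (-q) ^ B.card * (q⁻¹) ^ (rk u B)

/-- Signed flow polynomial. -/
noncomputable def Phi (q : ℝ) (u : E → M) (A : Finset E) : ℝ :=
  ∑ B ∈ A.powerset, wt q u B

open Classical in
/-- Part of the subset expansion over sets spanning `d`. -/
noncomputable def X (q : ℝ) (u : E → M) (A : Finset E) (d : M) : ℝ :=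
  ∑ B ∈ A.powerset, if d ∈ sp u B then wt q u B else 0

theorem sp_insert (u : E → M) (e : E) (B : Finset E) :
    sp u (insert e B) = Submodule.span ℚ {u e} ⊔ sp u B := by
  unfold sp
  rw [Finset.coe_insert, Set.image_insert_eq, Submodule.span_insert]

theorem sp_union (u : E → M) (B C : Finset E) : sp u (B ∪ C) = sp u B ⊔ sp u C := by
  unfold sp
  rw [Finset.coe_union, Set.image_union, Submodule.span_union]

theorem sp_mono (u : E → M) {B C : Finset E} (h : B ⊆ C) : sp u B ≤ sp u C :=
  Submodule.span_mono (Set.image_mono (by exact_mod_cast h))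

theorem mem_sp (u : E → M) {B : Finset E} {e : E} (h : e ∈ B) : u e ∈ sp u B :=
  Submodule.subset_span ⟨e, by exact_mod_cast h, rfl⟩

theorem sp_congr {u v : E → M} {B : Finset E} (h : ∀ e ∈ B, u e = v e) : sp u B = sp v B := by
  unfold sp
  congr 1
  exact Set.image_congr (fun e he => h e (by exact_mod_cast he))

theorem rk_congr {u v : E → M} {B : Finset E} (h : ∀ e ∈ B, u e = v e) : rk u B = rk v B := by
  unfold rk
  rw [sp_congr h]

theorem Phi_congr {q : ℝ} {u v : E → M} {A : Finset E} (h : ∀ e ∈ A, u e = v e) :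
    Phi q u A = Phi q v A := by
  unfold Phi
  refine Finset.sum_congr rfl fun B hB => ?_
  unfold wt
  rw [rk_congr fun e he => h e (Finset.mem_powerset.1 hB he)]

theorem X_congr {q : ℝ} {u v : E → M} {A : Finset E} {d : M} (h : ∀ e ∈ A, u e = v e) :
    X q u A d = X q v A d := by
  unfold X
  refine Finset.sum_congr rfl fun B hB => ?_
  have h' : ∀ e ∈ B, u e = v e := fun e he => h e (Finset.mem_powerset.1 hB he)
  unfold wt
  rw [rk_congr h', sp_congr h']

theorem X_neg {q : ℝ} {u : E → M} {A : Finset E} {d : M} : X q u A (-d) = X q u A d := by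
  unfold X
  refine Finset.sum_congr rfl fun B _ => ?_
  by_cases h : d ∈ sp u B
  · rw [if_pos h, if_pos ((sp u B).neg_mem h)]
  · rw [if_neg h, if_neg fun h' => h (by simpa using (sp u B).neg_mem h')]

theorem rk_insert_mem {u : E → M} {e : E} {B : Finset E} (h : u e ∈ sp u B) :
    rk u (insert e B) = rk u B := by
  unfold rk
  rw [sp_insert, sup_eq_right.2]
  rwa [Submodule.span_singleton_le_iff_mem]

/-- Rank of a join of two subspaces meeting in at most a line. -/
theorem finrank_sup (P Q : Submodule ℚ M) (d : M) (hd : d ≠ 0)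
    (h : P ⊓ Q ≤ Submodule.span ℚ {d}) :
    (d ∈ P ∧ d ∈ Q → Module.finrank ℚ (P ⊔ Q : Submodule ℚ M) + 1 =
      Module.finrank ℚ P + Module.finrank ℚ Q) ∧
    (¬ (d ∈ P ∧ d ∈ Q) → Module.finrank ℚ (P ⊔ Q : Submodule ℚ M) =
      Module.finrank ℚ P + Module.finrank ℚ Q) := by
  have key := Submodule.finrank_sup_add_finrank_inf_eq P Q
  constructor
  · rintro ⟨h1, h2⟩
    have : P ⊓ Q = Submodule.span ℚ {d} := by
      apply le_antisymm h
      rw [Submodule.span_singleton_le_iff_mem]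
      exact ⟨h1, h2⟩
    rw [this, finrank_span_singleton hd] at key
    exact key
  · intro hn
    have : P ⊓ Q = ⊥ := by
      rw [eq_bot_iff]
      intro y hy
      obtain ⟨c, rfl⟩ := Submodule.mem_span_singleton.1 (h hy)
      by_cases hc : c = 0
      · simp [hc]
      · exfalso
        apply hn
        have h3 := (P ⊓ Q).smul_mem c⁻¹ hy
        rw [smul_smul, inv_mul_cancel₀ hc, one_smul] at h3
        exact h3
    rw [this, finrank_bot] at key
    exact key

theorem rk_insert_not_mem {u : E → M} {e : E} {B : Finset E} (h : u e ∉ sp u B) :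
    rk u (insert e B) = rk u B + 1 := by
  have hd : u e ≠ 0 := fun h0 => h (h0 ▸ zero_mem _)
  unfold rk
  rw [sp_insert]
  rw [(finrank_sup (Submodule.span ℚ {u e}) (sp u B) (u e) hd inf_le_left).2 (fun h' => h h'.2),
    finrank_span_singleton hd, add_comm]

theorem wt_insert_mem {q : ℝ} {u : E → M} {e : E} {B : Finset E} (he : e ∉ B) (h : u e ∈ sp u B) :
    wt q u (insert e B) = -q * wt q u B := by
  unfold wt
  rw [rk_insert_mem h, Finset.card_insert_of_notMem he, pow_succ]
  ring

theorem wt_insert_not_mem {q : ℝ} (hq : q ≠ 0) {u : E → M} {e : E} {B : Finset E} (he : e ∉ B)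
    (h : u e ∉ sp u B) : wt q u (insert e B) = - wt q u B := by
  unfold wt
  rw [rk_insert_not_mem h, Finset.card_insert_of_notMem he, pow_succ, pow_succ]
  field_simp

theorem Phi_insert {q : ℝ} (hq : q ≠ 0) {u : E → M} {e : E} {A : Finset E} (he : e ∉ A) :
    Phi q u (insert e A) = (1 - q) * X q u A (u e) := by
  unfold Phi X
  rw [Finset.sum_powerset_insert he, ← Finset.sum_add_distrib, Finset.mul_sum]
  refine Finset.sum_congr rfl fun B hB => ?_
  have heB : e ∉ B := fun h => he (Finset.mem_powerset.1 hB h)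
  split_ifs with h
  · rw [wt_insert_mem heB h]; ring
  · rw [wt_insert_not_mem hq heB h]; ring

theorem X_insert_self {q : ℝ} (hq : q ≠ 0) {u : E → M} {e : E} {A : Finset E} (he : e ∉ A) :
    X q u (insert e A) (u e) = (2 - q) * X q u A (u e) - Phi q u A := by
  unfold Phi X
  rw [Finset.sum_powerset_insert he, ← Finset.sum_add_distrib, Finset.mul_sum,
    ← Finset.sum_sub_distrib]
  refine Finset.sum_congr rfl fun B hB => ?_
  have heB : e ∉ B := fun h => he (Finset.mem_powerset.1 hB h)
  rw [if_pos (mem_sp u (Finset.mem_insert_self e B))]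
  split_ifs with h
  · rw [wt_insert_mem heB h]; ring
  · rw [wt_insert_not_mem hq heB h]; ring

theorem X_eq_zero {q : ℝ} {u : E → M} {A : Finset E} {d : M} (h : d ∉ sp u A) :
    X q u A d = 0 := by
  unfold X
  refine Finset.sum_eq_zero fun B hB => ?_
  rw [if_neg fun h' => h (sp_mono u (Finset.mem_powerset.1 hB) h')]

theorem X_zero {q : ℝ} {u : E → M} {A : Finset E} : X q u A 0 = Phi q u A := by
  unfold X Phi
  simp

theorem Phi_bridge {q : ℝ} (hq : q ≠ 0) {u : E → M} {e : E} {A : Finset E} (he : e ∉ A)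
    (h : u e ∉ sp u A) : Phi q u (insert e A) = 0 := by
  rw [Phi_insert hq he, X_eq_zero h, mul_zero]

theorem sum_powerset_union (f : Finset E → ℝ) (A₁ A₂ : Finset E) (h : Disjoint A₁ A₂) :
    ∑ B ∈ (A₁ ∪ A₂).powerset, f B =
      ∑ B₁ ∈ A₁.powerset, ∑ B₂ ∈ A₂.powerset, f (B₁ ∪ B₂) := by
  induction A₁ using Finset.induction_on generalizing f with
  | empty => simp
  | insert a A ha ih =>
    rw [Finset.disjoint_insert_left] at h
    rw [Finset.insert_union, Finset.sum_powerset_insert (by simp [ha, h.1]), ih _ h.2,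
      ih _ h.2, Finset.sum_powerset_insert ha]
    simp only [Finset.insert_union]

theorem wt_union {q : ℝ} (hq : q ≠ 0) {u : E → M} {B₁ B₂ : Finset E} (h : Disjoint B₁ B₂)
    {d : M} (hd : d ≠ 0) (hs : sp u B₁ ⊓ sp u B₂ ≤ Submodule.span ℚ {d}) :
    (d ∈ sp u B₁ ∧ d ∈ sp u B₂ → wt q u (B₁ ∪ B₂) = q * wt q u B₁ * wt q u B₂) ∧
    (¬ (d ∈ sp u B₁ ∧ d ∈ sp u B₂) → wt q u (B₁ ∪ B₂) = wt q u B₁ * wt q u B₂) := by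
  obtain ⟨h1, h2⟩ := finrank_sup _ _ d hd hs
  constructor
  · intro hh
    have := h1 hh
    unfold wt rk
    rw [sp_union, Finset.card_union_of_disjoint h]
    have e : (q⁻¹) ^ (Module.finrank ℚ (sp u B₁ ⊔ sp u B₂ : Submodule ℚ M)) =
        q * ((q⁻¹) ^ Module.finrank ℚ (sp u B₁) * (q⁻¹) ^ Module.finrank ℚ (sp u B₂)) := by
      rw [← pow_add, ← this, pow_succ]
      field_simp
    rw [e, pow_add]; ring
  · intro hh
    have := h2 hh
    unfold wt rk
    rw [sp_union, Finset.card_union_of_disjoint h, this, pow_add, pow_add]; ring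

theorem Phi_union {q : ℝ} (hq : q ≠ 0) {u : E → M} {A₁ A₂ : Finset E} (h : Disjoint A₁ A₂)
    {d : M} (hd : d ≠ 0) (hs : sp u A₁ ⊓ sp u A₂ ≤ Submodule.span ℚ {d}) :
    Phi q u (A₁ ∪ A₂) = Phi q u A₁ * Phi q u A₂ + (q - 1) * X q u A₁ d * X q u A₂ d := by
  unfold Phi X
  rw [sum_powerset_union _ _ _ h, Finset.sum_mul_sum, mul_assoc, Finset.sum_mul_sum,
    Finset.mul_sum, ← Finset.sum_add_distrib]
  refine Finset.sum_congr rfl fun B₁ hB₁ => ?_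
  rw [Finset.mul_sum, ← Finset.sum_add_distrib]
  refine Finset.sum_congr rfl fun B₂ hB₂ => ?_
  rw [Finset.mem_powerset] at hB₁ hB₂
  obtain ⟨k1, k2⟩ := wt_union hq (h.mono (by exact hB₁) hB₂) (u := u) hd
    ((inf_le_inf (sp_mono u hB₁) (sp_mono u hB₂)).trans hs)
  by_cases c1 : d ∈ sp u B₁ <;> by_cases c2 : d ∈ sp u B₂
  · rw [k1 ⟨c1, c2⟩, if_pos c1, if_pos c2]; ring
  · rw [k2 (by tauto), if_pos c1, if_neg c2]; ring
  · rw [k2 (by tauto), if_neg c1, if_pos c2]; ring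
  · rw [k2 (by tauto), if_neg c1, if_neg c2]; ring

theorem Phi_union_of_disjoint {q : ℝ} {u : E → M} {A₁ A₂ : Finset E}
    (h : Disjoint A₁ A₂) (hs : sp u A₁ ⊓ sp u A₂ = ⊥) :
    Phi q u (A₁ ∪ A₂) = Phi q u A₁ * Phi q u A₂ := by
  unfold Phi
  rw [sum_powerset_union _ _ _ h, Finset.sum_mul_sum]
  refine Finset.sum_congr rfl fun B₁ hB₁ => Finset.sum_congr rfl fun B₂ hB₂ => ?_
  rw [Finset.mem_powerset] at hB₁ hB₂
  have hb : sp u B₁ ⊓ sp u B₂ = ⊥ :=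
    eq_bot_iff.2 ((inf_le_inf (sp_mono u hB₁) (sp_mono u hB₂)).trans hs.le)
  have key := Submodule.finrank_sup_add_finrank_inf_eq (sp u B₁) (sp u B₂)
  rw [hb, finrank_bot, add_zero] at key
  unfold wt rk
  rw [sp_union, Finset.card_union_of_disjoint (h.mono (by exact hB₁) hB₂), key,
    pow_add, pow_add]
  ring

/-- Series reduction. -/
theorem X_series {q : ℝ} (hq : q ≠ 0) {u : E → M} {A : Finset E} {e : E} (he : e ∉ A)
    (d d' : M) (f : M →ₗ[ℚ] ℚ) (hf : ∀ g ∈ A, f (u g) = 0) (hfe : f (u e) = 1) (hfd : f d = 1)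
    (hd : d = u e + d') :
    X q u (insert e A) d = - X q u A d' := by
  have hz : ∀ B ⊆ A, ∀ y ∈ sp u B, f y = 0 := by
    intro B hB y hy
    have : sp u B ≤ LinearMap.ker f := by
      unfold sp
      rw [Submodule.span_le]
      rintro _ ⟨g, hg, rfl⟩
      exact hf g (hB (by exact_mod_cast hg))
    exact this hy
  unfold X
  rw [Finset.sum_powerset_insert he, Finset.sum_eq_zero, zero_add, ← Finset.sum_neg_distrib]
  · refine Finset.sum_congr rfl fun B hB => ?_
    rw [Finset.mem_powerset] at hB
    have heB : e ∉ B := fun h => he (hB h)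
    have hne : u e ∉ sp u B := fun h => by
      have := hz B hB _ h
      rw [hfe] at this
      exact one_ne_zero this
    rw [wt_insert_not_mem hq heB hne]
    have : d ∈ sp u (insert e B) ↔ d' ∈ sp u B := by
      rw [sp_insert, Submodule.mem_sup]
      constructor
      · rintro ⟨y, hy, z, hz', hyz⟩
        obtain ⟨c, rfl⟩ := Submodule.mem_span_singleton.1 hy
        have h1 := congrArg f hyz
        rw [map_add, map_smul, hfe, hz B hB z hz', hfd] at h1
        have hc : c = 1 := by simpa using h1
        subst hc
        have : z = d' := by
          rw [hd, one_smul] at hyz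
          exact add_left_cancel hyz
        rwa [← this]
      · intro h
        exact ⟨u e, Submodule.mem_span_singleton_self _, d', h, hd.symm⟩
    by_cases h : d' ∈ sp u B
    · rw [if_pos h, if_pos (this.2 h)]
    · rw [if_neg h, if_neg (fun h' => h (this.1 h')), neg_zero]
  · intro B hB
    rw [Finset.mem_powerset] at hB
    rw [if_neg]
    intro h
    have := hz B hB _ h
    rw [hfd] at this
    exact one_ne_zero this

/-- Rank in a contraction. -/
theorem rk_contract {u : E → M} {e : E} (B : Finset E) (f : M →ₗ[ℚ] M)
    (hk : LinearMap.ker f = Submodule.span ℚ {u e}) (he : u e ≠ 0) :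
    rk (fun g => f (u g)) B + 1 = rk u (insert e B) := by
  unfold rk
  have h1 : sp (fun g => f (u g)) B = (sp u (insert e B)).map f := by
    unfold sp
    rw [Submodule.map_span, Finset.coe_insert, Set.image_insert_eq, Set.image_insert_eq,
      Submodule.span_insert]
    have : f (u e) = 0 := by
      rw [← LinearMap.mem_ker, hk]
      exact Submodule.mem_span_singleton_self _
    rw [this, Submodule.span_singleton_eq_bot.2 rfl, bot_sup_eq, Set.image_image]
  have h2 := LinearMap.finrank_range_add_finrank_ker (f.domRestrict (sp u (insert e B)))
  rw [h1, ← h2]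
  congr 1
  · rw [LinearMap.range_domRestrict]
  · rw [LinearMap.ker_domRestrict, ← finrank_span_singleton (K := ℚ) he, ← hk]
    symm
    apply LinearEquiv.finrank_eq
    apply Submodule.comapSubtypeEquivOfLe
    rw [hk, Submodule.span_singleton_le_iff_mem]
    exact mem_sp u (Finset.mem_insert_self _ _)

theorem Phi_contract {q : ℝ} (hq : q ≠ 0) {u : E → M} {e : E} {A : Finset E} (heA : e ∉ A)
    (f : M →ₗ[ℚ] M) (hk : LinearMap.ker f = Submodule.span ℚ {u e}) (he : u e ≠ 0) :
    Phi q u (insert e A) = Phi q u A - Phi q (fun g => f (u g)) A := by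
  unfold Phi
  rw [Finset.sum_powerset_insert heA, sub_eq_add_neg, ← Finset.sum_neg_distrib]
  congr 1
  refine Finset.sum_congr rfl fun B hB => ?_
  have heB : e ∉ B := fun h => heA (Finset.mem_powerset.1 hB h)
  unfold wt
  rw [← rk_contract B f hk he, Finset.card_insert_of_notMem heB, pow_succ, pow_succ]
  field_simp

end Alg

end FlowAux

namespace FlowAux

section Gr

variable {V E : Type} [Fintype V] [DecidableEq V] [DecidableEq E]

/-- The difference of two unit vectors. -/
def dlt (a b : V) : V → ℚ := Pi.single a 1 - Pi.single b 1

/-- Incidence vector of an edge. -/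
def vec (G : Multigraph V E) (e : E) : V → ℚ := dlt (G.fst e) (G.snd e)

/-- Vertices covered by an edge set. -/
def VS (G : Multigraph V E) (A : Finset E) : Set V := {v | ∃ e ∈ A, G.fst e = v ∨ G.snd e = v}

/-- The edge `e` joins `a` and `b`. -/
def J (G : Multigraph V E) (e : E) (a b : V) : Prop :=
  (G.fst e = a ∧ G.snd e = b) ∨ (G.fst e = b ∧ G.snd e = a)

/-- Contribution of an edge to the degree of a vertex. -/
def ct (G : Multigraph V E) (e : E) (v : V) : ℕ :=
  (if G.fst e = v then 1 else 0) + (if G.snd e = v then 1 else 0)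

/-- Degree of a vertex in an edge set. -/
def dg (G : Multigraph V E) (A : Finset E) (v : V) : ℕ := ∑ e ∈ A, ct G e v

/-- Positivity with the expected sign. -/
def Pos (q : ℝ) (G : Multigraph V E) (A : Finset E) : Prop :=
  0 < (-1 : ℝ) ^ (rk (vec G) A + 1) * Phi q (vec G) A

/-- Weak version of `Pos`. -/
def Wk (q : ℝ) (G : Multigraph V E) (A : Finset E) : Prop :=
  0 ≤ (-1 : ℝ) ^ (rk (vec G) A + 1) * Phi q (vec G) A

theorem J.symm {G : Multigraph V E} {e : E} {a b : V} (h : J G e a b) : J G e b a := by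
  unfold J at *; tauto

theorem J.vec {G : Multigraph V E} {e : E} {a b : V} (h : J G e a b) :
    vec G e = dlt a b ∨ vec G e = - dlt a b := by
  rcases h with ⟨h1, h2⟩ | ⟨h1, h2⟩
  · left; simp [FlowAux.vec, h1, h2]
  · right; simp [FlowAux.vec, h1, h2, dlt]

theorem dlt_left {a b : V} (h : a ≠ b) : dlt a b a = 1 := by
  simp [dlt, h]

theorem dlt_ne {a b : V} (h : a ≠ b) : dlt a b ≠ 0 := by
  intro h0
  have := congrFun h0 a
  rw [dlt_left h] at this
  exact one_ne_zero this

theorem dlt_other {a b v : V} (h : v ≠ a) (h' : v ≠ b) : dlt a b v = 0 := by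
  simp [dlt, h, h']

theorem sum_dlt (a b : V) : ∑ v, dlt a b v = 0 := by
  simp [dlt]

theorem span_supp {G : Multigraph V E} {A : Finset E} {y : V → ℚ} (hy : y ∈ sp (vec G) A)
    {v : V} (hv : v ∉ VS G A) : y v = 0 := by
  have : sp (vec G) A ≤ LinearMap.ker (LinearMap.proj (R := ℚ) (φ := fun _ : V => ℚ) v) := by
    unfold sp
    rw [Submodule.span_le]
    rintro _ ⟨g, hg, rfl⟩
    simp only [SetLike.mem_coe, LinearMap.mem_ker, LinearMap.proj_apply]
    apply dlt_other
    · intro h; exact hv ⟨g, by exact_mod_cast hg, Or.inl h.symm⟩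
    · intro h; exact hv ⟨g, by exact_mod_cast hg, Or.inr h.symm⟩
  exact this hy

theorem span_sum {G : Multigraph V E} {A : Finset E} {y : V → ℚ} (hy : y ∈ sp (vec G) A) :
    ∑ v, y v = 0 := by
  have : sp (vec G) A ≤ LinearMap.ker (∑ v : V, LinearMap.proj (R := ℚ) (φ := fun _ : V => ℚ) v) := by
    unfold sp
    rw [Submodule.span_le]
    rintro _ ⟨g, hg, rfl⟩
    simp only [SetLike.mem_coe, LinearMap.mem_ker, LinearMap.sum_apply, LinearMap.proj_apply]
    exact sum_dlt _ _
  have h := this hy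
  simpa only [LinearMap.mem_ker, LinearMap.sum_apply, LinearMap.proj_apply] using h

theorem inf_le_dlt {G : Multigraph V E} {A₁ A₂ : Finset E} {a b : V} (hab : a ≠ b)
    (h : VS G A₁ ∩ VS G A₂ ⊆ {a, b}) :
    sp (vec G) A₁ ⊓ sp (vec G) A₂ ≤ Submodule.span ℚ {dlt a b} := by
  rintro y ⟨h1, h2⟩
  have hz : ∀ v, v ≠ a → v ≠ b → y v = 0 := by
    intro v hva hvb
    by_cases hv : v ∈ VS G A₁
    · by_cases hv' : v ∈ VS G A₂
      · rcases h ⟨hv, hv'⟩ with h | h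
        · exact absurd h hva
        · exact absurd h hvb
      · exact span_supp h2 hv'
    · exact span_supp h1 hv
  have hs := span_sum h1
  have hs2 : ∑ v, y v = y a + y b := by
    rw [← Finset.sum_pair hab]
    symm
    apply Finset.sum_subset (Finset.subset_univ _)
    intro v _ hv
    simp only [Finset.mem_insert, Finset.mem_singleton, not_or] at hv
    exact hz v hv.1 hv.2
  rw [Submodule.mem_span_singleton]
  refine ⟨y a, ?_⟩
  funext v
  rw [Pi.smul_apply, smul_eq_mul]
  by_cases hva : v = a
  · subst hva; rw [dlt_left hab, mul_one]
  · by_cases hvb : v = b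
    · subst hvb
      have : dlt a v v = -1 := by simp [dlt, hva]
      rw [this]; linarith
    · rw [dlt_other hva hvb, hz v hva hvb, mul_zero]

theorem inf_bot {G : Multigraph V E} {A₁ A₂ : Finset E}
    (h : (VS G A₁ ∩ VS G A₂).Subsingleton) :
    sp (vec G) A₁ ⊓ sp (vec G) A₂ = ⊥ := by
  rw [eq_bot_iff]
  rintro y ⟨h1, h2⟩
  have hz : ∀ v, v ∉ VS G A₁ ∩ VS G A₂ → y v = 0 := by
    intro v hv
    by_cases hv1 : v ∈ VS G A₁
    · exact span_supp h2 fun h' => hv ⟨hv1, h'⟩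
    · exact span_supp h1 hv1
  rw [Submodule.mem_bot]
  funext v
  by_cases hv : v ∈ VS G A₁ ∩ VS G A₂
  · have hs := span_sum h1
    rw [Finset.sum_eq_single v] at hs
    · exact hs
    · intro w _ hw
      exact hz w fun hw' => hw (h hw' hv)
    · simp
  · exact hz v hv

theorem VS_insert (G : Multigraph V E) (e : E) (A : Finset E) :
    VS G (insert e A) = {G.fst e, G.snd e} ∪ VS G A := by
  ext v
  simp only [VS, Finset.mem_insert, Set.mem_setOf_eq, Set.mem_union, Set.mem_singleton_iff,
    Set.mem_insert_iff]
  constructor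
  · rintro ⟨g, rfl | hg, h⟩
    · left; rcases h with h | h
      · exact Or.inl h.symm
      · exact Or.inr h.symm
    · exact Or.inr ⟨g, hg, h⟩
  · rintro ((h | h) | ⟨g, hg, h⟩)
    · exact ⟨e, Or.inl rfl, Or.inl h.symm⟩
    · exact ⟨e, Or.inl rfl, Or.inr h.symm⟩
    · exact ⟨g, Or.inr hg, h⟩

theorem VS_union (G : Multigraph V E) (A B : Finset E) : VS G (A ∪ B) = VS G A ∪ VS G B := by
  ext v
  simp only [VS, Finset.mem_union, Set.mem_setOf_eq, Set.mem_union]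
  constructor
  · rintro ⟨g, hg | hg, h⟩
    · exact Or.inl ⟨g, hg, h⟩
    · exact Or.inr ⟨g, hg, h⟩
  · rintro (⟨g, hg, h⟩ | ⟨g, hg, h⟩)
    · exact ⟨g, Or.inl hg, h⟩
    · exact ⟨g, Or.inr hg, h⟩

theorem VS_mono (G : Multigraph V E) {A B : Finset E} (h : A ⊆ B) : VS G A ⊆ VS G B :=
  fun _ ⟨g, hg, hh⟩ => ⟨g, h hg, hh⟩

theorem VS_insert_J {G : Multigraph V E} {e : E} {a b : V} (h : J G e a b) (A : Finset E) :
    VS G (insert e A) = {a, b} ∪ VS G A := by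
  rw [VS_insert]
  rcases h with ⟨h1, h2⟩ | ⟨h1, h2⟩ <;> rw [h1, h2]
  rw [Set.pair_comm]

theorem vec_mem_of_ne {q : ℝ} (hq : q ≠ 0) {G : Multigraph V E} {A : Finset E} {e : E}
    (he : e ∉ A) (h : Phi q (vec G) (insert e A) ≠ 0) : vec G e ∈ sp (vec G) A := by
  by_contra h'
  exact h (Phi_bridge hq he h')

theorem Pos.ne {q : ℝ} {G : Multigraph V E} {A : Finset E} (h : Pos q G A) :
    Phi q (vec G) A ≠ 0 := by
  intro h0
  unfold Pos at h
  rw [h0, mul_zero] at h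
  exact lt_irrefl _ h

theorem Wk_of_zero {q : ℝ} {G : Multigraph V E} {A : Finset E} (h : Phi q (vec G) A = 0) :
    Wk q G A := by
  unfold Wk
  rw [h, mul_zero]

theorem Pos.wk {q : ℝ} {G : Multigraph V E} {A : Finset E} (h : Pos q G A) : Wk q G A := le_of_lt h

theorem X_vec {q : ℝ} {G : Multigraph V E} {A : Finset E} {e : E} {a b : V} (h : J G e a b) :
    X q (vec G) A (vec G e) = X q (vec G) A (dlt a b) := by
  rcases h.vec with h | h <;> rw [h]
  exact X_neg

theorem mem_vec {G : Multigraph V E} {A : Finset E} {e : E} {a b : V} (h : J G e a b) :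
    vec G e ∈ sp (vec G) A ↔ dlt a b ∈ sp (vec G) A := by
  rcases h.vec with h | h <;> rw [h]
  exact neg_mem_iff

theorem pos_three {q : ℝ} (h1 : 1 < q) (h2 : q < 2) {G : Multigraph V E} {A₁ A₂ : Finset E}
    {e : E} {a b : V} (hab : a ≠ b) (hJ : J G e a b) (he1 : e ∉ A₁) (he2 : e ∉ A₂)
    (hdis : Disjoint A₁ A₂) (hV : VS G A₁ ∩ VS G A₂ ⊆ {a, b})
    (p1 : Pos q G (insert e A₁)) (p2 : Pos q G (insert e A₂)) (w1 : Wk q G A₁) (w2 : Wk q G A₂) :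
    Pos q G (insert e (A₁ ∪ A₂)) := by
  have hq : q ≠ 0 := by linarith
  have m1 := vec_mem_of_ne hq he1 p1.ne
  have m2 := vec_mem_of_ne hq he2 p2.ne
  have r1 := rk_insert_mem m1
  have r2 := rk_insert_mem m2
  have hVV : VS G (insert e A₁) ∩ VS G A₂ ⊆ {a, b} := by
    rw [VS_insert_J hJ, Set.union_inter_distrib_right]
    exact Set.union_subset Set.inter_subset_left hV
  have hinf := inf_le_dlt hab hVV
  have hdis' : Disjoint (insert e A₁) A₂ := by
    rw [Finset.disjoint_insert_left]; exact ⟨he2, hdis⟩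
  have hU := Phi_union hq hdis' (dlt_ne hab) hinf
  have hr := (finrank_sup _ _ _ (dlt_ne hab) hinf).1
    ⟨(mem_vec hJ).1 (mem_sp _ (Finset.mem_insert_self e A₁)), (mem_vec hJ).1 m2⟩
  rw [← sp_union, Finset.insert_union] at hr
  rw [Finset.insert_union, ← X_vec hJ, ← X_vec hJ, X_insert_self hq he1] at hU
  have e1 := Phi_insert hq (u := vec G) he1
  have e2 := Phi_insert hq (u := vec G) he2
  change rk (vec G) _ + 1 = rk (vec G) _ + rk (vec G) _ at hr
  unfold Pos Wk at *
  rw [hr, r1]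
  rw [r1] at p1
  rw [r2] at p2
  rw [hU]
  generalize Phi q (vec G) (insert e A₁) = F1 at *
  generalize Phi q (vec G) (insert e A₂) = F2 at *
  generalize Phi q (vec G) A₁ = f1 at *
  generalize Phi q (vec G) A₂ = f2 at *
  generalize X q (vec G) A₁ (vec G e) = x1 at *
  generalize X q (vec G) A₂ (vec G e) = x2 at *
  generalize rk (vec G) A₁ = r at *
  generalize rk (vec G) A₂ = s at *
  rw [pow_succ] at p1 p2 w1 w2
  rw [pow_add]
  generalize (-1 : ℝ) ^ r = σ at *
  generalize (-1 : ℝ) ^ s = τ at *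
  have hx1 : x1 = -F1 / (q - 1) := by
    rw [e1]; field_simp [show q - 1 ≠ 0 by linarith]; ring
  have hx2 : x2 = -F2 / (q - 1) := by
    rw [e2]; field_simp [show q - 1 ≠ 0 by linarith]; ring
  have hq1 : 0 < q - 1 := by linarith
  have key : σ * τ * (F1 * f2 + (q - 1) * ((2 - q) * x1 - f1) * x2) =
      (σ * -1 * F1) * (τ * -1 * f2) + (σ * -1 * f1) * (τ * -1 * F2)
      + (2 - q) / (q - 1) * ((σ * -1 * F1) * (τ * -1 * F2)) := by
    rw [hx1, hx2]
    field_simp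
    ring
  rw [key]
  have h3 : 0 < (2 - q) / (q - 1) := div_pos (by linarith) hq1
  have := mul_pos h3 (mul_pos p1 p2)
  have := mul_nonneg p1.le w2
  have := mul_nonneg w1 p2.le
  linarith

theorem pos_cut {q : ℝ} (h1 : 1 < q) {G G₁ G₂ : Multigraph V E} {A₁ A₂ : Finset E}
    {e : E} {a b x : V} (hab : a ≠ b) (hax : a ≠ x) (hbx : b ≠ x)
    (hJ : J G e a b) (he1 : e ∉ A₁) (he2 : e ∉ A₂)
    (hdis : Disjoint A₁ A₂) (hV : VS G A₁ ∩ VS G A₂ ⊆ {x}) (ha : a ∉ VS G A₂) (hb : b ∉ VS G A₁)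
    (g1 : ∀ g ∈ A₁, vec G₁ g = vec G g) (g2 : ∀ g ∈ A₂, vec G₂ g = vec G g)
    (j1 : J G₁ e a x) (j2 : J G₂ e b x)
    (p1 : Pos q G₁ (insert e A₁)) (p2 : Pos q G₂ (insert e A₂)) :
    Pos q G (insert e (A₁ ∪ A₂)) := by
  have hq : q ≠ 0 := by linarith
  have m1 := vec_mem_of_ne hq he1 p1.ne
  have m2 := vec_mem_of_ne hq he2 p2.ne
  have r1 := rk_insert_mem m1
  have r2 := rk_insert_mem m2
  rw [mem_vec j1, sp_congr g1] at m1
  rw [mem_vec j2, sp_congr g2] at m2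
  rw [rk_congr g1] at r1
  rw [rk_congr g2] at r2
  have hVV : VS G A₁ ∩ VS G (insert e A₂) ⊆ {a, x} := by
    rw [VS_insert_J hJ]
    rintro v ⟨hv1, (rfl | rfl) | hv2⟩
    · exact Or.inl rfl
    · exact absurd hv1 hb
    · exact Or.inr (hV ⟨hv1, hv2⟩)
  have hinf := inf_le_dlt hax hVV
  have hdis' : Disjoint A₁ (insert e A₂) := by
    rw [Finset.disjoint_insert_right]; exact ⟨he1, hdis⟩
  have hU := Phi_union hq hdis' (dlt_ne hax) hinf
  have hbr : Phi q (vec G) (insert e A₂) = 0 := by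
    apply Phi_bridge hq he2
    rw [mem_vec hJ]
    intro h
    have := span_supp h ha
    rw [dlt_left hab] at this
    exact one_ne_zero this
  have hpz : ∀ g ∈ A₂, vec G g a = 0 := fun g hg => span_supp (mem_sp _ hg) ha
  have hser : X q (vec G) (insert e A₂) (dlt a x) = - X q (vec G) A₂ (dlt b x) := by
    have hsum : dlt a x = dlt a b + dlt b x := by unfold dlt; abel
    rcases hJ.vec with h | h
    · apply X_series hq he2 _ _ (LinearMap.proj a) hpz
      · simp [h, dlt_left hab]
      · simp [dlt_left hax]
      · rw [h, hsum]
    · rw [← X_neg, ← X_neg (d := dlt b x)]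
      apply X_series hq he2 _ _ (-LinearMap.proj a)
      · intro g hg
        simp [hpz g hg]
      · simp [h, dlt_left hab]
      · simp [dlt_left hax]
      · rw [h, hsum]; abel
  rw [hbr, hser, mul_zero, zero_add, Finset.union_insert] at hU
  have e1 := Phi_insert hq (u := vec G₁) he1
  have e2 := Phi_insert hq (u := vec G₂) he2
  rw [X_vec j1, X_congr g1] at e1
  rw [X_vec j2, X_congr g2] at e2
  -- ranks
  have hinf2 : sp (vec G) A₁ ⊓ sp (vec G) A₂ = ⊥ :=
    inf_bot (Set.subsingleton_singleton.anti hV)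
  have hr := Submodule.finrank_sup_add_finrank_inf_eq (sp (vec G) A₁) (sp (vec G) A₂)
  rw [hinf2, finrank_bot, add_zero, ← sp_union] at hr
  change rk (vec G) _ = rk (vec G) _ + rk (vec G) _ at hr
  have me : vec G e ∈ sp (vec G) (A₁ ∪ A₂) := by
    rw [mem_vec hJ]
    have : dlt a b = dlt a x - dlt b x := by unfold dlt; abel
    rw [this]
    exact sub_mem (sp_mono _ Finset.subset_union_left m1) (sp_mono _ Finset.subset_union_right m2)
  have re := rk_insert_mem me
  unfold Pos at *
  rw [re, hr, hU]
  rw [r1, e1] at p1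
  rw [r2, e2] at p2
  generalize X q (vec G) A₁ (dlt a x) = x1 at *
  generalize X q (vec G) A₂ (dlt b x) = x2 at *
  rw [pow_succ] at p1 p2 ⊢
  rw [pow_add]
  generalize (-1 : ℝ) ^ rk (vec G) A₁ = σ at *
  generalize (-1 : ℝ) ^ rk (vec G) A₂ = τ at *
  have hq1 : 0 < q - 1 := by linarith
  have key : σ * τ * -1 * ((q - 1) * x1 * -x2) =
      (q - 1)⁻¹ * ((σ * -1 * ((1 - q) * x1)) * (τ * -1 * ((1 - q) * x2))) := by
    field_simp
    ring
  rw [key]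
  exact mul_pos (inv_pos.2 hq1) (mul_pos p1 p2)

/-- Identify the vertex `b` with `a`. -/
def con (G : Multigraph V E) (a b : V) : Multigraph V E where
  fst := fun e => if G.fst e = b then a else G.fst e
  snd := fun e => if G.snd e = b then a else G.snd e

/-- The linear map identifying `b` with `a`. -/
def conMap (a b : V) : (V → ℚ) →ₗ[ℚ] (V → ℚ) :=
  LinearMap.id - (LinearMap.proj b).smulRight (dlt b a)

theorem conMap_single (a b v : V) :
    conMap a b (Pi.single v 1) = Pi.single (if v = b then a else v) 1 := by
  unfold conMap
  simp only [LinearMap.sub_apply, LinearMap.id_apply, LinearMap.smulRight_apply,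
    LinearMap.proj_apply]
  by_cases h : v = b
  · subst h; simp [dlt]
  · rw [if_neg h, Pi.single_eq_of_ne (Ne.symm h), zero_smul, sub_zero]

theorem vec_con (G : Multigraph V E) (a b : V) (e : E) :
    vec (con G a b) e = conMap a b (vec G e) := by
  unfold vec dlt
  rw [map_sub, conMap_single, conMap_single]
  rfl

theorem ker_conMap {a b : V} (hab : a ≠ b) :
    LinearMap.ker (conMap a b) = Submodule.span ℚ {dlt a b} := by
  apply le_antisymm
  · intro y hy
    rw [LinearMap.mem_ker] at hy
    unfold conMap at hy
    simp only [LinearMap.sub_apply, LinearMap.id_apply, LinearMap.smulRight_apply,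
      LinearMap.proj_apply] at hy
    rw [sub_eq_zero] at hy
    rw [Submodule.mem_span_singleton]
    refine ⟨-y b, ?_⟩
    rw [hy.trans (show y b • dlt b a = -y b • dlt a b by
      unfold dlt; rw [neg_smul, ← smul_neg, neg_sub])]
    congr 2
    simp [dlt, hab.symm]
  · rw [Submodule.span_singleton_le_iff_mem, LinearMap.mem_ker]
    unfold dlt
    rw [map_sub, conMap_single, conMap_single]
    simp [hab]

theorem pos_delcon {q : ℝ} (h1 : 1 < q) {G : Multigraph V E} {A : Finset E}
    {e : E} {a b : V} (hab : a ≠ b) (hJ : J G e a b) (he : e ∉ A)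
    (hm : vec G e ∈ sp (vec G) A) (p1 : Pos q G A) (p2 : Pos q (con G a b) A) :
    Pos q G (insert e A) := by
  have hq : q ≠ 0 := by linarith
  have hk : LinearMap.ker (conMap a b) = Submodule.span ℚ {vec G e} := by
    rw [ker_conMap hab]
    rcases hJ.vec with h | h <;> rw [h]
    rw [← Set.neg_singleton, Submodule.span_neg]
  have hne : vec G e ≠ 0 := by
    rcases hJ.vec with h | h <;> rw [h]
    · exact dlt_ne hab
    · exact neg_ne_zero.2 (dlt_ne hab)
  have hP := Phi_contract hq he _ hk hne
  have hr := rk_contract A _ hk hne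
  have hv : (fun g => conMap a b (vec G g)) = vec (con G a b) := by
    funext g; rw [vec_con]
  rw [hv] at hP hr
  have re := rk_insert_mem hm
  rw [re] at hr
  unfold Pos at *
  rw [re, hP]
  rw [← hr] at p1 ⊢
  rw [pow_succ] at p1 ⊢
  rw [mul_sub]
  linarith

theorem single_zero {q : ℝ} (hq : q ≠ 0) {G : Multigraph V E} {e : E} (he : G.fst e ≠ G.snd e) :
    Phi q (vec G) {e} = 0 := by
  rw [← insert_empty_eq e]
  apply Phi_bridge hq (Finset.notMem_empty e)
  unfold sp
  simp only [Finset.coe_empty, Set.image_empty, Submodule.span_empty, Submodule.mem_bot]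
  exact dlt_ne he

theorem pos_pair {q : ℝ} (h1 : 1 < q) {G : Multigraph V E} {e f : E} {a b : V} (hef : e ≠ f)
    (hab : a ≠ b) (hJ : J G e a b) (hJ' : J G f a b) : Pos q G {e, f} := by
  have hq : q ≠ 0 := by linarith
  have hme : vec G e ∈ sp (vec G) {f} := by
    rw [mem_vec hJ, ← mem_vec hJ']
    exact mem_sp _ (Finset.mem_singleton_self f)
  have hn : vec G f ∉ sp (vec G) ∅ := by
    unfold sp
    simp only [Finset.coe_empty, Set.image_empty, Submodule.span_empty, Submodule.mem_bot]
    rcases hJ'.vec with h | h <;> rw [h]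
    · exact dlt_ne hab
    · exact neg_ne_zero.2 (dlt_ne hab)
  have hef' : e ∉ ({f} : Finset E) := by simpa using hef
  have hne : vec G f ≠ 0 := by
    intro h; apply hn; rw [h]; exact zero_mem _
  have r0 : rk (vec G) (∅ : Finset E) = 0 := by
    unfold rk sp; simp
  have rf : rk (vec G) {f} = 1 := by
    rw [← insert_empty_eq f, rk_insert_not_mem hn, r0]
  have hPe : Phi q (vec G) (∅ : Finset E) = 1 := by
    unfold Phi wt; simp [r0]
  unfold Pos
  rw [rk_insert_mem hme, rf, Phi_insert hq hef', X_vec hJ, ← X_vec hJ', ← insert_empty_eq f,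
    X_insert_self hq (Finset.notMem_empty f), X_eq_zero hn, hPe]
  norm_num
  linarith

theorem ct_pos {G : Multigraph V E} {e : E} {v : V} (h : G.fst e = v ∨ G.snd e = v) :
    1 ≤ ct G e v := by
  unfold ct
  rcases h with h | h <;> simp [h]

theorem dg_zero {G : Multigraph V E} {A : Finset E} {v : V} : v ∉ VS G A ↔ dg G A v = 0 := by
  unfold dg VS ct
  simp only [Set.mem_setOf_eq, Finset.sum_eq_zero_iff]
  push Not
  refine forall₂_congr fun e _ => ?_
  by_cases h1 : G.fst e = v <;> by_cases h2 : G.snd e = v <;> simp [h1, h2]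

theorem dg_pos {G : Multigraph V E} {A : Finset E} {v : V} (h : v ∈ VS G A) : 1 ≤ dg G A v := by
  by_contra h'
  exact dg_zero.2 (by omega) h

theorem dg_insert {G : Multigraph V E} {A : Finset E} {e : E} (he : e ∉ A) (v : V) :
    dg G (insert e A) v = ct G e v + dg G A v := Finset.sum_insert he

theorem dg_union {G : Multigraph V E} {A B : Finset E} (h : Disjoint A B) (v : V) :
    dg G (A ∪ B) v = dg G A v + dg G B v := Finset.sum_union h

theorem dg_mono {G : Multigraph V E} {A B : Finset E} (h : A ⊆ B) (v : V) :
    dg G A v ≤ dg G B v := Finset.sum_le_sum_of_subset h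

theorem pendant {q : ℝ} (hq : q ≠ 0) {G : Multigraph V E} {A : Finset E} {v : V}
    (hl : ∀ e ∈ A, G.fst e ≠ G.snd e) (hv : v ∈ VS G A) (hd : dg G A v ≤ 1) :
    Phi q (vec G) A = 0 := by
  obtain ⟨e, he, hev⟩ := hv
  have hA : insert e (A.erase e) = A := Finset.insert_erase he
  have hd' := dg_insert (G := G) (Finset.notMem_erase e A) v
  rw [hA] at hd'
  have := ct_pos hev
  have h0 : dg G (A.erase e) v = 0 := by omega
  rw [← hA]
  apply Phi_bridge hq (Finset.notMem_erase e A)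
  intro h
  have h3 := span_supp h (dg_zero.2 h0)
  have h4 := hl e he
  unfold vec dlt at h3
  rcases hev with h | h
  · simp [← h, h4] at h3
  · simp [← h, h4] at h3

end Gr

end FlowAux

namespace FlowAux

section Comb

variable {V E : Type} [Fintype V] [DecidableEq V] [DecidableEq E]

/-- Non-separability, in terms of edge partitions. -/
def NS (G : Multigraph V E) (A : Finset E) : Prop :=
  ∀ A₁ A₂ : Finset E, Disjoint A₁ A₂ → A₁ ∪ A₂ = A → A₁.Nonempty → A₂.Nonempty →
    ¬ (VS G A₁ ∩ VS G A₂).Subsingleton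

/-- Connectivity of a vertex set, in terms of cuts. -/
def Cn (G : Multigraph V E) (A : Finset E) (S : Set V) : Prop :=
  ∀ T ⊆ S, T.Nonempty → T ≠ S → ∃ g ∈ A, ∃ u ∈ T, ∃ w ∈ S, w ∉ T ∧ J G g u w

/-- `S` is a connected set of vertices of degree at most three which dominates all vertices
of degree larger than three. -/
structure Good (G : Multigraph V E) (A : Finset E) (S : Set V) : Prop where
  ne : S.Nonempty
  sub : S ⊆ VS G A
  conn : Cn G A S
  deg : ∀ v ∈ S, dg G A v ≤ 3
  dom : ∀ v ∉ S, 4 ≤ dg G A v → ∃ g ∈ A, ∃ u ∈ S, J G g v u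

theorem J.mem {G : Multigraph V E} {A : Finset E} {g : E} {u w : V} (h : J G g u w) (hg : g ∈ A) :
    u ∈ VS G A := by
  rcases h with h | h
  · exact ⟨g, hg, Or.inl h.1⟩
  · exact ⟨g, hg, Or.inr h.2⟩

theorem J.mem' {G : Multigraph V E} {A : Finset E} {g : E} {u w : V} (h : J G g u w) (hg : g ∈ A) :
    w ∈ VS G A := h.symm.mem hg

theorem J.eq_or {G : Multigraph V E} {g : E} {a b u w : V} (h : J G g a b) (h' : J G g u w) :
    u = a ∨ u = b := by
  rcases h with ⟨rfl, rfl⟩ | ⟨rfl, rfl⟩ <;> rcases h' with ⟨rfl, rfl⟩ | ⟨rfl, rfl⟩ <;> simp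

theorem exists_J {G : Multigraph V E} {A : Finset E} {v : V} (h : v ∈ VS G A) :
    ∃ g ∈ A, ∃ w, J G g v w := by
  obtain ⟨g, hg, h | h⟩ := h
  · exact ⟨g, hg, G.snd g, Or.inl ⟨h, rfl⟩⟩
  · exact ⟨g, hg, G.fst g, Or.inr ⟨rfl, h⟩⟩

theorem J.ne {G : Multigraph V E} {g : E} {a b : V} (h : J G g a b) (hl : G.fst g ≠ G.snd g) :
    a ≠ b := by
  rcases h with ⟨rfl, rfl⟩ | ⟨rfl, rfl⟩
  · exact hl
  · exact hl.symm

theorem both_of_not_subsingleton {α : Type} {s : Set α} {a b : α} (h : ¬ s.Subsingleton)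
    (hs : s ⊆ {a, b}) : a ∈ s ∧ b ∈ s := by
  rw [Set.not_subsingleton_iff] at h
  obtain ⟨x, hx, y, hy, hxy⟩ := h
  rcases hs hx with h1 | h1 <;> rcases hs hy with h2 | h2
  · exact absurd (h1.trans h2.symm) hxy
  · exact ⟨h1 ▸ hx, h2 ▸ hy⟩
  · exact ⟨h2 ▸ hy, h1 ▸ hx⟩
  · exact absurd (h1.trans h2.symm) hxy

theorem NS.loopless {G : Multigraph V E} {A : Finset E} (h : NS G A) (hc : 2 ≤ A.card) :
    ∀ e ∈ A, G.fst e ≠ G.snd e := by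
  intro e he hl
  have hne : (A.erase e).Nonempty := by
    rw [← Finset.card_pos, Finset.card_erase_of_mem he]; omega
  apply h {e} (A.erase e) (by simp) (by rw [← Finset.insert_eq, Finset.insert_erase he])
    (Finset.singleton_nonempty e) hne
  apply Set.subsingleton_singleton (a := G.fst e) |>.anti
  rintro v ⟨⟨g, hg, hv⟩, -⟩
  rw [Finset.mem_singleton] at hg
  subst hg
  rcases hv with hv | hv
  · exact hv.symm
  · exact (hl.trans hv).symm

/-- If `e` is added to a separated edge set and the result is non-separable. -/
theorem split_edge {G : Multigraph V E} {A A₁ A₂ : Finset E} {e : E} {a b : V}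
    (hns : NS G (insert e A)) (he : e ∉ A) (hJ : J G e a b) (hd : Disjoint A₁ A₂)
    (hA : A₁ ∪ A₂ = A) (n1 : A₁.Nonempty) (n2 : A₂.Nonempty)
    (hs : (VS G A₁ ∩ VS G A₂).Subsingleton) :
    ∃ x, x ∈ VS G A₁ ∧ x ∈ VS G A₂ ∧ VS G A₁ ∩ VS G A₂ ⊆ {x} ∧
      ((a ∈ VS G A₁ ∧ a ∉ VS G A₂ ∧ b ∈ VS G A₂ ∧ b ∉ VS G A₁) ∨
       (b ∈ VS G A₁ ∧ b ∉ VS G A₂ ∧ a ∈ VS G A₂ ∧ a ∉ VS G A₁)) := by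
  subst hA
  rw [Finset.notMem_union] at he
  have k1 := hns A₁ (insert e A₂) (by rw [Finset.disjoint_insert_right]; exact ⟨he.1, hd⟩)
    (by rw [Finset.union_insert]) n1 (Finset.insert_nonempty _ _)
  have k2 := hns (insert e A₁) A₂ (by rw [Finset.disjoint_insert_left]; exact ⟨he.2, hd⟩)
    (by rw [Finset.insert_union]) (Finset.insert_nonempty _ _) n2
  rw [VS_insert_J hJ] at k1 k2
  have hv : ∃ v, (v = a ∨ v = b) ∧ v ∈ VS G A₁ ∧ v ∉ VS G A₂ := by
    by_contra hcon
    push Not at hcon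
    apply k1
    apply hs.anti
    rintro v ⟨hv1, hv2 | hv2⟩
    · exact ⟨hv1, hcon v hv2 hv1⟩
    · exact ⟨hv1, hv2⟩
  have hw : ∃ v, (v = a ∨ v = b) ∧ v ∈ VS G A₂ ∧ v ∉ VS G A₁ := by
    by_contra hcon
    push Not at hcon
    apply k2
    apply hs.anti
    rintro v ⟨hv2 | hv2, hv1⟩
    · exact ⟨hcon v hv2 hv1, hv1⟩
    · exact ⟨hv2, hv1⟩
  obtain ⟨v, hvab, hv1, hv2⟩ := hv
  obtain ⟨w, hwab, hw1, hw2⟩ := hw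
  have hor : ((a ∈ VS G A₁ ∧ a ∉ VS G A₂ ∧ b ∈ VS G A₂ ∧ b ∉ VS G A₁) ∨
       (b ∈ VS G A₁ ∧ b ∉ VS G A₂ ∧ a ∈ VS G A₂ ∧ a ∉ VS G A₁)) := by
    rcases hvab with rfl | rfl <;> rcases hwab with rfl | rfl
    · exact absurd hv1 hw2
    · exact Or.inl ⟨hv1, hv2, hw1, hw2⟩
    · exact Or.inr ⟨hv1, hv2, hw1, hw2⟩
    · exact absurd hv1 hw2
  have hx : (VS G A₁ ∩ VS G A₂).Nonempty := by
    by_contra hemp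
    rw [Set.not_nonempty_iff_eq_empty] at hemp
    apply k1
    have hno : ∀ z, z ∈ VS G A₁ → z ∈ VS G A₂ → False := by
      intro z hz1 hz2
      have : z ∈ VS G A₁ ∩ VS G A₂ := ⟨hz1, hz2⟩
      rw [hemp] at this
      exact this
    apply (Set.subsingleton_singleton (a := v)).anti
    rintro z ⟨hz1, hz2 | hz2⟩
    · rcases hor with ⟨-, -, -, q⟩ | ⟨-, -, -, q⟩ <;> rcases hz2 with rfl | rfl <;>
        rcases hvab with rfl | rfl <;> first | rfl | exact absurd hz1 q | exact absurd hv1 q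
    · exact (hno z hz1 hz2).elim
  obtain ⟨x, hx1, hx2⟩ := hx
  exact ⟨x, hx1, hx2, fun z hz => hs hz ⟨hx1, hx2⟩, hor⟩

theorem mem_sp_of_NS {G : Multigraph V E} {A : Finset E} {e : E} {a b : V}
    (hns : NS G (insert e A)) (he : e ∉ A) (hJ : J G e a b) (hA : A.Nonempty) :
    vec G e ∈ sp (vec G) A := by
  classical
  rw [mem_vec hJ]
  by_contra hb
  set K : Set V := {v | dlt a v ∈ sp (vec G) A} with hK
  have hedge : ∀ g ∈ A, ∀ u w, J G g u w → u ∈ K → w ∈ K := by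
    intro g hg u w hg' hu
    have h1 : dlt u w ∈ sp (vec G) A := (mem_vec hg').1 (mem_sp _ hg)
    have h2 := add_mem hu h1
    have : dlt a u + dlt u w = dlt a w := by unfold dlt; abel
    rwa [this] at h2
  set A₁ := A.filter (fun g => G.fst g ∈ K) with hA1
  have hsub : A₁ ⊆ A := Finset.filter_subset _ _
  have hV1 : VS G A₁ ⊆ K := by
    rintro v ⟨g, hg, hv⟩
    rw [hA1, Finset.mem_filter] at hg
    rcases hv with rfl | rfl
    · exact hg.2
    · exact hedge g hg.1 _ _ (Or.inl ⟨rfl, rfl⟩) hg.2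
  have hV2 : ∀ v ∈ VS G (A \ A₁), v ∉ K := by
    rintro v ⟨g, hg, hv⟩ hvK
    rw [Finset.mem_sdiff] at hg
    apply hg.2
    rw [hA1, Finset.mem_filter]
    refine ⟨hg.1, ?_⟩
    rcases hv with rfl | rfl
    · exact hvK
    · exact hedge g hg.1 _ _ (Or.inr ⟨rfl, rfl⟩) hvK
  have haK : a ∈ K := by
    change dlt a a ∈ sp (vec G) A
    have : dlt a a = 0 := by unfold dlt; abel
    rw [this]; exact zero_mem _
  by_cases hne : A₁.Nonempty
  · apply hns A₁ (insert e (A \ A₁)) ?_ ?_ hne (Finset.insert_nonempty _ _)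
    · apply (Set.subsingleton_singleton (a := a)).anti
      rw [VS_insert_J hJ]
      rintro v ⟨hv1, (rfl | rfl) | hv2⟩
      · rfl
      · exact absurd (hV1 hv1) hb
      · exact absurd (hV1 hv1) (hV2 v hv2)
    · rw [Finset.disjoint_insert_right]
      exact ⟨fun h => he (hsub h), Finset.disjoint_sdiff⟩
    · rw [Finset.union_insert, Finset.union_sdiff_of_subset hsub]
  · rw [Finset.not_nonempty_iff_eq_empty] at hne
    rw [hne, Finset.sdiff_empty] at hV2
    apply hns {e} A (by simpa using he) (by rw [← Finset.insert_eq]) (Finset.singleton_nonempty e) hA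
    apply (Set.subsingleton_singleton (a := b)).anti
    rw [← insert_empty_eq e, VS_insert_J hJ]
    rintro v ⟨(rfl | rfl) | ⟨g, hg, -⟩, hv2⟩
    · exact absurd haK (hV2 _ hv2)
    · rfl
    · simp at hg

theorem Good.subset {G : Multigraph V E} {A A' : Finset E} {S : Set V} (h : Good G A S)
    (hA : A' ⊆ A) (hS : ∀ g ∈ A, ∀ u ∈ S, ∀ w, J G g u w → g ∈ A') : Good G A' S where
  ne := h.ne
  sub := by
    intro v hv
    obtain ⟨g, hg, w, hJ⟩ := exists_J (h.sub hv)
    exact hJ.mem (hS g hg v hv w hJ)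
  conn := by
    intro T hT hne hTS
    obtain ⟨g, hg, u, hu, w, hw, hwT, hJ⟩ := h.conn T hT hne hTS
    exact ⟨g, hS g hg u (hT hu) w hJ, u, hu, w, hw, hwT, hJ⟩
  deg := fun v hv => (dg_mono hA v).trans (h.deg v hv)
  dom := by
    intro v hv h4
    obtain ⟨g, hg, u, hu, hJ⟩ := h.dom v hv (h4.trans (dg_mono hA v))
    exact ⟨g, hS g hg u hu v hJ.symm, u, hu, hJ⟩

theorem side {G : Multigraph V E} {A A₁ A₂ : Finset E} {S : Set V} (h : Good G A S)
    (hS : ∀ g ∈ A, ∀ u ∈ S, ∀ w, J G g u w → g ∈ A₁ ∨ g ∈ A₂)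
    (hx : ∀ v ∈ S, v ∈ VS G A₁ → v ∈ VS G A₂ → False) :
    (∀ v ∈ S, v ∉ VS G A₁) ∨ (∀ v ∈ S, v ∉ VS G A₂) := by
  by_contra hcon
  push Not at hcon
  obtain ⟨⟨v, hv, hv1⟩, ⟨w, hw, hw2⟩⟩ := hcon
  obtain ⟨g, hg, u, hu, z, hz, hzT, hJ⟩ := h.conn (S ∩ VS G A₁) Set.inter_subset_left ⟨v, hv, hv1⟩
    (fun heq => by
      have : w ∈ S ∩ VS G A₁ := by rw [heq]; exact hw
      exact hx w hw this.2 hw2)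
  rcases hS g hg u hu.1 z hJ with h1 | h1
  · exact hzT ⟨hz, hJ.mem' h1⟩
  · exact hx u hu.1 hu.2 (hJ.mem h1)

theorem ct_con {G : Multigraph V E} {a b v : V} (e : E) (ha : v ≠ a) (hb : v ≠ b) :
    ct (con G a b) e v = ct G e v := by
  unfold ct con
  congr 1
  · by_cases h : G.fst e = b
    · simp [h, ha.symm, hb.symm]
    · simp [h]
  · by_cases h : G.snd e = b
    · simp [h, ha.symm, hb.symm]
    · simp [h]

theorem VS_con {G : Multigraph V E} {a b v : V} {A : Finset E} (hv : v ∈ VS G A) :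
    (if v = b then a else v) ∈ VS (con G a b) A := by
  obtain ⟨g, hg, rfl | rfl⟩ := hv
  · exact ⟨g, hg, Or.inl rfl⟩
  · exact ⟨g, hg, Or.inr rfl⟩

theorem J_con {G : Multigraph V E} {a b u w : V} {g : E} (h : J G g u w) :
    J (con G a b) g (if u = b then a else u) (if w = b then a else w) := by
  rcases h with ⟨rfl, rfl⟩ | ⟨rfl, rfl⟩
  · exact Or.inl ⟨rfl, rfl⟩
  · exact Or.inr ⟨rfl, rfl⟩

theorem Good.con {G : Multigraph V E} {A : Finset E} {S : Set V} {a b : V} (h : Good G A S)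
    (ha : a ∉ S) (hb : b ∉ S) (hab : a ≠ b) (hdom : ∃ g ∈ A, ∃ u ∈ S, J G g a u) :
    Good (con G a b) A S where
  ne := h.ne
  sub := by
    intro v hv
    have := VS_con (a := a) (b := b) (h.sub hv)
    rwa [if_neg (fun h' : v = b => hb (h' ▸ hv))] at this
  conn := by
    intro T hT hne hTS
    obtain ⟨g, hg, u, hu, w, hw, hwT, hJ⟩ := h.conn T hT hne hTS
    have := J_con (a := a) (b := b) hJ
    rw [if_neg (fun h' : u = b => hb (h' ▸ hT hu)), if_neg (fun h' : w = b => hb (h' ▸ hw))] at this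
    exact ⟨g, hg, u, hu, w, hw, hwT, this⟩
  deg := by
    intro v hv
    have : dg (FlowAux.con G a b) A v = dg G A v :=
      Finset.sum_congr rfl fun e _ => ct_con e (fun h' => ha (h' ▸ hv)) (fun h' => hb (h' ▸ hv))
    rw [this]; exact h.deg v hv
  dom := by
    intro v hv h4
    by_cases hva : v = a
    · subst hva
      obtain ⟨g, hg, u, hu, hJ⟩ := hdom
      have := J_con (a := v) (b := b) hJ
      rw [if_neg hab, if_neg (fun h' : u = b => hb (h' ▸ hu))] at this
      exact ⟨g, hg, u, hu, this⟩
    · have hvb : v ≠ b := by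
        rintro rfl
        have : dg (FlowAux.con G a v) A v = 0 := by
          refine Finset.sum_eq_zero fun e _ => ?_
          unfold ct FlowAux.con
          by_cases h1 : G.fst e = v <;> by_cases h2 : G.snd e = v <;> simp [h1, h2, hab]
        omega
      have : dg (FlowAux.con G a b) A v = dg G A v :=
        Finset.sum_congr rfl fun e _ => ct_con e hva hvb
      rw [this] at h4
      obtain ⟨g, hg, u, hu, hJ⟩ := h.dom v hv h4
      have := J_con (a := a) (b := b) hJ
      rw [if_neg hvb, if_neg (fun h' : u = b => hb (h' ▸ hu))] at this
      exact ⟨g, hg, u, hu, this⟩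

theorem Cn_insert {G : Multigraph V E} {A : Finset E} {T : Set V} {u w : V} {g : E}
    (h : Cn G A T) (hg : g ∈ A) (hu : u ∈ T) (hJ : J G g u w) : Cn G A (insert w T) := by
  intro R hR hne hRT
  by_cases hw : w ∈ R
  · have hex : ∃ z ∈ T, z ∉ R := by
      by_contra hcon
      push Not at hcon
      exact hRT (hR.antisymm (Set.insert_subset hw hcon))
    obtain ⟨z, hz, hzR⟩ := hex
    by_cases huR : u ∈ R
    · obtain ⟨g', hg', u', hu', w', hw', hwR', hJ'⟩ := h (T ∩ R) Set.inter_subset_left ⟨u, hu, huR⟩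
        (fun heq => by
          have h3 : z ∈ T ∩ R := by rw [heq]; exact hz
          exact hzR h3.2)
      exact ⟨g', hg', u', hu'.2, w', Or.inr hw', fun h' => hwR' ⟨hw', h'⟩, hJ'⟩
    · exact ⟨g, hg, w, hw, u, Or.inr hu, huR, hJ.symm⟩
  · have hRT' : R ⊆ T := by
      intro z hz
      rcases hR hz with rfl | h'
      · exact absurd hz hw
      · exact h'
    by_cases heq : R = T
    · subst heq
      exact ⟨g, hg, u, hu, w, Or.inl rfl, hw, hJ⟩
    · obtain ⟨g', hg', u', hu', w', hw', hwR', hJ'⟩ := h R hRT' hne heq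
      exact ⟨g', hg', u', hu', w', Or.inr hw', hwR', hJ'⟩

theorem Cn_singleton {G : Multigraph V E} {A : Finset E} (v : V) : Cn G A {v} := by
  intro T hT hne hTS
  rcases Set.subset_singleton_iff_eq.1 hT with h | h
  · rw [h] at hne; exact absurd hne Set.not_nonempty_empty
  · exact absurd h hTS

theorem exists_noncut {G : Multigraph V E} {A : Finset E} {S : Set V} (h : Cn G A S) {v : V}
    (hv : v ∈ S) (hS : S ≠ {v}) : ∃ w ∈ S, Cn G A (S \ {w}) := by
  obtain ⟨T, hT⟩ := Set.Finite.exists_maximal (s := {T : Set V | T ⊆ S ∧ T ≠ S ∧ T.Nonempty ∧ Cn G A T})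
    (Set.toFinite _) ⟨{v}, by simpa using hv, hS.symm, Set.singleton_nonempty v, Cn_singleton v⟩
  obtain ⟨⟨hTS, hne, hn, hc⟩, hmax⟩ := hT
  obtain ⟨g, hg, u, hu, w, hw, hwT, hJ⟩ := h T hTS hn hne
  have hc' := Cn_insert hc hg hu hJ
  have heq : insert w T = S := by
    by_contra hne'
    exact hwT (hmax ⟨Set.insert_subset hw hTS, hne', Set.insert_nonempty _ _, hc'⟩
      (Set.subset_insert w T) (Set.mem_insert w T))
  refine ⟨w, hw, ?_⟩
  rw [← heq, Set.insert_diff_self_of_notMem hwT]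
  exact hc

theorem shrink {G : Multigraph V E} {A : Finset E} (hl : ∀ e ∈ A, G.fst e ≠ G.snd e) :
    ∀ (n : ℕ) (S : Set V), S.ncard = n → Good G A S →
    ∃ S', Good G A S' ∧ ((∃ u, S' = {u} ∧ ∀ g ∈ A, G.fst g = u ∨ G.snd g = u) ∨
      ∃ g ∈ A, G.fst g ∉ S' ∧ G.snd g ∉ S') := by
  intro n
  induction n using Nat.strong_induction_on with
  | _ n ih =>
  intro S hn hS
  by_cases hmiss : ∃ g ∈ A, G.fst g ∉ S ∧ G.snd g ∉ S
  · exact ⟨S, hS, Or.inr hmiss⟩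
  have htouch : ∀ g ∈ A, G.fst g ∉ S → G.snd g ∈ S := by
    intro g hg h1
    by_contra h2
    exact hmiss ⟨g, hg, h1, h2⟩
  obtain ⟨v, hv⟩ := hS.ne
  by_cases hsing : S = {v}
  · refine ⟨S, hS, Or.inl ⟨v, hsing, fun g hg => ?_⟩⟩
    by_cases h1 : G.fst g = v
    · exact Or.inl h1
    · right
      have := htouch g hg (by rw [hsing]; simpa using h1)
      rw [hsing] at this
      simpa using this
  obtain ⟨w, hw, hc⟩ := exists_noncut hS.conn hv hsing
  refine ih (S \ {w}).ncard ?_ (S \ {w}) rfl ?_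
  · rw [← hn]
    exact Set.ncard_diff_singleton_lt_of_mem hw
  refine ⟨?_, Set.diff_subset.trans hS.sub, hc, fun z hz => hS.deg z hz.1, ?_⟩
  · by_contra hemp
    rw [Set.not_nonempty_iff_eq_empty, Set.diff_eq_empty] at hemp
    apply hsing
    have hvw : v = w := hemp hv
    subst hvw
    exact hemp.antisymm (by simpa using hv)
  · intro z hz h4
    have hzw : z ≠ w := by
      rintro rfl
      have := hS.deg z hw
      omega
    have hzS : z ∉ S := fun h' => hz ⟨h', hzw⟩
    by_contra hcon
    push Not at hcon
    have hle : dg G A z ≤ dg G A w := by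
      refine Finset.sum_le_sum fun g hg => ?_
      have hne := hl g hg
      by_cases h1 : G.fst g = z
      · have h2 : G.snd g ∈ S := htouch g hg (h1 ▸ hzS)
        have h3 : G.snd g = w := by
          by_contra h3
          exact hcon g hg (G.snd g) ⟨h2, h3⟩ (Or.inl ⟨h1, rfl⟩)
        unfold ct
        simp [h1, h3, hzw, hzw.symm]
      · by_cases h2 : G.snd g = z
        · have h2' : G.fst g ∈ S := by
            by_contra h'
            exact hzS (h2 ▸ htouch g hg h')
          have h3 : G.fst g = w := by
            by_contra h3
            exact hcon g hg (G.fst g) ⟨h2', h3⟩ (Or.inr ⟨rfl, h2⟩)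
          unfold ct
          simp [h2, h3, hzw, hzw.symm]
        · unfold ct
          simp [h1, h2]
    have := hS.deg w hw
    omega

/-- A non-separable graph with at most two vertices of large degree. -/
theorem two_high {G : Multigraph V E} {A : Finset E} (hns : NS G A) {a b v : V} (hv : v ∈ VS G A)
    (hva : v ≠ a) (hvb : v ≠ b) (hdg : ∀ w, w ≠ a → w ≠ b → dg G A w ≤ 3) :
    ∃ S, Good G A S := by
  classical
  obtain ⟨S, hS⟩ := Set.Finite.exists_maximal
    (s := {T : Set V | T ⊆ VS G A ∧ a ∉ T ∧ b ∉ T ∧ v ∈ T ∧ Cn G A T})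
    (Set.toFinite _) ⟨{v}, by simpa using hv, by simpa using hva.symm, by simpa using hvb.symm,
      rfl, Cn_singleton v⟩
  obtain ⟨⟨hSV, haS, hbS, hvS, hc⟩, hmax⟩ := hS
  refine ⟨S, ⟨v, hvS⟩, hSV, hc, ?_, ?_⟩
  · intro w hw
    exact hdg w (fun h => haS (h ▸ hw)) (fun h => hbS (h ▸ hw))
  intro w hw h4
  have hwab : w = a ∨ w = b := by
    by_contra hcon
    push Not at hcon
    have := hdg w hcon.1 hcon.2
    omega
  set A₃ := A.filter (fun g => G.fst g ∈ S ∨ G.snd g ∈ S) with hA3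
  have hA3s : A₃ ⊆ A := Finset.filter_subset _ _
  have hends : ∀ z ∈ VS G A₃, z ∉ S → ∃ g ∈ A, ∃ u ∈ S, J G g z u := by
    rintro z ⟨g, hg, hz⟩ hzS
    rw [hA3, Finset.mem_filter] at hg
    rcases hz with rfl | rfl
    · rcases hg.2 with h | h
      · exact absurd h hzS
      · exact ⟨g, hg.1, _, h, Or.inl ⟨rfl, rfl⟩⟩
    · rcases hg.2 with h | h
      · exact ⟨g, hg.1, _, h, Or.inr ⟨rfl, rfl⟩⟩
      · exact absurd h hzS
  apply hends w _ hw
  have hwA : w ∈ VS G A := by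
    by_contra h'
    have := dg_zero.1 h'
    omega
  by_cases hall : A₃ = A
  · rwa [hall]
  have hn3 : A₃.Nonempty := by
    obtain ⟨g, hg, hgv⟩ := hSV hvS
    refine ⟨g, ?_⟩
    rw [hA3, Finset.mem_filter]
    refine ⟨hg, ?_⟩
    rcases hgv with h | h
    · left; rwa [h]
    · right; rwa [h]
  have hnd : (A \ A₃).Nonempty := by
    rw [Finset.sdiff_nonempty]
    exact fun h => hall (hA3s.antisymm h)
  have hnot := hns A₃ (A \ A₃) Finset.disjoint_sdiff (Finset.union_sdiff_of_subset hA3s) hn3 hnd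
  have hsub : VS G A₃ ∩ VS G (A \ A₃) ⊆ {a, b} := by
    rintro z ⟨hz1, hz2⟩
    have hzS : z ∉ S := by
      intro hzS
      obtain ⟨g, hg, hgz⟩ := hz2
      rw [Finset.mem_sdiff] at hg
      apply hg.2
      rw [hA3, Finset.mem_filter]
      refine ⟨hg.1, ?_⟩
      rcases hgz with h | h
      · left; rwa [h]
      · right; rwa [h]
    obtain ⟨g, hg, u, hu, hJ⟩ := hends z hz1 hzS
    by_contra hzab
    simp only [Set.mem_insert_iff, Set.mem_singleton_iff, not_or] at hzab
    apply hzS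
    refine hmax ⟨Set.insert_subset (hJ.mem hg) hSV, ?_, ?_, Or.inr hvS,
      Cn_insert hc hg hu hJ.symm⟩ (Set.subset_insert z S) (Set.mem_insert z S)
    · rintro (h | h)
      · exact hzab.1 h.symm
      · exact haS h
    · rintro (h | h)
      · exact hzab.2 h.symm
      · exact hbS h
  have := both_of_not_subsingleton hnot hsub
  rcases hwab with rfl | rfl
  · exact this.1.1
  · exact this.2.1

end Comb

end FlowAux

namespace FlowAux

section Ind

variable {V E : Type} [Fintype V] [DecidableEq V] [DecidableEq E]

theorem VS_congr {G H : Multigraph V E} {A : Finset E}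
    (h : ∀ g ∈ A, H.fst g = G.fst g ∧ H.snd g = G.snd g) : VS H A = VS G A := by
  ext v
  constructor
  · rintro ⟨g, hg, hv⟩
    rw [(h g hg).1, (h g hg).2] at hv
    exact ⟨g, hg, hv⟩
  · rintro ⟨g, hg, hv⟩
    rw [← (h g hg).1, ← (h g hg).2] at hv
    exact ⟨g, hg, hv⟩

theorem dg_congr {G H : Multigraph V E} {A : Finset E}
    (h : ∀ g ∈ A, H.fst g = G.fst g ∧ H.snd g = G.snd g) (v : V) : dg H A v = dg G A v := by
  refine Finset.sum_congr rfl fun g hg => ?_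
  unfold ct
  rw [(h g hg).1, (h g hg).2]

theorem J_congr {G H : Multigraph V E} {g : E} {u w : V}
    (h : H.fst g = G.fst g ∧ H.snd g = G.snd g) : J H g u w ↔ J G g u w := by
  unfold J
  rw [h.1, h.2]

theorem J.ct {G : Multigraph V E} {g : E} {a b : V} (h : J G g a b) (v : V) :
    ct G g v = (if a = v then 1 else 0) + (if b = v then 1 else 0) := by
  rcases h with ⟨rfl, rfl⟩ | ⟨rfl, rfl⟩
  · rfl
  · exact add_comm _ _

theorem NS_aux {G H : Multigraph V E} {A₁ A₂ C₁ C₂ : Finset E} {e : E}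
    (hns : NS G (insert e (A₁ ∪ A₂))) (he1 : e ∉ A₁) (he2 : e ∉ A₂) (hd : Disjoint A₁ A₂)
    (hH : ∀ g ∈ A₁, H.fst g = G.fst g ∧ H.snd g = G.snd g)
    (hk : ∀ v ∈ VS G A₁, (v ∈ VS G A₂ ∨ G.fst e = v ∨ G.snd e = v) → H.fst e = v ∨ H.snd e = v)
    (hC : Disjoint C₁ C₂) (hU : C₁ ∪ C₂ = insert e A₁) (n1 : C₁.Nonempty) (n2 : C₂.Nonempty)
    (he : e ∈ C₂) : ¬ (VS H C₁ ∩ VS H C₂).Subsingleton := by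
  have heC : e ∉ C₁ := fun h => Finset.disjoint_left.1 hC h he
  have hC1 : ∀ g ∈ C₁, g ∈ A₁ := by
    intro g hg
    have : g ∈ insert e A₁ := by rw [← hU]; exact Finset.mem_union_left _ hg
    rcases Finset.mem_insert.1 this with rfl | h
    · exact absurd hg heC
    · exact h
  intro hs
  apply hns C₁ (C₂ ∪ A₂) ?_ ?_ n1 (n2.mono Finset.subset_union_left)
  · apply hs.anti
    rintro v ⟨hv1, hv2⟩
    have hvA : v ∈ VS G A₁ := VS_mono G hC1 hv1
    refine ⟨by rw [VS_congr fun g hg => hH g (hC1 g hg)]; exact hv1, ?_⟩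
    rw [VS_union] at hv2
    rcases hv2 with ⟨g, hg, hv2⟩ | hv2
    · by_cases hge : g = e
      · subst hge
        exact ⟨g, he, hk v hvA (Or.inr hv2)⟩
      · have : g ∈ insert e A₁ := by rw [← hU]; exact Finset.mem_union_right _ hg
        have hgA : g ∈ A₁ := (Finset.mem_insert.1 this).resolve_left hge
        refine ⟨g, hg, ?_⟩
        rw [(hH g hgA).1, (hH g hgA).2]
        exact hv2
    · exact ⟨e, he, hk v hvA (Or.inl hv2)⟩
  · rw [Finset.disjoint_union_right]
    refine ⟨hC, ?_⟩
    rw [Finset.disjoint_left]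
    intro g hg
    exact Finset.disjoint_left.1 hd (hC1 g hg)
  · rw [← Finset.union_assoc, hU, Finset.insert_union]

theorem NS_gen {G H : Multigraph V E} {A₁ A₂ : Finset E} {e : E}
    (hns : NS G (insert e (A₁ ∪ A₂))) (he1 : e ∉ A₁) (he2 : e ∉ A₂) (hd : Disjoint A₁ A₂)
    (hH : ∀ g ∈ A₁, H.fst g = G.fst g ∧ H.snd g = G.snd g)
    (hk : ∀ v ∈ VS G A₁, (v ∈ VS G A₂ ∨ G.fst e = v ∨ G.snd e = v) → H.fst e = v ∨ H.snd e = v) :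
    NS H (insert e A₁) := by
  intro C₁ C₂ hC hU n1 n2
  have : e ∈ C₁ ∪ C₂ := by rw [hU]; exact Finset.mem_insert_self _ _
  rcases Finset.mem_union.1 this with he | he
  · rw [Set.inter_comm]
    exact NS_aux hns he1 he2 hd hH hk hC.symm (by rw [Finset.union_comm]; exact hU) n2 n1 he
  · exact NS_aux hns he1 he2 hd hH hk hC hU n1 n2 he

theorem J.end_iff {G : Multigraph V E} {g : E} {a b v : V} (h : J G g a b) :
    (G.fst g = v ∨ G.snd g = v) ↔ (v = a ∨ v = b) := by
  rcases h with ⟨rfl, rfl⟩ | ⟨rfl, rfl⟩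
  · constructor <;> rintro (h | h) <;> simp [h]
  · constructor <;> rintro (h | h) <;> simp [h]

theorem NS_side {G : Multigraph V E} {A₁ A₂ : Finset E} {e : E} {a b : V}
    (hns : NS G (insert e (A₁ ∪ A₂))) (he1 : e ∉ A₁) (he2 : e ∉ A₂) (hd : Disjoint A₁ A₂)
    (hJ : J G e a b) (hV : VS G A₁ ∩ VS G A₂ ⊆ {a, b}) : NS G (insert e A₁) := by
  refine NS_gen hns he1 he2 hd (fun _ _ => ⟨rfl, rfl⟩) ?_
  rintro v hv (h | h)
  · rw [hJ.end_iff]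
    exact hV ⟨hv, h⟩
  · exact h

theorem cutside {G H : Multigraph V E} {A₁ A₂ : Finset E} {S : Set V} {e : E} {a b x : V}
    (hns : NS G (insert e (A₁ ∪ A₂))) (he1 : e ∉ A₁) (he2 : e ∉ A₂) (hd : Disjoint A₁ A₂)
    (hg : Good G (insert e (A₁ ∪ A₂)) S) (haS : a ∉ S) (hbS : b ∉ S) (hJ : J G e a b)
    (hV : VS G A₁ ∩ VS G A₂ ⊆ {x}) (hx1 : x ∈ VS G A₁) (hx2 : x ∈ VS G A₂)
    (ha1 : a ∈ VS G A₁) (ha2 : a ∉ VS G A₂) (hb1 : b ∉ VS G A₁)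
    (hH : ∀ g ∈ A₁, H.fst g = G.fst g ∧ H.snd g = G.snd g) (hHJ : J H e a x) :
    NS H (insert e A₁) ∧ ∃ S', Good H (insert e A₁) S' := by
  have hax : a ≠ x := by rintro rfl; exact ha2 hx2
  constructor
  · refine NS_gen hns he1 he2 hd hH ?_
    intro v hv h
    rw [hHJ.end_iff]
    rw [hJ.end_iff] at h
    rcases h with h | rfl | rfl
    · exact Or.inr (hV ⟨hv, h⟩)
    · exact Or.inl rfl
    · exact absurd hv hb1
  have hVH : VS H (insert e A₁) = VS G A₁ := by
    rw [VS_insert_J hHJ, VS_congr hH]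
    apply Set.union_eq_self_of_subset_left
    rintro v (rfl | rfl)
    · exact ha1
    · exact hx1
  have hdeg : ∀ v, dg H (insert e A₁) v ≤ dg G (insert e (A₁ ∪ A₂)) v := by
    intro v
    rw [dg_insert he1, dg_insert (by rw [Finset.notMem_union]; exact ⟨he1, he2⟩), dg_union hd,
      dg_congr hH, hHJ.ct, hJ.ct]
    have h1 := dg_pos hx2
    by_cases h2 : x = v
    · subst h2; simp only [if_true]; omega
    · rw [if_neg h2]; omega
  have hedge : ∀ g ∈ insert e (A₁ ∪ A₂), ∀ u ∈ S, ∀ w, J G g w u → g ∈ A₁ ∨ g ∈ A₂ := by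
    intro g hg' u hu w hJ'
    rcases Finset.mem_insert.1 hg' with rfl | h
    · rcases hJ.eq_or hJ'.symm with rfl | rfl
      · exact absurd hu haS
      · exact absurd hu hbS
    · exact Finset.mem_union.1 h
  by_cases hne : (S ∩ VS G A₁).Nonempty
  · have claim : ∀ T ⊆ S ∩ VS G A₁, T.Nonempty → T ≠ S ∩ VS G A₁ → x ∉ T →
        ∃ g ∈ A₁, ∃ u ∈ T, ∃ w ∈ S ∩ VS G A₁, w ∉ T ∧ J G g u w := by
      intro T hT hTn hTS hxT
      obtain ⟨g, hg', u, hu, w, hw, hwT, hJ'⟩ := hg.conn T (hT.trans Set.inter_subset_left) hTn (by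
        intro h
        apply hTS
        apply hT.antisymm
        rw [h]
        exact Set.inter_subset_left)
      rcases hedge g hg' u (hT hu).1 w hJ'.symm with h | h
      · exact ⟨g, h, u, hu, w, ⟨hw, hJ'.mem' h⟩, hwT, hJ'⟩
      · have : u = x := hV ⟨(hT hu).2, hJ'.mem h⟩
        exact absurd (this ▸ hu) hxT
    refine ⟨S ∩ VS G A₁, hne, ?_, ?_, ?_, ?_⟩
    · rw [hVH]; exact Set.inter_subset_right
    · intro T hT hTn hTS
      by_cases hxT : x ∈ T
      · obtain ⟨g, hg', u, hu, w, hw, hwT, hJ'⟩ := claim ((S ∩ VS G A₁) \ T) (fun v hv => hv.1)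
          (by
            by_contra hemp
            apply hTS
            apply hT.antisymm
            intro v hv
            by_contra hvT
            exact hemp ⟨v, hv, hvT⟩)
          (by
            intro h
            obtain ⟨t, ht⟩ := hTn
            have : t ∈ (S ∩ VS G A₁) \ T := by rw [h]; exact hT ht
            exact this.2 ht)
          (fun h => h.2 hxT)
        have hwT' : w ∈ T := by
          by_contra h
          exact hwT ⟨hw, h⟩
        exact ⟨g, Finset.mem_insert_of_mem hg', w, hwT', u, hu.1, hu.2,
          ((J_congr (hH g hg')).2 hJ').symm⟩
      · obtain ⟨g, hg', u, hu, w, hw, hwT, hJ'⟩ := claim T hT hTn hTS hxT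
        exact ⟨g, Finset.mem_insert_of_mem hg', u, hu, w, hw, hwT, (J_congr (hH g hg')).2 hJ'⟩
    · intro v hv
      exact (hdeg v).trans (hg.deg v hv.1)
    · intro v hv h4
      have hvA : v ∈ VS G A₁ := by
        rw [← hVH]
        by_contra h
        have := dg_zero.1 h
        omega
      have hvS : v ∉ S := fun h => hv ⟨h, hvA⟩
      obtain ⟨g, hg', u, hu, hJ'⟩ := hg.dom v hvS (h4.trans (hdeg v))
      rcases hedge g hg' u hu v hJ' with h | h
      · exact ⟨g, Finset.mem_insert_of_mem h, u, ⟨hu, hJ'.mem' h⟩, (J_congr (hH g h)).2 hJ'⟩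
      · exfalso
        have hvx : v = x := hV ⟨hvA, hJ'.mem h⟩
        subst hvx
        rcases side hg (fun g hg' u hu w hJ' => hedge g hg' u hu w hJ'.symm)
          (fun z hz h1 h2 => hvS (by have h3 : z = v := hV ⟨h1, h2⟩; rwa [← h3])) with h' | h'
        · obtain ⟨z, hz, hz'⟩ := hne
          exact h' z hz hz'
        · exact h' u hu (hJ'.mem' h)
  · have hno : ∀ v ∈ S, v ∉ VS G A₁ := fun v hv h => hne ⟨v, hv, h⟩
    refine ⟨{a}, Set.singleton_nonempty a, ?_, Cn_singleton a, ?_, ?_⟩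
    · rw [hVH]; simpa using ha1
    · rintro v rfl
      by_contra hcon
      obtain ⟨g, hg', u, hu, hJ'⟩ := hg.dom v haS (by have := hdeg v; omega)
      rcases hedge g hg' u hu v hJ' with h | h
      · exact hno u hu (hJ'.mem' h)
      · exact ha2 (hJ'.mem h)
    · intro v hv h4
      have hvA : v ∈ VS G A₁ := by
        rw [← hVH]
        by_contra h
        have := dg_zero.1 h
        omega
      have hvS : v ∉ S := fun h => hno v h hvA
      obtain ⟨g, hg', u, hu, hJ'⟩ := hg.dom v hvS (h4.trans (hdeg v))
      rcases hedge g hg' u hu v hJ' with h | h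
      · exact absurd (hJ'.mem' h) (hno u hu)
      · have hvx : v = x := hV ⟨hvA, hJ'.mem h⟩
        subst hvx
        exact ⟨e, Finset.mem_insert_self _ _, a, rfl, hHJ.symm⟩

/-- The induction hypothesis. -/
def IH (V E : Type) [Fintype V] [DecidableEq V] [DecidableEq E] (q : ℝ) (n : ℕ) : Prop :=
  ∀ (G : Multigraph V E) (A : Finset E) (S : Set V), A.card < n → 2 ≤ A.card → NS G A →
    Good G A S → Pos q G A

theorem zero_at {q : ℝ} (hq : q ≠ 0) {G : Multigraph V E} {C₁ C₂ : Finset E} {x : V}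
    (hd : Disjoint C₁ C₂) (hs : VS G C₁ ∩ VS G C₂ ⊆ {x}) (h1 : x ∈ VS G C₁) (h2 : x ∈ VS G C₂)
    (hl : ∀ e ∈ C₁ ∪ C₂, G.fst e ≠ G.snd e) (hdg : dg G (C₁ ∪ C₂) x ≤ 3) :
    Phi q (vec G) (C₁ ∪ C₂) = 0 := by
  rw [Phi_union_of_disjoint hd (inf_bot (Set.subsingleton_singleton.anti hs))]
  rw [dg_union hd] at hdg
  by_cases h : dg G C₁ x ≤ 1
  · rw [pendant hq (fun e he => hl e (Finset.mem_union_left _ he)) h1 h, zero_mul]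
  · rw [pendant hq (fun e he => hl e (Finset.mem_union_right _ he)) h2 (by omega), mul_zero]

theorem card_three {A₁ A₂ : Finset E} {e : E} (he1 : e ∉ A₁) (he2 : e ∉ A₂) (hd : Disjoint A₁ A₂) :
    (insert e (A₁ ∪ A₂)).card = A₁.card + A₂.card + 1 := by
  rw [Finset.card_insert_of_notMem (by rw [Finset.notMem_union]; exact ⟨he1, he2⟩),
    Finset.card_union_of_disjoint hd]

theorem core {q : ℝ} (h1 : 1 < q) (h2 : q < 2) {G : Multigraph V E} {A₁ A₂ : Finset E} {S : Set V}
    {e : E} {a b : V} (ih : IH V E q (insert e (A₁ ∪ A₂)).card)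
    (hns : NS G (insert e (A₁ ∪ A₂))) (hg : Good G (insert e (A₁ ∪ A₂)) S)
    (haS : a ∉ S) (hbS : b ∉ S) (hab : a ≠ b) (hJ : J G e a b) (he1 : e ∉ A₁) (he2 : e ∉ A₂)
    (hd : Disjoint A₁ A₂) (hV : VS G A₁ ∩ VS G A₂ ⊆ {a, b}) (n1 : A₁.Nonempty) (n2 : A₂.Nonempty)
    (hS2 : ∀ v ∈ S, v ∉ VS G A₂) (p2 : Pos q G (insert e A₂)) (w2 : Wk q G A₂) :
    Pos q G (insert e (A₁ ∪ A₂)) := by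
  have hq : q ≠ 0 := by linarith
  have c1 := n1.card_pos
  have c2 := n2.card_pos
  have hcard := card_three he1 he2 hd
  have hl := hns.loopless (by omega)
  have hns1 := NS_side hns he1 he2 hd hJ hV
  have hab2 : a ∈ VS G A₂ ∧ b ∈ VS G A₂ := by
    have := both_of_not_subsingleton (a := a) (b := b) (hns (insert e A₁) A₂
      (by rw [Finset.disjoint_insert_left]; exact ⟨he2, hd⟩) (by rw [Finset.insert_union])
      (Finset.insert_nonempty _ _) n2) (by
        rw [VS_insert_J hJ]
        rintro v ⟨hv | hv, hv'⟩
        · exact hv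
        · exact hV ⟨hv, hv'⟩)
    exact ⟨this.1.2, this.2.2⟩
  have hne : ∀ g u w, u ∈ S → J G g u w → g ≠ e := by
    rintro g u w hu hJ' rfl
    rcases hJ.eq_or hJ' with rfl | rfl
    · exact haS hu
    · exact hbS hu
  have hloc : ∀ g ∈ insert e (A₁ ∪ A₂), ∀ u ∈ S, ∀ w, J G g u w → g ∈ A₁ := by
    intro g hg' u hu w hJ'
    rcases Finset.mem_insert.1 hg' with h | h
    · exact absurd h (hne g u w hu hJ')
    · rcases Finset.mem_union.1 h with h | h
      · exact h
      · exact absurd (hJ'.mem h) (hS2 u hu)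
  have hsub1 : A₁ ⊆ insert e (A₁ ∪ A₂) :=
    Finset.subset_union_left.trans (Finset.subset_insert _ _)
  have g1 : Good G (insert e A₁) S := hg.subset
    (Finset.insert_subset_insert _ Finset.subset_union_left)
    (fun g hg' u hu w hJ' => Finset.mem_insert_of_mem (hloc g hg' u hu w hJ'))
  have g0 : Good G A₁ S := hg.subset hsub1 hloc
  have ci : (insert e A₁).card = A₁.card + 1 := Finset.card_insert_of_notMem he1
  refine pos_three h1 h2 hab hJ he1 he2 hd hV ?_ p2 ?_ w2
  · exact ih G _ S (by omega) (by omega) hns1 g1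
  by_cases hA1 : NS G A₁
  · by_cases hc : 2 ≤ A₁.card
    · exact (ih G _ S (by omega) hc hA1 g0).wk
    · have : A₁.card = 1 := by omega
      obtain ⟨f, rfl⟩ := Finset.card_eq_one.1 this
      exact Wk_of_zero (single_zero hq (hl f (hsub1 (Finset.mem_singleton_self f))))
  apply Wk_of_zero
  have key2 : ∀ B c, B ⊆ A₁ → c ∈ VS G B → (c = a ∨ c = b) →
      (∀ g ∈ A₁, ∀ u, J G g c u → g ∈ B) → (∀ v ∈ S, v ∉ VS G B) → Phi q (vec G) B = 0 := by
    intro B c hB hc hcab hcB hSB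
    refine pendant hq (fun g hg' => hl g (hsub1 (hB hg'))) hc ?_
    have hcS : c ∉ S := by rcases hcab with rfl | rfl <;> assumption
    have hc2 : c ∈ VS G A₂ := by rcases hcab with rfl | rfl; exacts [hab2.1, hab2.2]
    have h3 : dg G (insert e (A₁ ∪ A₂)) c ≤ 3 := by
      by_contra h4
      obtain ⟨g, hg', u, hu, hJ'⟩ := hg.dom c hcS (by omega)
      have hgA := hloc g hg' u hu c hJ'.symm
      exact hSB u hu (hJ'.mem' (hcB g hgA u hJ'))
    rw [dg_insert (by rw [Finset.notMem_union]; exact ⟨he1, he2⟩), dg_union hd] at h3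
    have h5 : 1 ≤ ct G e c := ct_pos (hJ.end_iff.2 hcab)
    have h6 := dg_pos hc2
    have h7 := dg_mono (G := G) hB c
    omega
  have key : ∀ B₁ B₂ x, Disjoint B₁ B₂ → B₁ ∪ B₂ = A₁ → x ∈ VS G B₁ → x ∈ VS G B₂ →
      VS G B₁ ∩ VS G B₂ ⊆ {x} →
      (a ∈ VS G B₁ ∧ a ∉ VS G B₂ ∧ b ∈ VS G B₂ ∧ b ∉ VS G B₁) → Phi q (vec G) A₁ = 0 := by
    rintro B₁ B₂ x hBd hBu hx1 hx2 hBx ⟨ha1, ha2, hb2, hb1⟩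
    by_cases hxS : x ∈ S
    · rw [← hBu]
      refine zero_at hq hBd hBx hx1 hx2 (fun g hg' => hl g (hsub1 (hBu ▸ hg'))) ?_
      rw [hBu]
      exact g0.deg x hxS
    · have hP : Phi q (vec G) A₁ = Phi q (vec G) B₁ * Phi q (vec G) B₂ := by
        rw [← hBu]
        exact Phi_union_of_disjoint hBd (inf_bot (Set.subsingleton_singleton.anti hBx))
      have hcases : ∀ g ∈ A₁, g ∈ B₁ ∨ g ∈ B₂ := by
        intro g hg'
        rw [← hBu] at hg'
        exact Finset.mem_union.1 hg'
      rcases side g0 (A₁ := B₁) (A₂ := B₂) (fun g hg' _ _ _ _ => hcases g hg')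
        (fun v hv hv1 hv2 => hxS ((hBx ⟨hv1, hv2⟩ : v = x) ▸ hv)) with h | h
      · rw [hP, key2 B₁ a (by rw [← hBu]; exact Finset.subset_union_left) ha1 (Or.inl rfl) ?_ h,
          zero_mul]
        intro g hg' u hJ'
        rcases hcases g hg' with h' | h'
        · exact h'
        · exact absurd (hJ'.mem h') ha2
      · rw [hP, key2 B₂ b (by rw [← hBu]; exact Finset.subset_union_right) hb2 (Or.inr rfl) ?_ h,
          mul_zero]
        intro g hg' u hJ'
        rcases hcases g hg' with h' | h'
        · exact absurd (hJ'.mem h') hb1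
        · exact h'
  unfold NS at hA1
  push Not at hA1
  obtain ⟨B₁, B₂, hBd, hBu, m1, m2, hBs⟩ := hA1
  obtain ⟨x, hx1, hx2, hBx, hor | hor⟩ := split_edge hns1 he1 hJ hBd hBu m1 m2 hBs
  · exact key B₁ B₂ x hBd hBu hx1 hx2 hBx hor
  · refine key B₂ B₁ x hBd.symm (by rw [Finset.union_comm]; exact hBu) hx2 hx1
      (by rw [Set.inter_comm]; exact hBx) ?_
    tauto

end Ind

end FlowAux

namespace FlowAux

section Main

variable {V E : Type} [Fintype V] [DecidableEq V] [DecidableEq E]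

theorem J_of_ends {G : Multigraph V E} {g : E} {u w : V} (hu : G.fst g = u ∨ G.snd g = u)
    (hw : G.fst g = w ∨ G.snd g = w) (huw : u ≠ w) : J G g u w := by
  rcases hu with h | h <;> rcases hw with h' | h'
  · exact absurd (h.symm.trans h') huw
  · exact Or.inl ⟨h, h'⟩
  · exact Or.inr ⟨h', h⟩
  · exact absurd (h.symm.trans h') huw

theorem main_base {q : ℝ} (h1 : 1 < q) (h2 : q < 2) {G : Multigraph V E} {A : Finset E} {u : V}
    (hc : 2 ≤ A.card) (hns : NS G A) (hdg : dg G A u ≤ 3)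
    (hu : ∀ g ∈ A, G.fst g = u ∨ G.snd g = u) : Pos q G A := by
  classical
  have hq : q ≠ 0 := by linarith
  have hl := hns.loopless hc
  have hcard : A.card ≤ dg G A u := by
    rw [Finset.card_eq_sum_ones]
    exact Finset.sum_le_sum fun g hg => ct_pos (hu g hg)
  have hAne : A.Nonempty := by rw [← Finset.card_pos]; omega
  obtain ⟨g₀, hg₀⟩ := hAne
  obtain ⟨w, hw⟩ : ∃ w, J G g₀ u w := by
    rcases hu g₀ hg₀ with h | h
    · exact ⟨_, Or.inl ⟨h, rfl⟩⟩
    · exact ⟨_, Or.inr ⟨rfl, h⟩⟩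
  have huw : u ≠ w := hw.ne (hl g₀ hg₀)
  have hall : ∀ f ∈ A, J G f u w := by
    intro f hf
    by_contra hnot
    have hd := hns (A.filter fun g => J G g u w) (A.filter fun g => ¬ J G g u w)
      (Finset.disjoint_filter_filter_not _ _ _) (Finset.filter_union_filter_not_eq _ _)
      ⟨g₀, Finset.mem_filter.2 ⟨hg₀, hw⟩⟩ ⟨f, Finset.mem_filter.2 ⟨hf, hnot⟩⟩
    apply hd
    apply (Set.subsingleton_singleton (a := u)).anti
    rintro v ⟨⟨g, hg, hgv⟩, ⟨f', hf', hfv⟩⟩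
    rw [Finset.mem_filter] at hg hf'
    rcases hg.2.end_iff.1 hgv with rfl | rfl
    · rfl
    · exact absurd (J_of_ends (hu f' hf'.1) hfv huw) hf'.2
  rcases (show A.card = 2 ∨ A.card = 3 by omega) with h | h
  · obtain ⟨x, y, hxy, rfl⟩ := Finset.card_eq_two.1 h
    exact pos_pair h1 hxy huw (hall x (by simp)) (hall y (by simp))
  · obtain ⟨x, y, z, hxy, hxz, hyz, rfl⟩ := Finset.card_eq_three.1 h
    have hx := hall x (by simp)
    have hy := hall y (by simp)
    have hz := hall z (by simp)
    have := pos_three h1 h2 huw hx (A₁ := {y}) (A₂ := {z}) (by simpa using hxy)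
      (by simpa using hxz) (by simpa using hyz) (by
        rintro v ⟨⟨g, hg, hgv⟩, -⟩
        rw [Finset.mem_singleton] at hg
        subst hg
        exact hy.end_iff.1 hgv)
      (pos_pair h1 hxy huw hx hy) (pos_pair h1 hxz huw hx hz)
      (Wk_of_zero (single_zero hq (hl y (by simp)))) (Wk_of_zero (single_zero hq (hl z (by simp))))
    exact this

theorem main_par {q : ℝ} (h1 : 1 < q) (h2 : q < 2) {G : Multigraph V E} {A : Finset E} {S : Set V}
    {e f : E} {a b : V} (ih : IH V E q A.card) (hc : 2 ≤ A.card) (hns : NS G A) (hg : Good G A S)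
    (haS : a ∉ S) (hbS : b ∉ S) (he : e ∈ A) (hf : f ∈ A) (hef : e ≠ f) (hJ : J G e a b)
    (hJf : J G f a b) : Pos q G A := by
  have hq : q ≠ 0 := by linarith
  have hl := hns.loopless hc
  have hA : A = insert e ((A.erase e).erase f ∪ {f}) := by
    rw [Finset.union_comm, ← Finset.insert_eq, Finset.insert_erase, Finset.insert_erase he]
    exact Finset.mem_erase.2 ⟨hef.symm, hf⟩
  have hab : a ≠ b := hJ.ne (hl e he)
  have hnf : ∀ g u w, u ∈ S → J G g a b → ¬ J G g u w := by
    intro g u w hu hJ1 hJ2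
    rcases hJ1.eq_or hJ2 with rfl | rfl
    · exact haS hu
    · exact hbS hu
  have hn : ((A.erase e).erase f).Nonempty := by
    obtain ⟨u, hu⟩ := hg.ne
    obtain ⟨g, hg', w, hJ'⟩ := exists_J (hg.sub hu)
    refine ⟨g, ?_⟩
    rw [Finset.mem_erase, Finset.mem_erase]
    refine ⟨?_, ?_, hg'⟩
    · rintro rfl; exact hnf g u w hu hJf hJ'
    · rintro rfl; exact hnf g u w hu hJ hJ'
  have hVf : VS G {f} ⊆ {a, b} := by
    rintro v ⟨g, hg', hv⟩
    rw [Finset.mem_singleton] at hg'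
    subst hg'
    exact hJf.end_iff.1 hv
  rw [hA] at ih hns hg ⊢
  refine core h1 h2 ih hns hg haS hbS hab hJ (by simp) (by simpa using hef) (by simp)
    (fun v hv => hVf hv.2) hn (Finset.singleton_nonempty f) ?_ (pos_pair h1 hef hab hJ hJf)
    (Wk_of_zero (single_zero hq (hl f hf)))
  intro v hv hv'
  rcases hVf hv' with rfl | h
  · exact haS hv
  · exact hbS ((h : v = b) ▸ hv)

/-- Re-end an edge. -/
def reEnd (G : Multigraph V E) (e : E) (a x : V) : Multigraph V E where
  fst := Function.update G.fst e a
  snd := Function.update G.snd e x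

theorem reEnd_J (G : Multigraph V E) (e : E) (a x : V) : J (reEnd G e a x) e a x := by
  left
  simp [reEnd]

theorem reEnd_ends (G : Multigraph V E) (e : E) (a x : V) {A : Finset E} (he : e ∉ A) :
    ∀ g ∈ A, (reEnd G e a x).fst g = G.fst g ∧ (reEnd G e a x).snd g = G.snd g := by
  intro g hg
  have : g ≠ e := fun h => he (h ▸ hg)
  simp [reEnd, this]

theorem main_cut {q : ℝ} (h1 : 1 < q) {G : Multigraph V E} {A : Finset E} {S : Set V}
    {e : E} {a b : V} (ih : IH V E q (insert e A).card) (hns : NS G (insert e A))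
    (hg : Good G (insert e A) S) (haS : a ∉ S) (hbS : b ∉ S) (he : e ∉ A) (hab : a ≠ b)
    (hJ : J G e a b) (hA : ¬ NS G A) : Pos q G (insert e A) := by
  have key : ∀ B₁ B₂ x, Disjoint B₁ B₂ → B₁ ∪ B₂ = A → B₁.Nonempty → B₂.Nonempty →
      x ∈ VS G B₁ → x ∈ VS G B₂ → VS G B₁ ∩ VS G B₂ ⊆ {x} →
      (a ∈ VS G B₁ ∧ a ∉ VS G B₂ ∧ b ∈ VS G B₂ ∧ b ∉ VS G B₁) → Pos q G (insert e A) := by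
    rintro B₁ B₂ x hd rfl n1 n2 hx1 hx2 hV ⟨ha1, ha2, hb2, hb1⟩
    rw [Finset.notMem_union] at he
    obtain ⟨he1, he2⟩ := he
    have hax : a ≠ x := by rintro rfl; exact ha2 hx2
    have hbx : b ≠ x := by rintro rfl; exact hb1 hx1
    have c1 := n1.card_pos
    have c2 := n2.card_pos
    have hcard := card_three he1 he2 hd
    have ci1 : (insert e B₁).card = B₁.card + 1 := Finset.card_insert_of_notMem he1
    have ci2 : (insert e B₂).card = B₂.card + 1 := Finset.card_insert_of_notMem he2
    obtain ⟨ns1, S1, gd1⟩ := cutside hns he1 he2 hd hg haS hbS hJ hV hx1 hx2 ha1 ha2 hb1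
      (reEnd_ends G e a x he1) (reEnd_J G e a x)
    obtain ⟨ns2, S2, gd2⟩ := cutside (A₁ := B₂) (A₂ := B₁) (by rw [Finset.union_comm]; exact hns)
      he2 he1 hd.symm (by rw [Finset.union_comm]; exact hg) hbS haS hJ.symm
      (by rw [Set.inter_comm]; exact hV) hx2 hx1 hb2 hb1 ha2
      (reEnd_ends G e b x he2) (reEnd_J G e b x)
    refine pos_cut h1 hab hax hbx hJ he1 he2 hd hV ha2 hb1 (G₁ := reEnd G e a x)
      (G₂ := reEnd G e b x) ?_ ?_ (reEnd_J G e a x) (reEnd_J G e b x)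
      (ih _ _ S1 (by omega) (by omega) ns1 gd1) (ih _ _ S2 (by omega) (by omega) ns2 gd2)
    · intro g hg'
      unfold vec
      rw [(reEnd_ends G e a x he1 g hg').1, (reEnd_ends G e a x he1 g hg').2]
    · intro g hg'
      unfold vec
      rw [(reEnd_ends G e b x he2 g hg').1, (reEnd_ends G e b x he2 g hg').2]
  unfold NS at hA
  push Not at hA
  obtain ⟨B₁, B₂, hBd, hBu, m1, m2, hBs⟩ := hA
  obtain ⟨x, hx1, hx2, hBx, hor | hor⟩ := split_edge hns he hJ hBd hBu m1 m2 hBs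
  · exact key B₁ B₂ x hBd hBu m1 m2 hx1 hx2 hBx hor
  · refine key B₂ B₁ x hBd.symm (by rw [Finset.union_comm]; exact hBu) m2 m1 hx2 hx1
      (by rw [Set.inter_comm]; exact hBx) ?_
    tauto

theorem main_split {q : ℝ} (h1 : 1 < q) (h2 : q < 2) {G : Multigraph V E} {B₁ B₂ : Finset E}
    {S : Set V} {e : E} {a b : V} (ih : IH V E q (insert e (B₁ ∪ B₂)).card)
    (hns : NS G (insert e (B₁ ∪ B₂))) (hg : Good G (insert e (B₁ ∪ B₂)) S) (haS : a ∉ S)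
    (hbS : b ∉ S) (he1 : e ∉ B₁) (he2 : e ∉ B₂) (hd : Disjoint B₁ B₂) (hab : a ≠ b)
    (hJ : J G e a b) (hV : VS G B₁ ∩ VS G B₂ ⊆ {a, b}) (n1 : B₁.Nonempty) (n2 : B₂.Nonempty)
    (hnp : ∀ f ∈ B₂, ¬ J G f a b) (hS2 : ∀ v ∈ S, v ∉ VS G B₂) :
    Pos q G (insert e (B₁ ∪ B₂)) := by
  have hq : q ≠ 0 := by linarith
  have c1 := n1.card_pos
  have c2 := n2.card_pos
  have hcard := card_three he1 he2 hd
  have hl := hns.loopless (by omega)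
  have ci2 : (insert e B₂).card = B₂.card + 1 := Finset.card_insert_of_notMem he2
  have hsub : insert e B₂ ⊆ insert e (B₁ ∪ B₂) :=
    Finset.insert_subset_insert _ Finset.subset_union_right
  have hsub2 : B₂ ⊆ insert e (B₁ ∪ B₂) := (Finset.subset_insert _ _).trans hsub
  have hns2 : NS G (insert e B₂) := NS_side (A₁ := B₂) (A₂ := B₁)
    (by rw [Finset.union_comm]; exact hns) he2 he1 hd.symm hJ (by rw [Set.inter_comm]; exact hV)
  have hdg : ∀ w, w ≠ a → w ≠ b → dg G (insert e B₂) w ≤ 3 := by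
    intro w hwa hwb
    by_cases hw : w ∈ VS G B₂
    · refine (dg_mono hsub w).trans ?_
      by_contra h4
      obtain ⟨g, hg', u, hu, hJ'⟩ := hg.dom w (fun h => hS2 w h hw) (by omega)
      rcases Finset.mem_insert.1 hg' with rfl | h
      · rcases hJ.eq_or hJ' with h | h
        · exact hwa h
        · exact hwb h
      · rcases Finset.mem_union.1 h with h | h
        · rcases hV ⟨hJ'.mem h, hw⟩ with h | h
          · exact hwa h
          · exact hwb h
        · exact hS2 u hu (hJ'.mem' h)
    · rw [dg_insert he2, dg_zero.1 hw, hJ.ct, if_neg hwa.symm, if_neg hwb.symm]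
      omega
  have hdg2 : ∀ w, w ≠ a → w ≠ b → dg G B₂ w ≤ 3 := fun w hwa hwb =>
    (dg_mono (Finset.subset_insert e B₂) w).trans (hdg w hwa hwb)
  obtain ⟨v, hv, hva, hvb⟩ : ∃ v ∈ VS G B₂, v ≠ a ∧ v ≠ b := by
    by_contra hcon
    push Not at hcon
    obtain ⟨f, hf⟩ := n2
    have hfl := hl f (hsub2 hf)
    have k1 := hcon (G.fst f) ⟨f, hf, Or.inl rfl⟩
    have k2 := hcon (G.snd f) ⟨f, hf, Or.inr rfl⟩
    apply hnp f hf
    by_cases e1 : G.fst f = a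
    · exact Or.inl ⟨e1, k2 fun h => hfl (e1.trans h.symm)⟩
    · have e2 := k1 e1
      refine Or.inr ⟨e2, ?_⟩
      by_contra h
      exact hfl (e2.trans (k2 h).symm)
  have p2 : Pos q G (insert e B₂) := by
    obtain ⟨T, hT⟩ := two_high hns2 (VS_mono G (Finset.subset_insert e B₂) hv) hva hvb hdg
    exact ih G _ T (by omega) (by omega) hns2 hT
  have w2 : Wk q G B₂ := by
    by_cases hB : NS G B₂
    · by_cases hc : 2 ≤ B₂.card
      · obtain ⟨T, hT⟩ := two_high hB hv hva hvb hdg2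
        exact (ih G _ T (by omega) hc hB hT).wk
      · have : B₂.card = 1 := by omega
        obtain ⟨f, rfl⟩ := Finset.card_eq_one.1 this
        exact Wk_of_zero (single_zero hq (hl f (hsub2 (Finset.mem_singleton_self f))))
    · apply Wk_of_zero
      unfold NS at hB
      push Not at hB
      obtain ⟨C₁, C₂, hCd, hCu, m1, m2, hCs⟩ := hB
      obtain ⟨x, hx1, hx2, hCx, hor⟩ := split_edge hns2 he2 hJ hCd hCu m1 m2 hCs
      have hxa : x ≠ a := by rintro rfl; tauto
      have hxb : x ≠ b := by rintro rfl; tauto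
      rw [← hCu]
      refine zero_at hq hCd hCx hx1 hx2 (fun g hg' => hl g (hsub2 (hCu ▸ hg'))) ?_
      rw [hCu]
      exact hdg2 x hxa hxb
  exact core h1 h2 ih hns hg haS hbS hab hJ he1 he2 hd hV n1 n2 hS2 p2 w2

theorem main_con {q : ℝ} (h1 : 1 < q) (h2 : q < 2) {G : Multigraph V E} {A : Finset E} {S : Set V}
    {e : E} {a b : V} (ih : IH V E q (insert e A).card) (hc : 2 ≤ (insert e A).card)
    (hns : NS G (insert e A)) (hg : Good G (insert e A) S) (haS : a ∉ S) (hbS : b ∉ S)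
    (he : e ∉ A) (hab : a ≠ b) (hJ : J G e a b) (hA : NS G A) (hnp : ∀ f ∈ A, ¬ J G f a b)
    (hdom : ∃ g ∈ insert e A, ∃ u ∈ S, J G g a u) : Pos q G (insert e A) := by
  have ci : (insert e A).card = A.card + 1 := Finset.card_insert_of_notMem he
  have hne : ∀ g u w, u ∈ S → J G g u w → g ≠ e := by
    rintro g u w hu hJ' rfl
    rcases hJ.eq_or hJ' with rfl | rfl
    · exact haS hu
    · exact hbS hu
  have hloc : ∀ g ∈ insert e A, ∀ u ∈ S, ∀ w, J G g u w → g ∈ A := by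
    intro g hg' u hu w hJ'
    exact (Finset.mem_insert.1 hg').resolve_left (hne g u w hu hJ')
  have g0 : Good G A S := hg.subset (Finset.subset_insert _ _) hloc
  have hAn : A.Nonempty := by rw [← Finset.card_pos]; omega
  have hA2 : 2 ≤ A.card := by
    by_contra hcon
    obtain ⟨f, rfl⟩ := Finset.card_eq_one.1 (show A.card = 1 by omega)
    have := hns {e} {f} (by simpa using he) (by rw [← Finset.insert_eq])
      (Finset.singleton_nonempty e) (Finset.singleton_nonempty f)
    have hb := both_of_not_subsingleton (a := a) (b := b) this (by
      rintro v ⟨⟨g, hg', hv⟩, -⟩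
      rw [Finset.mem_singleton] at hg'
      subst hg'
      exact hJ.end_iff.1 hv)
    obtain ⟨⟨-, g, hg1, ha⟩, -, g', hg2, hb⟩ := hb
    rw [Finset.mem_singleton] at hg1 hg2
    subst hg1
    rw [hg2] at hb
    exact hnp g (Finset.mem_singleton_self g) (J_of_ends ha hb hab)
  by_cases hcon : NS (con G a b) A
  · obtain ⟨g, hg', u, hu, hJ'⟩ := hdom
    have gc := g0.con haS hbS hab ⟨g, hloc g hg' u hu a hJ'.symm, u, hu, hJ'⟩
    exact pos_delcon h1 hab hJ he (mem_sp_of_NS hns he hJ hAn)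
      (ih G A S (by omega) hA2 hA g0) (ih _ A S (by omega) hA2 hcon gc)
  unfold NS at hcon
  push Not at hcon
  obtain ⟨B₁, B₂, hd, rfl, n1, n2, hs⟩ := hcon
  have hmap : ∀ v ∈ VS G B₁ ∩ VS G B₂, (if v = b then a else v) ∈
      VS (con G a b) B₁ ∩ VS (con G a b) B₂ := fun v hv => ⟨VS_con hv.1, VS_con hv.2⟩
  have hV : VS G B₁ ∩ VS G B₂ ⊆ {a, b} := by
    have hnot := hA B₁ B₂ hd rfl n1 n2
    rw [Set.not_subsingleton_iff] at hnot
    obtain ⟨p, hp, r, hr, hpr⟩ := hnot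
    have haI : a ∈ VS (con G a b) B₁ ∩ VS (con G a b) B₂ := by
      have hpp := hmap p hp
      have hrr := hmap r hr
      by_cases e1 : p = b
      · rwa [if_pos e1] at hpp
      · by_cases e2 : r = b
        · rwa [if_pos e2] at hrr
        · rw [if_neg e1] at hpp
          rw [if_neg e2] at hrr
          exact absurd (hs hpp hrr) hpr
    intro v hv
    have h3 := hs (hmap v hv) haI
    by_cases e1 : v = b
    · exact Or.inr e1
    · rw [if_neg e1] at h3
      exact Or.inl h3
  rw [Finset.notMem_union] at he
  rcases side g0 (A₁ := B₁) (A₂ := B₂) (fun g hg' _ _ _ _ => Finset.mem_union.1 hg')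
    (fun v hv hv1 hv2 => by
      rcases hV ⟨hv1, hv2⟩ with h | h
      · exact haS ((h : v = a) ▸ hv)
      · exact hbS ((h : v = b) ▸ hv)) with h | h
  · rw [Finset.union_comm] at ih hns hg hnp ⊢
    exact main_split h1 h2 ih hns hg haS hbS he.2 he.1 hd.symm hab hJ
      (by rw [Set.inter_comm]; exact hV) n2 n1
      (fun f hf => hnp f (Finset.mem_union_right _ hf)) h
  · exact main_split h1 h2 ih hns hg haS hbS he.1 he.2 hd hab hJ hV n1 n2
      (fun f hf => hnp f (Finset.mem_union_right _ hf)) h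

theorem main {q : ℝ} (h1 : 1 < q) (h2 : q < 2) (n : ℕ) : IH V E q n := by
  classical
  induction n with
  | zero => intro G A S h; omega
  | succ n ihn =>
  intro G A S₀ hn hc hns hg₀
  have ih : IH V E q A.card := fun G' A' S' h => ihn G' A' S' (by omega)
  have hl := hns.loopless hc
  obtain ⟨S, hg, ⟨u, hSu, htouch⟩ | ⟨f, hf, hf1, hf2⟩⟩ := shrink hl _ S₀ rfl hg₀
  · exact main_base h1 h2 hc hns (hg.deg u (by rw [hSu]; rfl)) htouch
  set A₃ := A.filter (fun g => G.fst g ∈ S ∨ G.snd g ∈ S) with hA3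
  have hsub : A₃ ⊆ A := Finset.filter_subset _ _
  have hn3 : A₃.Nonempty := by
    obtain ⟨u, hu⟩ := hg.ne
    obtain ⟨g, hg', h⟩ := hg.sub hu
    refine ⟨g, Finset.mem_filter.2 ⟨hg', ?_⟩⟩
    rcases h with rfl | rfl
    · exact Or.inl hu
    · exact Or.inr hu
  have hnd : (A \ A₃).Nonempty := by
    refine ⟨f, Finset.mem_sdiff.2 ⟨hf, ?_⟩⟩
    rw [hA3, Finset.mem_filter]
    tauto
  have hnot := hns A₃ (A \ A₃) Finset.disjoint_sdiff (Finset.union_sdiff_of_subset hsub) hn3 hnd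
  rw [Set.not_subsingleton_iff] at hnot
  obtain ⟨a, ⟨⟨g, hg3, hga⟩, ha2⟩, -⟩ := hnot
  obtain ⟨e, heA, b, hJ⟩ := exists_J ha2
  have hends : G.fst e ∉ S ∧ G.snd e ∉ S := by
    rw [Finset.mem_sdiff, hA3, Finset.mem_filter] at heA
    tauto
  have he : e ∈ A := (Finset.mem_sdiff.1 heA).1
  have haS : a ∉ S := by
    rcases hJ with ⟨rfl, rfl⟩ | ⟨rfl, rfl⟩
    · exact hends.1
    · exact hends.2
  have hbS : b ∉ S := by
    rcases hJ with ⟨rfl, rfl⟩ | ⟨rfl, rfl⟩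
    · exact hends.2
    · exact hends.1
  have hab : a ≠ b := hJ.ne (hl e he)
  have hdom : ∃ g ∈ A, ∃ u ∈ S, J G g a u := by
    rw [hA3, Finset.mem_filter] at hg3
    refine ⟨g, hg3.1, ?_⟩
    rcases hga with rfl | rfl
    · exact ⟨_, hg3.2.resolve_left haS, Or.inl ⟨rfl, rfl⟩⟩
    · exact ⟨_, hg3.2.resolve_right haS, Or.inr ⟨rfl, rfl⟩⟩
  by_cases hpar : ∃ f ∈ A.erase e, J G f a b
  · obtain ⟨f', hf', hJf⟩ := hpar
    rw [Finset.mem_erase] at hf'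
    exact main_par h1 h2 ih hc hns hg haS hbS he hf'.2 hf'.1.symm hJ hJf
  push Not at hpar
  have hA : insert e (A.erase e) = A := Finset.insert_erase he
  rw [← hA] at ih hns hg hdom hc ⊢
  by_cases hA' : NS G (A.erase e)
  · exact main_con h1 h2 ih hc hns hg haS hbS (Finset.notMem_erase _ _) hab hJ hA' hpar hdom
  · exact main_cut h1 ih hns hg haS hbS (Finset.notMem_erase _ _) hab hJ hA'

end Main

end FlowAux

namespace FlowAux

section Top

variable {V E : Type} [Fintype V] [DecidableEq V] [DecidableEq E]

theorem blockGood {G : Multigraph V E} {A₁ A₂ : Finset E} {S : Set V} (hd : Disjoint A₁ A₂)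
    (hs : (VS G A₁ ∩ VS G A₂).Subsingleton) (hl : ∀ e ∈ A₁ ∪ A₂, G.fst e ≠ G.snd e)
    (n1 : A₁.Nonempty) (hg : Good G (A₁ ∪ A₂) S) : ∃ S', Good G A₁ S' := by
  have hdeg : ∀ v, dg G A₁ v ≤ dg G (A₁ ∪ A₂) v := fun v => dg_mono Finset.subset_union_left v
  by_cases hne : (S ∩ VS G A₁).Nonempty
  · have claim : ∀ T ⊆ S ∩ VS G A₁, T.Nonempty → T ≠ S ∩ VS G A₁ → (∀ x ∈ T, x ∉ VS G A₂) →
        ∃ g ∈ A₁, ∃ u ∈ T, ∃ w ∈ S ∩ VS G A₁, w ∉ T ∧ J G g u w := by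
      intro T hT hTn hTS hxT
      obtain ⟨g, hg', u, hu, w, hw, hwT, hJ'⟩ := hg.conn T (hT.trans Set.inter_subset_left) hTn (by
        intro h
        apply hTS
        apply hT.antisymm
        rw [h]
        exact Set.inter_subset_left)
      rcases Finset.mem_union.1 hg' with h | h
      · exact ⟨g, h, u, hu, w, ⟨hw, hJ'.mem' h⟩, hwT, hJ'⟩
      · exact absurd (hJ'.mem h) (hxT u hu)
    refine ⟨S ∩ VS G A₁, hne, Set.inter_subset_right, ?_, ?_, ?_⟩
    · intro T hT hTn hTS
      by_cases hxT : ∃ x ∈ T, x ∈ VS G A₂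
      · obtain ⟨x, hx, hx2⟩ := hxT
        obtain ⟨g, hg', u, hu, w, hw, hwT, hJ'⟩ := claim ((S ∩ VS G A₁) \ T) (fun v hv => hv.1)
          (by
            by_contra hemp
            apply hTS
            apply hT.antisymm
            intro v hv
            by_contra hvT
            exact hemp ⟨v, hv, hvT⟩)
          (by
            intro h
            obtain ⟨t, ht⟩ := hTn
            have : t ∈ (S ∩ VS G A₁) \ T := by rw [h]; exact hT ht
            exact this.2 ht)
          (by
            intro z hz hz2
            have : z = x := hs ⟨hz.1.2, hz2⟩ ⟨(hT hx).2, hx2⟩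
            exact hz.2 (this ▸ hx))
        have hwT' : w ∈ T := by
          by_contra h
          exact hwT ⟨hw, h⟩
        exact ⟨g, hg', w, hwT', u, hu.1, hu.2, hJ'.symm⟩
      · push Not at hxT
        exact claim T hT hTn hTS hxT
    · intro v hv
      exact (hdeg v).trans (hg.deg v hv.1)
    · intro v hv h4
      have hvA : v ∈ VS G A₁ := by
        by_contra h
        have := dg_zero.1 h
        omega
      have hvS : v ∉ S := fun h => hv ⟨h, hvA⟩
      obtain ⟨g, hg', u, hu, hJ'⟩ := hg.dom v hvS (h4.trans (hdeg v))
      rcases Finset.mem_union.1 hg' with h | h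
      · exact ⟨g, h, u, ⟨hu, hJ'.mem' h⟩, hJ'⟩
      · exfalso
        rcases side hg (fun g hg' u hu w hJ' => Finset.mem_union.1 hg')
          (fun z hz h1 h2 => hvS (by
            have h3 : z = v := hs ⟨h1, h2⟩ ⟨hvA, hJ'.mem h⟩
            rwa [← h3])) with h' | h'
        · obtain ⟨z, hz, hz'⟩ := hne
          exact h' z hz hz'
        · exact h' u hu (hJ'.mem' h)
  · have hno : ∀ v ∈ S, v ∉ VS G A₁ := fun v hv h => hne ⟨v, hv, h⟩
    obtain ⟨y, hy, hyx⟩ : ∃ y ∈ VS G A₁, ∀ x ∈ VS G A₁ ∩ VS G A₂, x ≠ y ∧ ∃ g ∈ A₁, J G g x y := by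
      by_cases hx : (VS G A₁ ∩ VS G A₂).Nonempty
      · obtain ⟨x, hx⟩ := hx
        obtain ⟨g, hg', y, hJ'⟩ := exists_J hx.1
        refine ⟨y, hJ'.mem' hg', fun z hz => ?_⟩
        rw [hs hz hx]
        exact ⟨hJ'.ne (hl g (Finset.mem_union_left _ hg')), g, hg', hJ'⟩
      · obtain ⟨g, hg'⟩ := n1
        exact ⟨G.fst g, ⟨g, hg', Or.inl rfl⟩, fun z hz => absurd ⟨z, hz⟩ hx⟩
    have hhigh : ∀ v, 4 ≤ dg G A₁ v → v ∈ VS G A₁ ∩ VS G A₂ := by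
      intro v h4
      have hvA : v ∈ VS G A₁ := by
        by_contra h
        have := dg_zero.1 h
        omega
      have hvS : v ∉ S := fun h => hno v h hvA
      obtain ⟨g, hg', u, hu, hJ'⟩ := hg.dom v hvS (h4.trans (hdeg v))
      rcases Finset.mem_union.1 hg' with h | h
      · exact absurd (hJ'.mem' h) (hno u hu)
      · exact ⟨hvA, hJ'.mem h⟩
    refine ⟨{y}, Set.singleton_nonempty y, by simpa using hy, Cn_singleton y, ?_, ?_⟩
    · rintro v rfl
      by_contra hcon
      exact (hyx v (hhigh v (by omega))).1 rfl
    · intro v hv h4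
      obtain ⟨-, g, hg', hJ'⟩ := hyx v (hhigh v h4)
      exact ⟨g, hg', y, rfl, hJ'⟩

theorem bridgeless_left {G : Multigraph V E} {A₁ A₂ : Finset E} (hd : Disjoint A₁ A₂)
    (hs : (VS G A₁ ∩ VS G A₂).Subsingleton)
    (hb : ∀ e ∈ A₁ ∪ A₂, vec G e ∈ sp (vec G) ((A₁ ∪ A₂).erase e)) :
    ∀ e ∈ A₁, vec G e ∈ sp (vec G) (A₁.erase e) := by
  intro e he
  have he2 : e ∉ A₂ := Finset.disjoint_left.1 hd he
  have h := hb e (Finset.mem_union_left _ he)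
  have heq : (A₁ ∪ A₂).erase e = A₁.erase e ∪ A₂ := by
    rw [Finset.erase_union_distrib, Finset.erase_eq_of_notMem he2]
  rw [heq, sp_union] at h
  obtain ⟨y1, hy1, y2, hy2, hsum⟩ := Submodule.mem_sup.1 h
  have hy2' : y2 ∈ sp (vec G) A₁ := by
    have h3 : y2 = vec G e - y1 := by rw [← hsum]; abel
    rw [h3]
    exact Submodule.sub_mem _ (mem_sp _ he) (sp_mono _ (Finset.erase_subset _ _) hy1)
  have h0 : y2 ∈ sp (vec G) A₁ ⊓ sp (vec G) A₂ := ⟨hy2', hy2⟩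
  rw [inf_bot hs, Submodule.mem_bot] at h0
  rw [← hsum, h0, add_zero]
  exact hy1

theorem top {q : ℝ} (h1 : 1 < q) (h2 : q < 2) (G : Multigraph V E) (n : ℕ) :
    ∀ (A : Finset E) (S : Set V), A.card < n → (∀ e ∈ A, G.fst e ≠ G.snd e) →
    (∀ e ∈ A, vec G e ∈ sp (vec G) (A.erase e)) → Good G A S → Phi q (vec G) A ≠ 0 := by
  induction n with
  | zero => intro A S h; omega
  | succ n ih =>
  intro A S hn hl hb hg
  by_cases hns : NS G A
  · have hc : 2 ≤ A.card := by
      by_contra hcon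
      obtain ⟨u, hu⟩ := hg.ne
      obtain ⟨g, hgA, -⟩ := hg.sub hu
      have hA : A.card = 1 := by
        have := Finset.card_pos.2 ⟨g, hgA⟩
        omega
      obtain ⟨f, rfl⟩ := Finset.card_eq_one.1 hA
      have h := hb f (Finset.mem_singleton_self f)
      have : ({f} : Finset E).erase f = ∅ := by simp
      rw [this] at h
      unfold sp at h
      simp only [Finset.coe_empty, Set.image_empty, Submodule.span_empty, Submodule.mem_bot] at h
      exact dlt_ne (hl f (Finset.mem_singleton_self f)) h
    exact (main h1 h2 _ G A S (Nat.lt_succ_self _) hc hns hg).ne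
  unfold NS at hns
  push Not at hns
  obtain ⟨A₁, A₂, hd, rfl, n1, n2, hs⟩ := hns
  rw [Phi_union_of_disjoint hd (inf_bot hs)]
  have c1 := n1.card_pos
  have c2 := n2.card_pos
  have hcard := Finset.card_union_of_disjoint hd
  have hs' : (VS G A₂ ∩ VS G A₁).Subsingleton := by rwa [Set.inter_comm]
  obtain ⟨S1, g1⟩ := blockGood hd hs hl n1 hg
  obtain ⟨S2, g2⟩ := blockGood hd.symm hs' (by rw [Finset.union_comm]; exact hl) n2
    (by rw [Finset.union_comm]; exact hg)
  exact mul_ne_zero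
    (ih A₁ S1 (by omega) (fun e he => hl e (Finset.mem_union_left _ he))
      (bridgeless_left hd hs hb) g1)
    (ih A₂ S2 (by omega) (fun e he => hl e (Finset.mem_union_right _ he))
      (bridgeless_left hd.symm hs' (by rw [Finset.union_comm]; exact hb)) g2)

theorem loops {q : ℝ} (h1 : 1 < q) {G : Multigraph V E} {L : Finset E}
    (h : Phi q (vec G) L ≠ 0) (B : Finset E) (hB : ∀ e ∈ B, vec G e = 0) :
    Phi q (vec G) (B ∪ L) ≠ 0 := by
  induction B using Finset.induction_on with
  | empty => rwa [Finset.empty_union]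
  | insert e B he ih =>
    have ih' := ih fun g hg => hB g (Finset.mem_insert_of_mem hg)
    rw [Finset.insert_union]
    by_cases heL : e ∈ B ∪ L
    · rwa [Finset.insert_eq_of_mem heL]
    · rw [Phi_insert (by linarith) heL, hB e (Finset.mem_insert_self _ _), X_zero]
      exact mul_ne_zero (by linarith) ih'

theorem reach_dlt {G : Multigraph V E} {F : Finset E} {a b : V}
    (h : Relation.EqvGen (G.edgeRelOn ↑F) a b) : dlt a b ∈ sp (vec G) F := by
  induction h with
  | rel x y h =>
    obtain ⟨e, he, hJ⟩ := h
    exact (mem_vec (show J G e x y from hJ)).1 (mem_sp _ (by exact_mod_cast he))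
  | refl x =>
    have : dlt x x = 0 := by unfold dlt; abel
    rw [this]; exact zero_mem _
  | symm x y _ ih =>
    have : dlt y x = - dlt x y := by unfold dlt; abel
    rw [this]; exact neg_mem ih
  | trans x y z _ _ ih1 ih2 =>
    have : dlt x z = dlt x y + dlt y z := by unfold dlt; abel
    rw [this]; exact add_mem ih1 ih2

theorem ncomp_add_rk (G : Multigraph V E) (F : Finset E) :
    G.ncomp ↑F + rk (vec G) F = Nat.card V := by
  classical
  set s := G.reachSetoid (↑F : Set E) with hs
  haveI : Fintype (Quotient s) := Fintype.ofFinite _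
  let L : (V → ℚ) →ₗ[ℚ] (Quotient s → ℚ) :=
    Fintype.linearCombination ℚ (fun v => (Pi.single (Quotient.mk s v) 1 : Quotient s → ℚ))
  let R : (Quotient s → ℚ) →ₗ[ℚ] (V → ℚ) :=
    Fintype.linearCombination ℚ (fun c => (Pi.single (Quotient.out c) 1 : V → ℚ))
  have hL : ∀ v, L (Pi.single v 1) = Pi.single (Quotient.mk s v) 1 := by
    intro v
    simp only [L]
    rw [Fintype.linearCombination_apply_single, one_smul]
  have hR : ∀ c, R (Pi.single c 1) = Pi.single (Quotient.out c) 1 := by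
    intro v
    simp only [R]
    rw [Fintype.linearCombination_apply_single, one_smul]
  have hLR : L ∘ₗ R = LinearMap.id := by
    apply (Pi.basisFun ℚ (Quotient s)).ext
    intro c
    rw [Pi.basisFun_apply, LinearMap.comp_apply, hR, hL, Quotient.out_eq, LinearMap.id_apply]
  have hsurj : Function.Surjective L := fun y => ⟨R y, by
    rw [← LinearMap.comp_apply, hLR, LinearMap.id_apply]⟩
  have hRL : (sp (vec G) F).mkQ ∘ₗ (R ∘ₗ L - LinearMap.id) = 0 := by
    apply (Pi.basisFun ℚ V).ext
    intro v
    rw [Pi.basisFun_apply, LinearMap.comp_apply, LinearMap.sub_apply, LinearMap.comp_apply, hL, hR,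
      LinearMap.id_apply, LinearMap.zero_apply, Submodule.mkQ_apply, Submodule.Quotient.mk_eq_zero]
    exact reach_dlt (Quotient.exact (Quotient.out_eq (Quotient.mk s v)))
  have hker : LinearMap.ker L = sp (vec G) F := by
    apply le_antisymm
    · intro f hf
      have := LinearMap.congr_fun hRL f
      rw [LinearMap.comp_apply, LinearMap.sub_apply, LinearMap.comp_apply, LinearMap.mem_ker.1 hf,
        map_zero, LinearMap.id_apply, zero_sub, LinearMap.zero_apply, Submodule.mkQ_apply,
        Submodule.Quotient.mk_eq_zero] at this
      simpa using this
    · unfold sp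
      rw [Submodule.span_le]
      rintro _ ⟨e, he, rfl⟩
      change L (Pi.single (G.fst e) 1 - Pi.single (G.snd e) 1) = 0
      rw [map_sub, hL, hL, sub_eq_zero]
      congr 1
      apply Quotient.sound
      exact Relation.EqvGen.rel _ _ ⟨e, he, Or.inl ⟨rfl, rfl⟩⟩
  have hrn := LinearMap.finrank_range_add_finrank_ker L
  rw [LinearMap.range_eq_top.2 hsurj, finrank_top, hker, Module.finrank_pi, Module.finrank_pi] at hrn
  unfold Multigraph.ncomp rk
  rw [Nat.card_eq_fintype_card, Nat.card_eq_fintype_card]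
  exact hrn

theorem rk_le_card (G : Multigraph V E) (F : Finset E) : rk (vec G) F ≤ F.card := by
  unfold rk sp
  rw [← Finset.coe_image]
  exact (finrank_span_finset_le_card _).trans Finset.card_image_le

theorem flow_eval [Fintype E] {q : ℝ} (hq : q ≠ 0) (G : Multigraph V E) :
    G.flowPoly.eval q = (-1) ^ Fintype.card E * Phi q (vec G) Finset.univ := by
  classical
  unfold Multigraph.flowPoly Phi
  rw [Polynomial.eval_finsetSum, Finset.mul_sum]
  refine Finset.sum_congr (by ext; simp) fun B _ => ?_
  have h1 := ncomp_add_rk G B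
  have h2 := rk_le_card G B
  have h3 : B.card ≤ Fintype.card E := Finset.card_le_univ B
  have h4 : B.card + G.ncomp ↑B - Nat.card V = B.card - rk (vec G) B := by omega
  rw [h4, Polynomial.eval_mul, Polynomial.eval_pow, Polynomial.eval_pow, Polynomial.eval_neg,
    Polynomial.eval_one, Polynomial.eval_X, Nat.card_eq_fintype_card]
  unfold wt
  rw [pow_sub₀ _ hq h2, neg_pow q, inv_pow]
  have h5 : (-1 : ℝ) ^ Fintype.card E = (-1) ^ (Fintype.card E - B.card) * (-1) ^ B.card := by
    rw [← pow_add]; congr 1; omega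
  have h6 : (-1 : ℝ) ^ B.card * (-1) ^ B.card = 1 := by
    rw [← mul_pow]; norm_num
  rw [h5]
  linear_combination (-1 : ℝ) * (-1) ^ (Fintype.card E - B.card) * (q ^ B.card * (q ^ rk (vec G) B)⁻¹) * h6

theorem bridgeless_vec [Fintype E] {G : Multigraph V E} (hbl : G.Bridgeless) (e : E) :
    vec G e ∈ sp (vec G) (Finset.univ.erase e) := by
  have h := hbl e
  unfold Multigraph.IsBridge Multigraph.numComponents at h
  have e1 : (Set.univ : Set E) = ↑(Finset.univ : Finset E) := by simp
  have e2 : {e' : E | e' ≠ e} = ↑(Finset.univ.erase e) := by ext; simp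
  rw [e1, e2] at h
  have h1 := ncomp_add_rk G Finset.univ
  have h2 := ncomp_add_rk G (Finset.univ.erase e)
  have h3 : sp (vec G) (Finset.univ.erase e) = sp (vec G) Finset.univ := by
    apply Submodule.eq_of_le_of_finrank_le (sp_mono _ (Finset.subset_univ _))
    change rk _ _ ≤ rk _ _
    omega
  rw [h3]
  exact mem_sp _ (Finset.mem_univ e)

theorem degree_dg [Fintype E] (G : Multigraph V E) (v : V) : G.degree v = dg G Finset.univ v := by
  unfold Multigraph.degree dg ct
  rw [Finset.sum_add_distrib, ← Finset.card_filter, ← Finset.card_filter]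
  congr 1
  · rw [Nat.card_eq_fintype_card, ← Set.toFinset_card]
    congr 1
    ext; simp
  · rw [Nat.card_eq_fintype_card, ← Set.toFinset_card]
    congr 1
    ext; simp

theorem final [Fintype E] (G : Multigraph V E) (hbl : G.Bridgeless)
    (W : Set V) (hW : W = {v | 3 < G.degree v})
    (hcomp : ∃ v₀, v₀ ∉ W ∧ ∀ w ∈ W, ∃ u,
      Relation.EqvGen (fun a b => a ∉ W ∧ b ∉ W ∧ G.edgeRelOn Set.univ a b) v₀ u ∧
        G.edgeRelOn Set.univ u w) (q : ℝ) (h1 : 1 < q) (h2 : q < 2) : G.flowPoly.eval q ≠ 0 := by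
  classical
  have hq : q ≠ 0 := by linarith
  rw [flow_eval hq]
  refine mul_ne_zero (pow_ne_zero _ (by norm_num)) ?_
  set L : Finset E := Finset.univ.filter (fun e => G.fst e ≠ G.snd e) with hLdef
  have hLm : ∀ e, e ∈ L ↔ G.fst e ≠ G.snd e := by intro e; simp [hLdef]
  have hzero : ∀ e, e ∉ L → vec G e = 0 := by
    intro e he
    rw [hLm, not_not] at he
    unfold vec dlt
    rw [he, sub_self]
  have huniv : (Finset.univ : Finset E) = Lᶜ ∪ L := by rw [Finset.union_comm, Finset.union_compl]
  rw [huniv]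
  refine loops h1 ?_ _ (fun e he => hzero e (Finset.mem_compl.1 he))
  have hb : ∀ e ∈ L, vec G e ∈ sp (vec G) (L.erase e) := by
    intro e he
    have hle : sp (vec G) (Finset.univ.erase e) ≤ sp (vec G) (L.erase e) := by
      conv_lhs => unfold sp
      rw [Submodule.span_le]
      rintro _ ⟨g, hg, rfl⟩
      by_cases hgL : g ∈ L
      · exact mem_sp _ (Finset.mem_erase.2 ⟨(Finset.mem_erase.1 (by exact_mod_cast hg)).1, hgL⟩)
      · rw [hzero g hgL]; exact zero_mem _
    exact hle (bridgeless_vec hbl e)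
  have hl : ∀ e ∈ L, G.fst e ≠ G.snd e := fun e he => (hLm e).1 he
  have hWd : ∀ v, v ∉ W → dg G L v ≤ 3 := by
    intro v hv
    rw [hW] at hv
    have h3 : ¬ 3 < G.degree v := hv
    rw [degree_dg] at h3
    have := dg_mono (G := G) (Finset.subset_univ L) v
    omega
  have hedge : ∀ u w, u ≠ w → G.edgeRelOn Set.univ u w → ∃ g ∈ L, J G g u w := by
    rintro u w huw ⟨e, -, hJ⟩
    refine ⟨e, ?_, hJ⟩
    rw [hLm]
    rcases hJ with ⟨rfl, rfl⟩ | ⟨rfl, rfl⟩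
    · exact huw
    · exact huw.symm
  obtain ⟨v₀, hv₀, hdom⟩ := hcomp
  set r : V → V → Prop := fun a b => a ∉ W ∧ b ∉ W ∧ G.edgeRelOn Set.univ a b with hr
  have hclosed : ∀ x y, Relation.EqvGen r x y → (x ∉ W ↔ y ∉ W) := by
    intro x y h
    induction h with
    | rel x y h => exact ⟨fun _ => h.2.1, fun _ => h.1⟩
    | refl x => exact Iff.rfl
    | symm x y _ ih => exact ih.symm
    | trans x y z _ _ i1 i2 => exact i1.trans i2
  by_cases hsub : ∀ z, Relation.EqvGen r v₀ z → z ∈ VS G L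
  · refine top h1 h2 G _ L {z | Relation.EqvGen r v₀ z} (Nat.lt_succ_self _) hl hb ?_
    refine ⟨⟨v₀, Relation.EqvGen.refl v₀⟩, fun z hz => hsub z hz, ?_, ?_, ?_⟩
    · intro T hT hTn hTS
      by_contra hcon
      push Not at hcon
      have hP : ∀ x y, Relation.EqvGen r x y → Relation.EqvGen r v₀ x → (x ∈ T ↔ y ∈ T) := by
        intro x y h
        induction h with
        | rel x y h =>
          intro hx
          have hy : Relation.EqvGen r v₀ y := hx.trans _ _ _ (Relation.EqvGen.rel _ _ h)
          by_cases hxy : x = y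
          · rw [hxy]
          obtain ⟨g, hg, hJ⟩ := hedge x y hxy h.2.2
          constructor
          · intro hxT
            by_contra hyT
            exact hcon g hg x hxT y hy hyT hJ
          · intro hyT
            by_contra hxT
            exact hcon g hg y hyT x hx hxT hJ.symm
        | refl x => exact fun _ => Iff.rfl
        | symm x y h ih => exact fun hy => (ih (hy.trans _ _ _ (h.symm _ _))).symm
        | trans x y z h _ i1 i2 => exact fun hx => (i1 hx).trans (i2 (hx.trans _ _ _ h))
      apply hTS
      apply hT.antisymm
      intro z hz
      obtain ⟨t, ht⟩ := hTn
      have h0t : Relation.EqvGen r v₀ t := hT ht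
      exact (hP t z ((h0t.symm _ _).trans _ _ _ hz) h0t).1 ht
    · intro z hz
      exact hWd z ((hclosed _ _ hz).1 hv₀)
    · intro w hw h4
      have hwW : w ∈ W := by
        by_contra h
        have := hWd w h
        omega
      obtain ⟨u, hu, hrel⟩ := hdom w hwW
      have huw : u ≠ w := by
        rintro rfl
        exact (hclosed _ _ hu).1 hv₀ hwW
      obtain ⟨g, hg, hJ⟩ := hedge u w huw hrel
      exact ⟨g, hg, u, hu, hJ.symm⟩
  · push Not at hsub
    obtain ⟨z, hz, hzL⟩ := hsub
    have hiso : ∀ x y, Relation.EqvGen r x y → (x = z ↔ y = z) := by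
      intro x y h
      induction h with
      | rel x y h =>
        by_cases hxy : x = y
        · rw [hxy]
        obtain ⟨g, hg, hJ⟩ := hedge x y hxy h.2.2
        constructor
        · rintro rfl; exact absurd (hJ.mem hg) hzL
        · rintro rfl; exact absurd (hJ.mem' hg) hzL
      | refl x => exact Iff.rfl
      | symm x y _ ih => exact ih.symm
      | trans x y z _ _ i1 i2 => exact i1.trans i2
    have hWe : ∀ w, w ∉ W := by
      intro w hw
      obtain ⟨u, hu, hrel⟩ := hdom w hw
      have huz : u = z := (hiso z u ((hz.symm _ _).trans _ _ _ hu)).1 rfl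
      have huw : u ≠ w := by
        rintro rfl
        exact (hclosed _ _ hu).1 hv₀ hw
      obtain ⟨g, hg, hJ⟩ := hedge u w huw hrel
      exact hzL (huz ▸ hJ.mem hg)
    by_cases hLe : L.Nonempty
    · obtain ⟨e, he⟩ := hLe
      refine top h1 h2 G _ L {G.fst e} (Nat.lt_succ_self _) hl hb ?_
      refine ⟨Set.singleton_nonempty _, ?_, Cn_singleton _, fun v _ => hWd v (hWe v), ?_⟩
      · rintro v rfl
        exact ⟨e, he, Or.inl rfl⟩
      · intro v _ h4
        have := hWd v (hWe v)
        omega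
    · rw [Finset.not_nonempty_iff_eq_empty] at hLe
      rw [hLe]
      unfold Phi wt rk sp
      simp

end Top

end FlowAux

open Multigraph in
/-- Dong. Let `G` be a bridgeless finite multigraph and let
`W = W(G)` be the set of vertices of degree larger than `3`. If `G − W` has a
connected component `G₀` such that every vertex of `W` has a neighbour in `V(G₀)`,
then `G` has no flow root in `(1,2)`. -/
theorem flowPoly_ne_zero_of_component_dominating {V E : Type} [Fintype V] [Fintype E]
    (G : Multigraph V E) (hbl : G.Bridgeless)
    (W : Set V) (hW : W = {v | 3 < G.degree v})
    (hcomp : ∃ v₀, v₀ ∉ W ∧ ∀ w ∈ W, ∃ u,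
      Relation.EqvGen (fun a b => a ∉ W ∧ b ∉ W ∧ G.edgeRelOn Set.univ a b) v₀ u ∧
        G.edgeRelOn Set.univ u w) :
    ∀ q : ℝ, 1 < q → q < 2 → G.flowPoly.eval q ≠ 0 := by
  classical
  intro q h1 h2
  exact FlowAux.final G hbl W hW hcomp q h1 h2
end
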